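/- arXiv:2108.10214 — 2 statements merged into one kernel-verified Lean document; each statement's English description precedes it below -/
import Mathlib

section
/- With the notation of the iterated integrals Ω at φ = π/4, one has Ω_{3,3,2,1} = (iπ³/6)·log 2 − (5/8)·iπ·ζ(3). -/
noncomputable section

/-- `p₁ = e^{iπ/4}` -/
def p₁ : ℂ := Complex.exp (Complex.I * ((Real.pi : ℂ) / 4))
/-- `p₂ = -e^{-iπ/4}` -/
def p₂ : ℂ := -Complex.exp (-(Complex.I * ((Real.pi : ℂ) / 4)))
/-- `p₃ = -p₁` -/
def p₃ : ℂ := -p₁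
/-- `p₄ = -p₂` -/
def p₄ : ℂ := -p₂

def F₁ (z : ℂ) : ℂ := 1 / (z - p₁) - 1 / (z - p₂) + 1 / (z - p₃) - 1 / (z - p₄)

def F₂ (z : ℂ) : ℂ := 1 / (z - p₁) - 1 / (z - p₂) - 1 / (z - p₃) + 1 / (z - p₄)

def F₃ (z : ℂ) : ℂ := 1 / (z - p₁) + 1 / (z - p₂) - 1 / (z - p₃) - 1 / (z - p₄)

/-- Iterated integral along `[0, z]`:
`Omega [F_{i₁}, …, F_{iₙ}] z = Ω_{i₁,…,iₙ}(z)`, defined recursively by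
`Ω_{i₁,…,i_k}(z) = ∫₀ᶻ Ω_{i₁,…,i_{k-1}}(t) · F_{i_k}(t) dt`, with `Ω_∅ ≡ 1`. -/
def Omega (fs : List (ℂ → ℂ)) : ℝ → ℂ :=
  fs.foldl (fun g f => fun z => ∫ t in (0:ℝ)..z, g t * f (t : ℂ)) (fun _ => 1)


set_option linter.unusedSimpArgs false

namespace S17
open MeasureTheory Filter Topology Set intervalIntegral

/-! general tools -/

lemma log_one_sub_exp {θ : ℝ} (h0 : 0 < θ) (h1 : θ < 2 * Real.pi) :
    Complex.log (1 - Complex.exp (θ * Complex.I)) =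
      ((Real.log (2 * Real.sin (θ / 2)) : ℝ) : ℂ) + (((θ - Real.pi) / 2 : ℝ) : ℂ) * Complex.I := by
  have hs : 0 < 2 * Real.sin (θ / 2) := by
    have := Real.sin_pos_of_pos_of_lt_pi (x := θ / 2) (by linarith) (by linarith)
    linarith
  have key : 1 - Complex.exp (θ * Complex.I) =
      Complex.exp (((Real.log (2 * Real.sin (θ / 2)) : ℝ) : ℂ) + (((θ - Real.pi) / 2 : ℝ) : ℂ) * Complex.I) := by
    rw [Complex.exp_add, ← Complex.ofReal_exp, Real.exp_log hs, Complex.exp_ofReal_mul_I,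
      Complex.exp_ofReal_mul_I]
    have e : (θ - Real.pi) / 2 = θ / 2 - Real.pi / 2 := by ring
    have hc : Real.cos θ = 1 - 2 * Real.sin (θ / 2) ^ 2 := by
      have := Real.cos_two_mul' (θ / 2)
      rw [show 2 * (θ / 2) = θ by ring] at this
      nlinarith [Real.sin_sq_add_cos_sq (θ / 2)]
    have hsn : Real.sin θ = 2 * Real.sin (θ / 2) * Real.cos (θ / 2) := by
      have := Real.sin_two_mul (θ / 2)
      rwa [show 2 * (θ / 2) = θ by ring] at this
    rw [e, Real.cos_sub_pi_div_two, Real.sin_sub_pi_div_two, hc, hsn]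
    push_cast
    ring_nf
  rw [key, Complex.log_exp]
  · simp; linarith
  · simp; linarith

def m (θ : ℝ) : ℝ := 22 * θ ^ (-(1 / 6) : ℝ)

lemma m_ge {θ : ℝ} (h0 : 0 < θ) (h2 : θ ≤ 2) : 11 ≤ m θ := by
  unfold m
  have h : (1 / 2 : ℝ) ≤ θ ^ (-(1 / 6) : ℝ) := by
    have h1 : (2 : ℝ) ^ (-(1 / 6) : ℝ) ≤ θ ^ (-(1 / 6) : ℝ) :=
      Real.rpow_le_rpow_of_nonpos h0 h2 (by norm_num)
    have h3 : (2 : ℝ) ^ (-1 : ℝ) ≤ (2 : ℝ) ^ (-(1 / 6) : ℝ) :=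
      Real.rpow_le_rpow_of_exponent_le (by norm_num) (by norm_num)
    rw [Real.rpow_neg_one] at h3
    linarith
  linarith

lemma log_bound {w : ℂ} {θ : ℝ} (h0 : 0 < θ) (h2 : θ ≤ 2) (hl : θ / 2 ≤ ‖1 - w‖)
    (hw : ‖w‖ ≤ 1) : ‖Complex.log (1 - w)‖ ≤ m θ := by
  have hu : ‖1 - w‖ ≤ 2 := by
    calc ‖1 - w‖ ≤ ‖(1 : ℂ)‖ + ‖w‖ := norm_sub_le _ _
      _ ≤ 2 := by rw [norm_one]; linarith
  have hpos : 0 < ‖1 - w‖ := by linarith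
  have h1 : ‖Complex.log (1 - w)‖ ≤ |Real.log ‖1 - w‖| + Real.pi := by
    have := Complex.norm_le_abs_re_add_abs_im (Complex.log (1 - w))
    rw [Complex.log_re, Complex.log_im] at this
    linarith [Complex.abs_arg_le_pi (1 - w)]
  have hlog2 : Real.log (2 / θ) ≤ 12 * θ ^ (-(1 / 6) : ℝ) := by
    have := Real.log_le_rpow_div (x := 2 / θ) (by positivity) (ε := 1 / 6) (by norm_num)
    rw [Real.div_rpow (by norm_num) h0.le] at this
    have h3 : (2 : ℝ) ^ (1 / 6 : ℝ) ≤ 2 := by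
      calc (2 : ℝ) ^ (1 / 6 : ℝ) ≤ (2 : ℝ) ^ (1 : ℝ) :=
        Real.rpow_le_rpow_of_exponent_le (by norm_num) (by norm_num)
        _ = 2 := by simp
    rw [Real.rpow_neg h0.le]
    have h4 : 0 < θ ^ (1 / 6 : ℝ) := by positivity
    calc _ ≤ _ := this
      _ ≤ 2 / θ ^ (1 / 6 : ℝ) / (1 / 6) := by gcongr
      _ = _ := by ring
  have hge := m_ge h0 h2
  have hlogpos : 0 ≤ Real.log (2 / θ) := Real.log_nonneg (by rw [le_div_iff₀ h0]; linarith)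
  have h5 : |Real.log ‖1 - w‖| ≤ 1 + Real.log (2 / θ) := by
    rw [abs_le]
    constructor
    · have := Real.log_le_log (by positivity) hl
      have e : Real.log (2 / θ) = - Real.log (θ / 2) := by rw [← Real.log_inv]; congr 1; field_simp
      linarith
    · have := Real.log_le_log hpos hu
      linarith [Real.log_two_lt_d9]
  have hpi := Real.pi_le_four
  unfold m at *
  linarith

lemma norm_one_sub_ge_sin (ρ φ : ℝ) :
    |Real.sin φ| ≤ ‖1 - ρ * Complex.exp (φ * Complex.I)‖ := by
  have e : ‖1 - ρ * Complex.exp (φ * Complex.I)‖ = ‖Complex.exp (((-φ : ℝ) : ℂ) * Complex.I) - ρ‖ := by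
    have : Complex.exp (((-φ : ℝ) : ℂ) * Complex.I) - ρ =
        Complex.exp (((-φ : ℝ) : ℂ) * Complex.I) * (1 - ρ * Complex.exp (φ * Complex.I)) := by
      rw [mul_sub, mul_one, mul_left_comm, ← Complex.exp_add]
      simp
    rw [this, norm_mul, Complex.norm_exp_ofReal_mul_I, one_mul]
  rw [e]
  refine le_trans (le_of_eq ?_) (Complex.abs_im_le_norm _)
  rw [Complex.exp_ofReal_mul_I]
  simp [← Complex.ofReal_sin, ← Complex.ofReal_cos, -Complex.ofReal_neg]

lemma norm_one_sub_ge_one {w : ℂ} (h : w.re ≤ 0) : 1 ≤ ‖1 - w‖ := by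
  refine le_trans ?_ (Complex.re_le_norm _)
  simp; exact h

lemma pi_half_le_two : Real.pi / 2 ≤ 2 := by linarith [Real.pi_le_four]

structure Tame (b : ℝ) (f : ℂ → ℂ) (k : ℕ) : Prop where
  diff : DifferentiableOn ℂ f (Metric.ball 0 1)
  cont : ∀ θ ∈ Ioc 0 b, ContinuousAt f (Complex.exp (θ * Complex.I))
  arc : ∃ K : ℝ, 0 ≤ K ∧ ∀ ρ ∈ Ico (0 : ℝ) 1, ∀ θ ∈ Ioc 0 b,
    ‖f (ρ * Complex.exp (θ * Complex.I))‖ ≤ K * m θ ^ k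
  rad : ∃ K : ℝ, 0 ≤ K ∧ ∀ ρ ∈ Ico (0 : ℝ) 1, ∀ θ ∈ Icc 0 b,
    ‖f (ρ * Complex.exp (θ * Complex.I))‖ ≤ K * m (1 - ρ) ^ k

variable {b : ℝ} {f g : ℂ → ℂ} {k l : ℕ}

lemma Tame.mono (hf : Tame b f k) (hb : b ≤ 2) (h : k ≤ l) : Tame b f l := by
  refine ⟨hf.diff, hf.cont, ?_, ?_⟩
  · obtain ⟨K, hK, h1⟩ := hf.arc
    refine ⟨K, hK, fun ρ hρ θ hθ => (h1 ρ hρ θ hθ).trans ?_⟩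
    have := m_ge hθ.1 (hθ.2.trans hb)
    gcongr
    linarith
  · obtain ⟨K, hK, h1⟩ := hf.rad
    refine ⟨K, hK, fun ρ hρ θ hθ => (h1 ρ hρ θ hθ).trans ?_⟩
    have := m_ge (θ := 1 - ρ) (by linarith [hρ.2]) (by linarith [hρ.1])
    gcongr
    linarith

lemma Tame.add (hf : Tame b f k) (hg : Tame b g k) : Tame b (fun w => f w + g w) k := by
  refine ⟨hf.diff.add hg.diff, fun θ hθ => (hf.cont θ hθ).add (hg.cont θ hθ), ?_, ?_⟩
  · obtain ⟨K, hK, h1⟩ := hf.arc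
    obtain ⟨K', hK', h1'⟩ := hg.arc
    refine ⟨K + K', by positivity, fun ρ hρ θ hθ => (norm_add_le _ _).trans ?_⟩
    linarith [h1 ρ hρ θ hθ, h1' ρ hρ θ hθ, add_mul K K' (m θ ^ k)]
  · obtain ⟨K, hK, h1⟩ := hf.rad
    obtain ⟨K', hK', h1'⟩ := hg.rad
    refine ⟨K + K', by positivity, fun ρ hρ θ hθ => (norm_add_le _ _).trans ?_⟩
    linarith [h1 ρ hρ θ hθ, h1' ρ hρ θ hθ, add_mul K K' (m (1 - ρ) ^ k)]

lemma Tame.mul (hf : Tame b f k) (hg : Tame b g l) : Tame b (fun w => f w * g w) (k + l) := by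
  refine ⟨hf.diff.mul hg.diff, fun θ hθ => (hf.cont θ hθ).mul (hg.cont θ hθ), ?_, ?_⟩
  · obtain ⟨K, hK, h1⟩ := hf.arc
    obtain ⟨K', hK', h1'⟩ := hg.arc
    refine ⟨K * K', by positivity, fun ρ hρ θ hθ => (norm_mul_le _ _).trans ?_⟩
    calc _ ≤ (K * m θ ^ k) * (K' * m θ ^ l) :=
          mul_le_mul (h1 ρ hρ θ hθ) (h1' ρ hρ θ hθ) (norm_nonneg _) ((norm_nonneg _).trans (h1 ρ hρ θ hθ))
      _ = _ := by rw [pow_add]; ring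
  · obtain ⟨K, hK, h1⟩ := hf.rad
    obtain ⟨K', hK', h1'⟩ := hg.rad
    refine ⟨K * K', by positivity, fun ρ hρ θ hθ => (norm_mul_le _ _).trans ?_⟩
    calc _ ≤ (K * m (1 - ρ) ^ k) * (K' * m (1 - ρ) ^ l) :=
          mul_le_mul (h1 ρ hρ θ hθ) (h1' ρ hρ θ hθ) (norm_nonneg _) ((norm_nonneg _).trans (h1 ρ hρ θ hθ))
      _ = _ := by rw [pow_add]; ring

lemma Tame.const (b : ℝ) (a : ℂ) : Tame b (fun _ => a) 0 :=
  ⟨differentiableOn_const _, fun _ _ => continuousAt_const,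
    ⟨‖a‖, norm_nonneg _, fun _ _ _ _ => by simp⟩, ⟨‖a‖, norm_nonneg _, fun _ _ _ _ => by simp⟩⟩

lemma Tame.id (b : ℝ) : Tame b (fun w => w) 0 := by
  refine ⟨differentiableOn_id, fun _ _ => continuousAt_id,
    ⟨1, by norm_num, fun ρ hρ θ _ => ?_⟩, ⟨1, by norm_num, fun ρ hρ θ _ => ?_⟩⟩ <;>
  · rw [norm_mul, Complex.norm_exp_ofReal_mul_I]
    simp [abs_of_nonneg hρ.1, hρ.2.le]

/-- generic criterion for `log (1 - a w)` with `‖a‖ = 1`. -/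
lemma Tame.log (hb : b ≤ 2) (a : ℂ) (ha : ‖a‖ = 1)
    (h1 : ∀ ρ ∈ Icc (0 : ℝ) 1, ∀ θ ∈ Ioc 0 b, θ / 2 ≤ ‖1 - a * (ρ * Complex.exp (θ * Complex.I))‖) :
    Tame b (fun w => Complex.log (1 - a * w)) 1 := by
  have hre : ∀ w : ℂ, ‖w‖ ≤ 1 → 1 - a * w ≠ 0 → 1 - a * w ∈ Complex.slitPlane := by
    intro w hw hne
    have h3 : ‖a * w‖ ≤ 1 := by rw [norm_mul, ha, one_mul]; exact hw
    by_cases h4 : (a * w).re < 1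
    · left; simp at h4 ⊢; linarith
    · exfalso
      apply hne
      have h5 := Complex.re_le_norm (a * w)
      have h6 : (a * w).re = 1 := by linarith
      have h7 : (a * w).im = 0 := by
        have := Complex.sq_norm (a * w)
        rw [Complex.normSq_apply, h6] at this
        nlinarith [norm_nonneg (a * w), sq_nonneg (a * w).im]
      have : a * w = 1 := Complex.ext (by simpa using h6) (by simpa using h7)
      rw [this]; simp
  have hrad : ∀ w : ℂ, 1 - ‖w‖ ≤ ‖1 - a * w‖ := by
    intro w
    have := norm_sub_norm_le (1 : ℂ) (a * w)
    rw [norm_mul, ha, norm_one, one_mul] at this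
    exact this
  refine ⟨?_, ?_, ⟨1, by norm_num, fun ρ hρ θ hθ => ?_⟩, ⟨1, by norm_num, fun ρ hρ θ hθ => ?_⟩⟩
  · intro w hw
    rw [mem_ball_zero_iff] at hw
    apply DifferentiableAt.differentiableWithinAt
    refine DifferentiableAt.clog (by fun_prop) (hre w hw.le ?_)
    intro h; have := hrad w; rw [h, norm_zero] at this; linarith
  · intro θ hθ
    have hn := h1 1 (by simp) θ hθ
    refine ContinuousAt.clog (by fun_prop) (hre _ (by rw [Complex.norm_exp_ofReal_mul_I]) ?_)
    intro h
    simp only [Complex.ofReal_one, one_mul] at hn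
    rw [h, norm_zero] at hn; linarith [hθ.1]
  · rw [pow_one, one_mul]
    refine log_bound hθ.1 (hθ.2.trans hb) (h1 ρ ⟨hρ.1, hρ.2.le⟩ θ hθ) ?_
    rw [norm_mul, ha, norm_mul, Complex.norm_exp_ofReal_mul_I]
    simp [abs_of_nonneg hρ.1, hρ.2.le]
  · rw [pow_one, one_mul]
    have hn : ‖ρ * Complex.exp (θ * Complex.I)‖ = ρ := by
      rw [norm_mul, Complex.norm_exp_ofReal_mul_I]
      simp [abs_of_nonneg hρ.1]
    refine log_bound (by linarith [hρ.2]) (by linarith [hρ.1]) ?_ ?_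
    · have := hrad (ρ * Complex.exp (θ * Complex.I))
      rw [hn] at this
      linarith [hρ.2]
    · rw [norm_mul, ha, one_mul, hn]; exact hρ.2.le

lemma tame_log_sub (hb : b ≤ Real.pi / 2) : Tame b (fun w => Complex.log (1 - w)) 1 := by
  have := Tame.log (b := b) (hb.trans pi_half_le_two) 1 (by simp) (fun ρ hρ θ hθ => by
    rw [one_mul]
    refine le_trans ?_ (norm_one_sub_ge_sin ρ θ)
    have h := Real.mul_le_sin hθ.1.le (hθ.2.trans hb)
    refine le_trans ?_ (le_abs_self _)
    refine le_trans ?_ h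
    have : 1 / 2 ≤ 2 / Real.pi := by
      rw [div_le_div_iff₀ (by norm_num) Real.pi_pos]; linarith [Real.pi_le_four]
    nlinarith [hθ.1])
  simpa using this

lemma tame_log_add (hb : b ≤ Real.pi / 2) : Tame b (fun w => Complex.log (1 + w)) 1 := by
  have := Tame.log (b := b) (hb.trans pi_half_le_two) (-1) (by simp) (fun ρ hρ θ hθ => by
    have h2 := pi_half_le_two
    refine le_trans (b := 1) (by linarith [hθ.2]) (norm_one_sub_ge_one ?_)
    rw [Complex.exp_ofReal_mul_I]
    have := Real.cos_nonneg_of_mem_Icc (x := θ) ⟨by linarith [hθ.1, Real.pi_pos], hθ.2.trans hb⟩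
    simp [← Complex.ofReal_sin, ← Complex.ofReal_cos]
    exact mul_nonneg hρ.1 this)
  simpa using this

lemma tame_log_sub_I (hb : b ≤ Real.pi / 4) : Tame b (fun w => Complex.log (1 + Complex.I * w)) 1 := by
  have hp := Real.pi_le_four
  have hp0 := Real.pi_pos
  have := Tame.log (b := b) (by linarith) (-Complex.I) (by simp) (fun ρ hρ θ hθ => by
    have h2 := pi_half_le_two
    have hs : 0 ≤ Real.sin θ := Real.sin_nonneg_of_nonneg_of_le_pi hθ.1.le (by linarith [hθ.2])
    refine le_trans (b := |Real.sin (θ - Real.pi / 2)|) ?_ ?_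
    · rw [Real.sin_sub_pi_div_two, abs_neg]
      refine le_trans ?_ (le_abs_self _)
      have := Real.cos_le_cos_of_nonneg_of_le_pi hθ.1.le (by linarith) (hθ.2.trans hb)
      rw [Real.cos_pi_div_four] at this
      have h3 : 1 ≤ Real.sqrt 2 := Real.one_le_sqrt.2 (by norm_num)
      linarith [hθ.2]
    · have h5 := norm_one_sub_ge_sin ρ (θ - Real.pi / 2)
      have e : -Complex.I * (ρ * Complex.exp (θ * Complex.I)) =
          ρ * Complex.exp (((θ - Real.pi / 2 : ℝ) : ℂ) * Complex.I) := by
        rw [show ((θ - Real.pi / 2 : ℝ) : ℂ) * Complex.I = θ * Complex.I + (-(Real.pi / 2 * Complex.I)) by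
          push_cast; ring, Complex.exp_add, Complex.exp_neg, Complex.exp_pi_div_two_mul_I, Complex.inv_I]
        ring
      rw [e]; exact h5)
  simpa using this

lemma tame_log_add_I (hb : b ≤ Real.pi / 2) : Tame b (fun w => Complex.log (1 - Complex.I * w)) 1 := by
  exact Tame.log (b := b) (hb.trans pi_half_le_two) (Complex.I) (by simp) (fun ρ hρ θ hθ => by
    have h2 := pi_half_le_two
    refine le_trans (b := 1) (by linarith [hθ.2]) (norm_one_sub_ge_one ?_)
    rw [Complex.exp_ofReal_mul_I]
    have hs : 0 ≤ Real.sin θ := Real.sin_nonneg_of_nonneg_of_le_pi hθ.1.le (by linarith [hθ.2, Real.pi_pos])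
    simp [← Complex.ofReal_sin, ← Complex.ofReal_cos]
    exact mul_nonneg hρ.1 hs)

end S17

namespace S17
open MeasureTheory Filter Topology Set intervalIntegral
variable {b : ℝ} {f g : ℂ → ℂ} {k l : ℕ}

lemma m_pow (θ : ℝ) (h : 0 ≤ θ) : m θ ^ 3 = 10648 * θ ^ (-(1 / 2) : ℝ) := by
  unfold m
  rw [mul_pow, ← Real.rpow_natCast (θ ^ _), ← Real.rpow_mul h]
  norm_num

lemma intable_rpow (b : ℝ) : IntervalIntegrable (fun θ : ℝ => θ ^ (-(1 / 2) : ℝ)) volume 0 b :=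
  intervalIntegrable_rpow' (by norm_num)

lemma intable_rpow' : IntervalIntegrable (fun x : ℝ => (1 - x) ^ (-(1 / 2) : ℝ)) volume 0 1 := by
  have := (intable_rpow 1).comp_sub_left 1
  simpa using this.symm

lemma norm_pt {ρ θ : ℝ} (h : 0 ≤ ρ) : ‖(ρ : ℂ) * Complex.exp (θ * Complex.I)‖ = ρ := by
  rw [norm_mul, Complex.norm_exp_ofReal_mul_I]
  simp [abs_of_nonneg h]

lemma Tame.dct (hf : Tame b f 3) (hb : 0 ≤ b) (hb2 : b ≤ 2) (g : ℝ → ℂ) (hg : Continuous g) :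
    IntervalIntegrable (fun θ : ℝ => g θ * f (Complex.exp (θ * Complex.I))) volume 0 b ∧
    Tendsto (fun ρ : ℝ => ∫ θ in (0 : ℝ)..b, g θ * f (ρ * Complex.exp (θ * Complex.I))) (𝓝[<] 1)
      (𝓝 (∫ θ in (0 : ℝ)..b, g θ * f (Complex.exp (θ * Complex.I)))) := by
  obtain ⟨K, hK, h1⟩ := hf.arc
  obtain ⟨C, hC⟩ := isCompact_Icc.exists_bound_of_continuousOn (hg.continuousOn (s := Icc 0 b))
  have hlim : ∀ θ ∈ Ioc 0 b, Tendsto (fun ρ : ℝ => f (ρ * Complex.exp (θ * Complex.I))) (𝓝[<] 1)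
      (𝓝 (f (Complex.exp (θ * Complex.I)))) := by
    intro θ hθ
    have h2 := (hf.cont θ hθ).tendsto
    refine h2.comp ?_
    have h3 : Continuous (fun ρ : ℝ => (ρ : ℂ) * Complex.exp (θ * Complex.I)) := by fun_prop
    have := h3.tendsto 1
    simp only [Complex.ofReal_one, one_mul] at this
    exact this.mono_left nhdsWithin_le_nhds
  have hev : ∀ᶠ ρ : ℝ in 𝓝[<] 1, ρ ∈ Ico (0 : ℝ) 1 := by
    have : Ico (0 : ℝ) 1 ∈ 𝓝[<] (1 : ℝ) := Ico_mem_nhdsLT (by norm_num)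
    exact this
  have hbd : ∀ θ ∈ Ioc 0 b, ∀ z : ℂ, ‖z‖ ≤ K * m θ ^ 3 → ‖g θ * z‖ ≤ C * (K * 10648) * θ ^ (-(1 / 2) : ℝ) := by
    intro θ hθ z hz
    rw [m_pow θ hθ.1.le] at hz
    rw [norm_mul]
    calc ‖g θ‖ * ‖z‖ ≤ C * (K * (10648 * θ ^ (-(1 / 2) : ℝ))) := by
          apply mul_le_mul (hC θ ⟨hθ.1.le, hθ.2⟩) hz (norm_nonneg _)
          exact (norm_nonneg _).trans (hC θ ⟨hθ.1.le, hθ.2⟩)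
      _ = _ := by ring
  have hint : IntervalIntegrable (fun θ : ℝ => C * (K * 10648) * θ ^ (-(1 / 2) : ℝ)) volume 0 b :=
    (intable_rpow b).const_mul _
  constructor
  · refine hint.mono_fun' ?_ ?_
    · rw [uIoc_of_le hb]
      refine ContinuousOn.aestronglyMeasurable ?_ measurableSet_Ioc
      intro θ hθ
      apply ContinuousAt.continuousWithinAt
      refine hg.continuousAt.mul ?_
      exact ContinuousAt.comp (f := fun θ : ℝ => Complex.exp (θ * Complex.I)) (hf.cont θ hθ) (by fun_prop)
    · rw [uIoc_of_le hb]
      refine (ae_restrict_iff' measurableSet_Ioc).2 (Eventually.of_forall fun θ hθ => ?_)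
      refine hbd θ hθ _ ?_
      refine le_of_tendsto (hlim θ hθ).norm ?_
      filter_upwards [hev] with ρ hρ using h1 ρ hρ θ hθ
  · refine intervalIntegral.tendsto_integral_filter_of_dominated_convergence
      (fun θ : ℝ => C * (K * 10648) * θ ^ (-(1 / 2) : ℝ)) ?_ ?_ hint ?_
    · filter_upwards [hev] with ρ hρ
      refine Continuous.aestronglyMeasurable ?_
      refine hg.mul ?_
      refine hf.diff.continuousOn.comp_continuous (by fun_prop) ?_
      intro θ
      rw [mem_ball_zero_iff, norm_pt hρ.1]
      exact hρ.2
    · filter_upwards [hev] with ρ hρ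
      refine Eventually.of_forall fun θ hθ => ?_
      rw [uIoc_of_le hb] at hθ
      exact hbd θ hθ _ (h1 ρ hρ θ hθ)
    · refine Eventually.of_forall fun θ hθ => ?_
      rw [uIoc_of_le hb] at hθ
      exact (hlim θ hθ).const_mul _

lemma Tame.intable (hf : Tame b f 3) {θ : ℝ} (hθ : θ ∈ Icc 0 b) :
    IntervalIntegrable (fun x : ℝ => f (x * Complex.exp (θ * Complex.I))) volume 0 1 := by
  obtain ⟨K, hK, h1⟩ := hf.rad
  have hint : IntervalIntegrable (fun x : ℝ => (K * 10648) * (1 - x) ^ (-(1 / 2) : ℝ)) volume 0 1 :=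
    intable_rpow'.const_mul _
  refine hint.mono_fun' ?_ ?_
  · rw [uIoc_of_le zero_le_one, ← restrict_Ioo_eq_restrict_Ioc]
    refine ContinuousOn.aestronglyMeasurable ?_ measurableSet_Ioo
    refine hf.diff.continuousOn.comp (by fun_prop) ?_
    intro x hx
    rw [mem_ball_zero_iff, norm_pt hx.1.le]
    exact hx.2
  · rw [uIoc_of_le zero_le_one, ← restrict_Ioo_eq_restrict_Ioc]
    refine (ae_restrict_iff' measurableSet_Ioo).2 (Eventually.of_forall fun x hx => ?_)
    refine (h1 x ⟨hx.1.le, hx.2⟩ θ hθ).trans (le_of_eq ?_)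
    rw [m_pow _ (by linarith [hx.2])]
    ring

lemma tendsto_prim {h : ℝ → ℂ} {c : ℝ} (hc : 0 < c) (hh : IntervalIntegrable h volume 0 c) :
    Tendsto (fun ρ : ℝ => ∫ x in (0 : ℝ)..ρ, h x) (𝓝[<] c) (𝓝 (∫ x in (0 : ℝ)..c, h x)) := by
  have h1 := intervalIntegral.continuousOn_primitive_interval (f := h) (a := 0) (b := c) (μ := volume)
    (by rw [uIcc_of_le hc.le]; exact (intervalIntegrable_iff_integrableOn_Icc_of_le hc.le).1 hh)
  have h2 := h1 c right_mem_uIcc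
  rw [uIcc_of_le hc.le] at h2
  refine h2.tendsto.mono_left ?_
  rw [← nhdsWithin_Ico_eq_nhdsLT hc]
  exact nhdsWithin_mono _ Ico_subset_Icc_self

lemma ray_ftc {H : ℂ → ℂ} (hH : ∀ z ∈ Metric.ball (0 : ℂ) 1, HasDerivAt H (f z) z)
    (hf : DifferentiableOn ℂ f (Metric.ball 0 1)) (θ ρ : ℝ) (h0 : 0 ≤ ρ) (h1 : ρ < 1) :
    ∫ x in (0 : ℝ)..ρ, f (x * Complex.exp (θ * Complex.I)) * Complex.exp (θ * Complex.I) =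
      H (ρ * Complex.exp (θ * Complex.I)) - H 0 := by
  have hmem : ∀ x ∈ uIcc 0 ρ, (x : ℂ) * Complex.exp (θ * Complex.I) ∈ Metric.ball (0 : ℂ) 1 := by
    intro x hx
    rw [uIcc_of_le h0] at hx
    rw [mem_ball_zero_iff, norm_pt hx.1]
    linarith [hx.2]
  have := intervalIntegral.integral_eq_sub_of_hasDerivAt (a := 0) (b := ρ)
    (f := fun x : ℝ => H (x * Complex.exp (θ * Complex.I)))
    (f' := fun x : ℝ => f (x * Complex.exp (θ * Complex.I)) * Complex.exp (θ * Complex.I)) ?_ ?_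
  · simpa using this
  · intro x hx
    have h2 : HasDerivAt (fun x : ℝ => (x : ℂ) * Complex.exp (θ * Complex.I))
        (Complex.exp (θ * Complex.I)) x := by
      simpa using (Complex.ofRealCLM.hasDerivAt (x := x)).mul_const (Complex.exp (θ * Complex.I))
    exact (hH _ (hmem x hx)).comp x h2
  · refine ContinuousOn.intervalIntegrable ?_
    refine ContinuousOn.mul ?_ continuousOn_const
    exact hf.continuousOn.comp (by fun_prop) hmem

lemma arc_ftc {H : ℂ → ℂ} (hH : ∀ z ∈ Metric.ball (0 : ℂ) 1, HasDerivAt H (f z) z)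
    (hf : DifferentiableOn ℂ f (Metric.ball 0 1)) (φ ρ : ℝ) (h0 : 0 ≤ ρ) (h1 : ρ < 1) :
    ∫ θ in (0 : ℝ)..φ, Complex.I * ((ρ * Complex.exp (θ * Complex.I)) * f (ρ * Complex.exp (θ * Complex.I))) =
      H (ρ * Complex.exp (φ * Complex.I)) - H ρ := by
  have hmem : ∀ θ : ℝ, (ρ : ℂ) * Complex.exp (θ * Complex.I) ∈ Metric.ball (0 : ℂ) 1 := by
    intro x
    rw [mem_ball_zero_iff, norm_pt h0]
    exact h1
  have := intervalIntegral.integral_eq_sub_of_hasDerivAt (a := 0) (b := φ)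
    (f := fun x : ℝ => H (ρ * Complex.exp (x * Complex.I)))
    (f' := fun θ : ℝ => Complex.I * ((ρ * Complex.exp (θ * Complex.I)) * f (ρ * Complex.exp (θ * Complex.I)))) ?_ ?_
  · simpa using this
  · intro x hx
    have h2 : HasDerivAt (fun x : ℝ => (ρ : ℂ) * Complex.exp (x * Complex.I))
        (ρ * (Complex.exp (x * Complex.I) * Complex.I)) x := by
      have h3 : HasDerivAt (fun x : ℝ => (x : ℂ) * Complex.I) Complex.I x := by
        simpa using (Complex.ofRealCLM.hasDerivAt (x := x)).mul_const Complex.I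
      exact h3.cexp.const_mul _
    have h4 := (hH _ (hmem x)).comp x h2
    refine h4.congr_deriv ?_
    ring
  · refine ContinuousOn.intervalIntegrable ?_
    refine ContinuousOn.mul continuousOn_const ?_
    refine ContinuousOn.mul (by fun_prop) ?_
    exact hf.continuousOn.comp (by fun_prop) (fun x _ => hmem x)

theorem Tame.sector (hf : Tame b f 3) (hb : 0 ≤ b) (hb2 : b ≤ 2) :
    (∫ x in (0 : ℝ)..1, f x) +
      Complex.I * (∫ θ in (0 : ℝ)..b, Complex.exp (θ * Complex.I) * f (Complex.exp (θ * Complex.I))) =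
    ∫ x in (0 : ℝ)..1, f (x * Complex.exp (b * Complex.I)) * Complex.exp (b * Complex.I) := by
  obtain ⟨H, hH⟩ := hf.diff.isExactOn_ball
  have hev : ∀ᶠ ρ : ℝ in 𝓝[<] 1, ρ ∈ Ico (0 : ℝ) 1 := by
    have : Ico (0 : ℝ) 1 ∈ 𝓝[<] (1 : ℝ) := Ico_mem_nhdsLT (by norm_num)
    exact this
  have i1 := hf.intable (θ := 0) ⟨le_rfl, hb⟩
  have i2 := (hf.intable (θ := b) ⟨hb, le_rfl⟩).mul_const (Complex.exp (b * Complex.I))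
  simp only [Complex.ofReal_zero, zero_mul, Complex.exp_zero, mul_one] at i1
  have t1 := tendsto_prim zero_lt_one i1
  have t2 := tendsto_prim zero_lt_one i2
  have hf' : Tame b (fun w => w * f w) 3 := by simpa using (Tame.id b).mul hf
  have t3 := ((hf'.dct hb hb2 (fun _ => 1) continuous_const).2).const_mul Complex.I
  simp only [one_mul] at t3
  refine tendsto_nhds_unique ((t1.add t3).congr' ?_) t2
  filter_upwards [hev] with ρ hρ
  have e1 := ray_ftc hH hf.diff 0 ρ hρ.1 hρ.2
  have e2 := ray_ftc hH hf.diff b ρ hρ.1 hρ.2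
  have e3 := arc_ftc hH hf.diff b ρ hρ.1 hρ.2
  simp only [Complex.ofReal_zero, zero_mul, Complex.exp_zero, mul_one] at e1
  rw [intervalIntegral.integral_const_mul] at e3
  rw [e2, e1, e3]
  ring

lemma Tame.dslope (hf : Tame b f k) (hb2 : b ≤ 2) (h0 : f 0 = 0) : Tame b (dslope f 0) k := by
  have hd : DifferentiableOn ℂ (_root_.dslope f 0) (Metric.ball 0 1) :=
    (Complex.differentiableOn_dslope (Metric.isOpen_ball.mem_nhds (Metric.mem_ball_self one_pos))).2 hf.diff
  have hs : ∀ w : ℂ, w ≠ 0 → _root_.dslope f 0 w = w⁻¹ * f w := by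
    intro w hw
    rw [dslope_of_ne _ hw, slope_def_module]
    simp [h0]
  obtain ⟨C, hC⟩ := (isCompact_closedBall (0 : ℂ) (1 / 2)).exists_bound_of_continuousOn
    (hd.continuousOn.mono (Metric.closedBall_subset_ball (by norm_num)))
  have hC0 : 0 ≤ C := (norm_nonneg _).trans (hC 0 (by simp))
  have gen : ∀ K : ℝ, 0 ≤ K → ∀ ρ ∈ Ico (0 : ℝ) 1, ∀ θ t : ℝ, 11 ≤ t →
      ‖f (ρ * Complex.exp (θ * Complex.I))‖ ≤ K * t ^ k →
      ‖_root_.dslope f 0 (ρ * Complex.exp (θ * Complex.I))‖ ≤ (2 * K + C) * t ^ k := by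
    intro K hK ρ hρ θ t ht h
    have h1 : 1 ≤ t ^ k := one_le_pow₀ (by linarith)
    by_cases hh : ρ ≤ 1 / 2
    · have := hC (ρ * Complex.exp (θ * Complex.I)) (by
        rw [mem_closedBall_zero_iff, norm_pt hρ.1]; exact hh)
      nlinarith
    · push Not at hh
      have hne : (ρ : ℂ) * Complex.exp (θ * Complex.I) ≠ 0 := by
        rw [← norm_pos_iff, norm_pt hρ.1]; linarith
      rw [hs _ hne, norm_mul, norm_inv, norm_pt hρ.1]
      have h2 : ρ⁻¹ ≤ 2 := by
        rw [inv_le_comm₀ (by linarith) (by norm_num)]; linarith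
      have h3 : ρ⁻¹ * ‖f (ρ * Complex.exp (θ * Complex.I))‖ ≤ 2 * (K * t ^ k) := by
        apply mul_le_mul h2 h (norm_nonneg _) (by norm_num)
      nlinarith
  refine ⟨hd, ?_, ?_, ?_⟩
  · intro θ hθ
    exact (continuousAt_dslope_of_ne (Complex.exp_ne_zero _)).2 (hf.cont θ hθ)
  · obtain ⟨K, hK, h1⟩ := hf.arc
    exact ⟨2 * K + C, by positivity, fun ρ hρ θ hθ =>
      gen K hK ρ hρ θ _ (m_ge hθ.1 (hθ.2.trans hb2)) (h1 ρ hρ θ hθ)⟩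
  · obtain ⟨K, hK, h1⟩ := hf.rad
    exact ⟨2 * K + C, by positivity, fun ρ hρ θ hθ =>
      gen K hK ρ hρ θ _ (m_ge (by linarith [hρ.2]) (by linarith [hρ.1])) (h1 ρ hρ θ hθ)⟩

/-- quarter disc identity -/
theorem Tame.quarter (hf : Tame (Real.pi / 2) f 3) (h0 : f 0 = 0) :
    IntervalIntegrable (fun x : ℝ => f x / x) volume 0 1 ∧
    (∫ x in (0 : ℝ)..1, f x / x) +
      Complex.I * (∫ θ in (0 : ℝ)..(Real.pi / 2), f (Complex.exp (θ * Complex.I))) =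
    ∫ x in (0 : ℝ)..1, f (x * Complex.I) / x := by
  have hg := hf.dslope pi_half_le_two h0
  have hs : ∀ w : ℂ, w ≠ 0 → _root_.dslope f 0 w = w⁻¹ * f w := by
    intro w hw
    rw [dslope_of_ne _ hw, slope_def_module]
    simp [h0]
  have key := hg.sector (by positivity) pi_half_le_two
  have i1 := hg.intable (θ := 0) ⟨le_rfl, by positivity⟩
  simp only [Complex.ofReal_zero, zero_mul, Complex.exp_zero, mul_one] at i1
  have eI : Complex.exp (((Real.pi / 2 : ℝ) : ℂ) * Complex.I) = Complex.I := by
    push_cast; exact Complex.exp_pi_div_two_mul_I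
  rw [eI] at key
  have c1 : EqOn (fun x : ℝ => _root_.dslope f 0 x) (fun x : ℝ => f x / x) (uIoc 0 1) := by
    intro x hx
    rw [uIoc_of_le zero_le_one] at hx
    simp only
    rw [hs _ (by exact_mod_cast hx.1.ne')]
    field_simp
  constructor
  · exact i1.congr c1
  · rw [intervalIntegral.integral_congr_ae (g := fun x : ℝ => f x / x)
      (Eventually.of_forall fun x hx => c1 hx)] at key
    refine Eq.trans ?_ (key.trans ?_)
    · congr 2
      refine intervalIntegral.integral_congr fun θ _ => ?_
      beta_reduce
      rw [hs _ (Complex.exp_ne_zero _), mul_inv_cancel_left₀ (Complex.exp_ne_zero _)]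
    · refine intervalIntegral.integral_congr_ae (Eventually.of_forall fun x hx => ?_)
      rw [uIoc_of_le zero_le_one] at hx
      have hx0 : (x : ℂ) ≠ 0 := by exact_mod_cast hx.1.ne'
      rw [hs _ (mul_ne_zero hx0 Complex.I_ne_zero)]
      field_simp
end S17

set_option linter.unusedSimpArgs false
namespace S17
open MeasureTheory Filter Topology Set intervalIntegral
variable {b : ℝ} {f g : ℂ → ℂ} {k l : ℕ}

lemma ii_re {h : ℝ → ℂ} {a b : ℝ} (hh : IntervalIntegrable h volume a b) :
    IntervalIntegrable (fun x => (h x).re) volume a b :=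
  ⟨hh.1.re, hh.2.re⟩
lemma ii_im {h : ℝ → ℂ} {a b : ℝ} (hh : IntervalIntegrable h volume a b) :
    IntervalIntegrable (fun x => (h x).im) volume a b :=
  ⟨hh.1.im, hh.2.im⟩
lemma int_re {h : ℝ → ℂ} {a b : ℝ} (hh : IntervalIntegrable h volume a b) :
    (∫ x in a..b, h x).re = ∫ x in a..b, (h x).re :=
  (Complex.reCLM.intervalIntegral_comp_comm hh).symm
lemma int_im {h : ℝ → ℂ} {a b : ℝ} (hh : IntervalIntegrable h volume a b) :
    (∫ x in a..b, h x).im = ∫ x in a..b, (h x).im :=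
  (Complex.imCLM.intervalIntegral_comp_comm hh).symm
lemma int_im_zero {h : ℝ → ℂ} {a b : ℝ} (hh : ∀ x ∈ uIoc a b, (h x).im = 0) :
    (∫ x in a..b, h x).im = 0 := by
  rw [intervalIntegral.integral_congr_ae (g := fun x => (((h x).re : ℝ) : ℂ))
    (Eventually.of_forall fun x hx => Complex.ext (by simp) (by simp [hh x hx])),
    intervalIntegral.integral_ofReal]
  simp
lemma int_re_zero {h : ℝ → ℂ} {a b : ℝ} (hh : ∀ x ∈ uIoc a b, (h x).re = 0) :
    (∫ x in a..b, h x).re = 0 := by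
  have := int_im_zero (h := fun x => Complex.I * h x) (a := a) (b := b)
    (fun x hx => by simp [hh x hx])
  rw [intervalIntegral.integral_const_mul] at this
  simpa using this

lemma Tame.series (hf : Tame b f 3) (hb : 0 ≤ b) (hb2 : b ≤ 2) (a : ℕ → ℝ) (ha : ∀ n, |a n| ≤ 2)
    (hs : ∀ w : ℂ, ‖w‖ < 1 → HasSum (fun n : ℕ => (a n : ℂ) * w ^ n) (f w))
    (g : ℝ → ℝ) (hg : Continuous g) {S : ℝ}
    (hS : HasSum (fun n : ℕ => a n * ∫ θ in (0 : ℝ)..b, g θ * Real.cos (n * θ)) S) :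
    (IntervalIntegrable (fun θ : ℝ => g θ * (f (Complex.exp (θ * Complex.I))).re) volume 0 b) ∧
    ∫ θ in (0 : ℝ)..b, g θ * (f (Complex.exp (θ * Complex.I))).re = S := by
  have hgc : Continuous (fun θ => (g θ : ℂ)) := Complex.continuous_ofReal.comp hg
  obtain ⟨hi, ht⟩ := hf.dct hb hb2 (fun θ => (g θ : ℂ)) hgc
  have hi' := ii_re hi
  simp only [Complex.re_ofReal_mul] at hi'
  refine ⟨hi', ?_⟩
  have h1 := (Complex.continuous_re.tendsto _).comp ht
  rw [int_re hi] at h1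
  simp only [Complex.re_ofReal_mul] at h1
  refine tendsto_nhds_unique h1 ?_
  have h2 := Real.tendsto_tsum_powerSeries_nhdsWithin_lt hS.tendsto_sum_nat
  refine h2.congr' ?_
  have hev : ∀ᶠ ρ : ℝ in 𝓝[<] 1, ρ ∈ Ioo (0 : ℝ) 1 := Ioo_mem_nhdsLT (by norm_num)
  filter_upwards [hev] with ρ hρ
  obtain ⟨C, hC⟩ := isCompact_Icc.exists_bound_of_continuousOn (hg.continuousOn (s := Icc 0 b))
  have h3 := intervalIntegral.hasSum_integral_of_dominated_convergence (a := 0) (b := b) (μ := volume)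
    (F := fun (n : ℕ) (θ : ℝ) => (g θ : ℂ) * ((a n : ℂ) * (ρ * Complex.exp (θ * Complex.I)) ^ n))
    (f := fun θ : ℝ => (g θ : ℂ) * f (ρ * Complex.exp (θ * Complex.I)))
    (fun n θ => C * (2 * ρ ^ n)) ?_ ?_ ?_ ?_ ?_
  · have h4 := Complex.hasSum_re h3
    simp only [Function.comp]
    rw [← h4.tsum_eq]
    congr 1; ext n
    rw [int_re (Continuous.intervalIntegrable (by fun_prop) _ _), mul_right_comm,
      ← intervalIntegral.integral_const_mul]
    refine intervalIntegral.integral_congr fun θ _ => ?_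
    simp only [mul_pow, ← Complex.exp_nat_mul]
    rw [Complex.re_ofReal_mul, Complex.re_ofReal_mul, ← Complex.ofReal_pow, Complex.re_ofReal_mul,
      show (n : ℂ) * (θ * Complex.I) = ((n * θ : ℝ) : ℂ) * Complex.I by push_cast; ring,
      Complex.exp_ofReal_mul_I_re]
    ring
  · intro n
    exact Continuous.aestronglyMeasurable (by fun_prop)
  · intro n
    refine Eventually.of_forall fun θ hθ => ?_
    rw [uIoc_of_le hb] at hθ
    rw [norm_mul, norm_mul, norm_pow, norm_pt hρ.1.le]
    have := hC θ ⟨hθ.1.le, hθ.2⟩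
    have h5 := ha n
    simp only [Complex.norm_real, Real.norm_eq_abs] at this ⊢
    have : 0 ≤ C := (abs_nonneg _).trans this
    have := hρ.1
    gcongr
  · refine Eventually.of_forall fun θ hθ => ?_
    exact ((summable_geometric_of_lt_one hρ.1.le hρ.2).mul_left 2).mul_left C
  · simp
  · refine Eventually.of_forall fun θ hθ => ?_
    exact (hs _ (by rw [norm_pt hρ.1.le]; exact hρ.2)).mul_left _

def X (w : ℂ) : ℂ := Complex.log (1 + w) - Complex.log (1 - w)
def Y (w : ℂ) : ℂ := Complex.log (1 + w) + Complex.log (1 - w)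
def CC (α : ℝ) : ℝ := Real.log (2 * Real.cos (α / 2)) - Real.log (2 * Real.sin (α / 2))
def LL (α : ℝ) : ℝ := Real.log (2 * Real.cos (α / 2)) + Real.log (2 * Real.sin (α / 2))

lemma log_one_add_exp {θ : ℝ} (h0 : -Real.pi < θ) (h1 : θ < Real.pi) :
    Complex.log (1 + Complex.exp (θ * Complex.I)) =
      ((Real.log (2 * Real.cos (θ / 2)) : ℝ) : ℂ) + ((θ / 2 : ℝ) : ℂ) * Complex.I := by
  have := log_one_sub_exp (θ := θ + Real.pi) (by linarith) (by linarith)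
  rw [show (θ + Real.pi) / 2 = θ / 2 + Real.pi / 2 by ring, Real.sin_add_pi_div_two,
    show (θ + Real.pi - Real.pi) / 2 = θ / 2 by ring] at this
  rw [← this]
  congr 1
  push_cast
  rw [add_mul, Complex.exp_add, Complex.exp_pi_mul_I]
  ring

lemma X_arc {α : ℝ} (h0 : 0 < α) (h1 : α < Real.pi) :
    X (Complex.exp (α * Complex.I)) = (CC α : ℂ) + ((Real.pi / 2 : ℝ) : ℂ) * Complex.I := by
  unfold X CC
  rw [log_one_add_exp (by linarith) h1, log_one_sub_exp h0 (by linarith)]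
  push_cast; ring

lemma Y_arc {α : ℝ} (h0 : 0 < α) (h1 : α < Real.pi) :
    Y (Complex.exp (α * Complex.I)) = (LL α : ℂ) + ((α - Real.pi / 2 : ℝ) : ℂ) * Complex.I := by
  unfold Y LL
  rw [log_one_add_exp (by linarith) h1, log_one_sub_exp h0 (by linarith)]
  push_cast; ring

lemma tame_X (hb : b ≤ Real.pi / 2) : Tame b X 1 := by
  have h := (tame_log_add hb).add ((Tame.const b (-1)).mul (tame_log_sub hb))
  unfold X
  simpa [sub_eq_add_neg] using h

lemma tame_Y (hb : b ≤ Real.pi / 2) : Tame b Y 1 := (tame_log_add hb).add (tame_log_sub hb)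

lemma X_zero : X 0 = 0 := by simp [X]
lemma Y_zero : Y 0 = 0 := by simp [Y]

lemma conj_log (x : ℝ) : Complex.log (1 - x * Complex.I) = (starRingEnd ℂ) (Complex.log (1 + x * Complex.I)) := by
  rw [← Complex.log_conj]
  · simp [sub_eq_add_neg]
  · intro h
    rw [Complex.arg_eq_pi_iff] at h
    simp at h
    linarith [h.1]

lemma X_imag (x : ℝ) : (X (x * Complex.I)).re = 0 := by simp [X, conj_log]
lemma Y_imag (x : ℝ) : (Y (x * Complex.I)).im = 0 := by simp [Y, conj_log]

lemma X_real {x : ℝ} (h0 : 0 ≤ x) (h1 : x ≤ 1) :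
    X x = ((Real.log (1 + x) - Real.log (1 - x) : ℝ) : ℂ) := by
  unfold X
  rw [Complex.ofReal_sub, Complex.ofReal_log (by linarith), Complex.ofReal_log (by linarith)]
  push_cast; rfl
lemma Y_real {x : ℝ} (h0 : 0 ≤ x) (h1 : x ≤ 1) :
    Y x = ((Real.log (1 + x) + Real.log (1 - x) : ℝ) : ℂ) := by
  unfold Y
  rw [Complex.ofReal_add, Complex.ofReal_log (by linarith), Complex.ofReal_log (by linarith)]
  push_cast; rfl

lemma X_series (w : ℂ) (hw : ‖w‖ < 1) :
    HasSum (fun n : ℕ => (((1 - (-1) ^ n) / n : ℝ) : ℂ) * w ^ n) (X w) := by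
  have h1 := Complex.hasSum_taylorSeries_neg_log hw
  have h2 := Complex.hasSum_taylorSeries_neg_log (z := -w) (by simpa using hw)
  have h3 := h1.sub h2
  rw [sub_neg_eq_add 1 w, neg_sub_neg] at h3
  refine Eq.mpr (congrArg (fun F => HasSum F _) (funext fun n => ?_)) h3
  rw [neg_pow]; push_cast; ring
lemma Y_series (w : ℂ) (hw : ‖w‖ < 1) :
    HasSum (fun n : ℕ => ((-(1 + (-1) ^ n) / n : ℝ) : ℂ) * w ^ n) (Y w) := by
  have h1 := Complex.hasSum_taylorSeries_neg_log hw
  have h2 := Complex.hasSum_taylorSeries_neg_log (z := -w) (by simpa using hw)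
  have h3 := (h1.add h2).neg
  rw [sub_neg_eq_add 1 w, ← neg_add, neg_neg, add_comm (Complex.log _)] at h3
  refine Eq.mpr (congrArg (fun F => HasSum F _) (funext fun n => ?_)) h3
  rw [neg_pow]; push_cast; ring

def z3 : ℝ := ∑' n : ℕ, 1 / (n : ℝ) ^ 3

lemma zeta_eq : riemannZeta 3 = (z3 : ℂ) := by
  have := zeta_nat_eq_tsum_of_gt_one (k := 3) (by norm_num)
  unfold z3
  push_cast at this ⊢
  exact this

lemma z3_sum : HasSum (fun n : ℕ => 1 / (n : ℝ) ^ 3) z3 :=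
  (Real.summable_one_div_nat_pow.2 (by norm_num)).hasSum

lemma z3_even : HasSum (fun k : ℕ => 1 / ((2 * k : ℕ) : ℝ) ^ 3) (z3 / 8) := by
  refine Eq.mpr (congrArg (fun F => HasSum F _) (funext fun k => ?_)) (z3_sum.div_const 8)
  push_cast; rw [mul_pow, div_div]; congr 1; ring

lemma z3_odd : HasSum (fun k : ℕ => 1 / ((2 * k + 1 : ℕ) : ℝ) ^ 3) (7 / 8 * z3) := by
  have hs : Summable (fun k : ℕ => 1 / ((2 * k + 1 : ℕ) : ℝ) ^ 3) :=
    z3_sum.summable.comp_injective (i := fun k => 2 * k + 1) (fun a b h => by simpa using h)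
  have := (HasSum.even_add_odd (f := fun n : ℕ => 1 / (n : ℝ) ^ 3) z3_even hs.hasSum).unique z3_sum
  convert hs.hasSum using 1
  linarith

lemma coeff_bound1 (n : ℕ) : |((1 - (-1) ^ n) / n : ℝ)| ≤ 2 := by
  rcases Nat.eq_zero_or_pos n with rfl | hn
  · simp
  have : (1 : ℝ) ≤ n := by exact_mod_cast hn
  rw [abs_div, div_le_iff₀ (by positivity), Nat.abs_cast]
  rcases neg_one_pow_eq_or ℝ n with h | h <;> rw [h] <;> norm_num <;> linarith
lemma coeff_bound2 (n : ℕ) : |(-(1 + (-1) ^ n) / n : ℝ)| ≤ 2 := by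
  rcases Nat.eq_zero_or_pos n with rfl | hn
  · simp
  have : (1 : ℝ) ≤ n := by exact_mod_cast hn
  rw [abs_div, div_le_iff₀ (by positivity), Nat.abs_cast]
  rcases neg_one_pow_eq_or ℝ n with h | h <;> rw [h] <;> norm_num <;> linarith

lemma int_w0 {c : ℝ} (hc : c ≠ 0) :
    ∫ θ in (0 : ℝ)..(Real.pi / 2), (1 : ℝ) * Real.cos (c * θ) = Real.sin (c * (Real.pi / 2)) / c := by
  rw [intervalIntegral.integral_eq_sub_of_hasDerivAt (f := fun θ => Real.sin (c * θ) / c)]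
  · simp
  · intro θ _
    have := (((hasDerivAt_id' θ).const_mul c).sin).div_const c
    exact this.congr_deriv (by simp; field_simp)
  · exact Continuous.intervalIntegrable (by fun_prop) _ _

lemma int_w1 {c : ℝ} (hc : c ≠ 0) :
    ∫ θ in (0 : ℝ)..(Real.pi / 2), (Real.pi / 2 - θ) * Real.cos (c * θ) =
      (1 - Real.cos (c * (Real.pi / 2))) / c ^ 2 := by
  rw [intervalIntegral.integral_eq_sub_of_hasDerivAt
    (f := fun θ => (Real.pi / 2 - θ) * Real.sin (c * θ) / c - Real.cos (c * θ) / c ^ 2)]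
  · simp; ring
  · intro θ _
    have h0 := (hasDerivAt_id' θ).const_mul c
    have h1 := (((hasDerivAt_id' θ).const_sub (Real.pi / 2)).mul h0.sin).div_const c
    have := h1.sub (h0.cos.div_const (c ^ 2))
    exact this.congr_deriv (by simp; field_simp; ring)
  · exact Continuous.intervalIntegrable (by fun_prop) _ _

lemma int_w2 {c : ℝ} (hc : c ≠ 0) :
    ∫ θ in (0 : ℝ)..(Real.pi / 2), (Real.pi / 2 - θ) ^ 2 * Real.cos (c * θ) =
      Real.pi / c ^ 2 - 2 * Real.sin (c * (Real.pi / 2)) / c ^ 3 := by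
  rw [intervalIntegral.integral_eq_sub_of_hasDerivAt
    (f := fun θ => (Real.pi / 2 - θ) ^ 2 * Real.sin (c * θ) / c - 2 * (Real.pi / 2 - θ) * Real.cos (c * θ) / c ^ 2
      - 2 * Real.sin (c * θ) / c ^ 3)]
  · simp; ring
  · intro θ _
    have h0 := (hasDerivAt_id' θ).const_mul c
    have hy := (hasDerivAt_id' θ).const_sub (Real.pi / 2)
    have h1 := ((hy.pow 2).mul h0.sin).div_const c
    have h2 := ((hy.const_mul 2).mul h0.cos).div_const (c ^ 2)
    have := (h1.sub h2).sub ((h0.sin.const_mul 2).div_const (c ^ 3))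
    exact this.congr_deriv (by simp; field_simp; ring)
  · exact Continuous.intervalIntegrable (by fun_prop) _ _

end S17

set_option linter.unusedSimpArgs false
namespace S17
open MeasureTheory Filter Topology Set intervalIntegral

lemma pi_half_nn : (0 : ℝ) ≤ Real.pi / 2 := by positivity

lemma arc_mem {α : ℝ} (h : α ∈ uIoc 0 (Real.pi / 2)) : 0 < α ∧ α < Real.pi := by
  rw [uIoc_of_le pi_half_nn] at h
  exact ⟨h.1, by linarith [h.2, Real.pi_pos]⟩

/-- transfer an integrability and an integral -/
lemma ii_congr {a b S : ℝ} {f g : ℝ → ℝ} (h : IntervalIntegrable f volume a b ∧ ∫ x in a..b, f x = S)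
    (hfg : ∀ x ∈ uIoc a b, f x = g x) :
    IntervalIntegrable g volume a b ∧ ∫ x in a..b, g x = S :=
  ⟨h.1.congr hfg, by
    rw [← h.2]; exact intervalIntegral.integral_congr_ae (Eventually.of_forall fun x hx => (hfg x hx).symm)⟩

lemma ii_add {a b S T : ℝ} {f g : ℝ → ℝ} (h : IntervalIntegrable f volume a b ∧ ∫ x in a..b, f x = S)
    (h' : IntervalIntegrable g volume a b ∧ ∫ x in a..b, g x = T) :
    IntervalIntegrable (fun x => f x + g x) volume a b ∧ ∫ x in a..b, (f x + g x) = S + T :=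
  ⟨h.1.add h'.1, by rw [intervalIntegral.integral_add h.1 h'.1, h.2, h'.2]⟩

lemma ii_mul {a b S : ℝ} {f : ℝ → ℝ} (c : ℝ) (h : IntervalIntegrable f volume a b ∧ ∫ x in a..b, f x = S) :
    IntervalIntegrable (fun x => c * f x) volume a b ∧ ∫ x in a..b, c * f x = c * S :=
  ⟨h.1.const_mul c, by rw [intervalIntegral.integral_const_mul, h.2]⟩

lemma ii_const {a b c : ℝ} :
    IntervalIntegrable (fun _ : ℝ => c) volume a b ∧ ∫ _ in a..b, c = (b - a) * c :=
  ⟨_root_.intervalIntegrable_const, by simp⟩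

lemma X_re {α : ℝ} (h : α ∈ uIoc 0 (Real.pi / 2)) : (X (Complex.exp (α * Complex.I))).re = CC α := by
  rw [X_arc (arc_mem h).1 (arc_mem h).2]; simp
lemma X_im {α : ℝ} (h : α ∈ uIoc 0 (Real.pi / 2)) : (X (Complex.exp (α * Complex.I))).im = Real.pi / 2 := by
  rw [X_arc (arc_mem h).1 (arc_mem h).2, Complex.add_im, Complex.im_ofReal_mul]; simp
lemma Y_re {α : ℝ} (h : α ∈ uIoc 0 (Real.pi / 2)) : (Y (Complex.exp (α * Complex.I))).re = LL α := by
  rw [Y_arc (arc_mem h).1 (arc_mem h).2, Complex.add_re, Complex.re_ofReal_mul]; simp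
lemma Y_im {α : ℝ} (h : α ∈ uIoc 0 (Real.pi / 2)) :
    (Y (Complex.exp (α * Complex.I))).im = α - Real.pi / 2 := by
  rw [Y_arc (arc_mem h).1 (arc_mem h).2, Complex.add_im, Complex.im_ofReal_mul]; simp

lemma cos_odd (k : ℕ) : Real.cos (((2 * k + 1 : ℕ) : ℝ) * (Real.pi / 2)) = 0 := by
  rw [Real.cos_eq_zero_iff]; exact ⟨k, by push_cast; ring⟩
lemma sin_even (k : ℕ) : Real.sin (((2 * k : ℕ) : ℝ) * (Real.pi / 2)) = 0 := by
  rw [Real.sin_eq_zero_iff]; exact ⟨k, by push_cast; ring⟩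

lemma N3_eval : IntervalIntegrable (fun α => (Real.pi / 2 - α) * CC α) volume 0 (Real.pi / 2) ∧
    ∫ α in (0 : ℝ)..(Real.pi / 2), (Real.pi / 2 - α) * CC α = 7 / 4 * z3 := by
  refine ii_congr (((tame_X le_rfl).mono pi_half_le_two (by norm_num)).series pi_half_nn pi_half_le_two
    (fun n => (1 - (-1) ^ n) / n) coeff_bound1 X_series (fun θ => Real.pi / 2 - θ) (by fun_prop) ?_)
    (fun α hα => by rw [X_re hα])
  have h := HasSum.even_add_odd (f := fun n : ℕ => ((1 - (-1) ^ n) / n : ℝ) *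
    ∫ θ in (0 : ℝ)..(Real.pi / 2), (Real.pi / 2 - θ) * Real.cos (n * θ)) (m := 0) (m' := 2 * (7 / 8 * z3)) ?_ ?_
  · rw [show (7 / 4 * z3) = 0 + 2 * (7 / 8 * z3) by ring]; exact h
  · refine Eq.mpr (congrArg (fun F => HasSum F _) (funext fun k => ?_)) hasSum_zero
    rw [pow_mul]; simp
  · refine Eq.mpr (congrArg (fun F => HasSum F _) (funext fun k => ?_)) (z3_odd.mul_left 2)
    have : (((2 * k + 1 : ℕ) : ℝ)) ≠ 0 := by positivity
    rw [int_w1 this, cos_odd, pow_succ, pow_mul]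
    field_simp
    norm_num

lemma y2L_eval : IntervalIntegrable (fun α => (Real.pi / 2 - α) ^ 2 * LL α) volume 0 (Real.pi / 2) ∧
    ∫ α in (0 : ℝ)..(Real.pi / 2), (Real.pi / 2 - α) ^ 2 * LL α = - (Real.pi / 4) * z3 := by
  refine ii_congr (((tame_Y le_rfl).mono pi_half_le_two (by norm_num)).series pi_half_nn pi_half_le_two
    (fun n => -(1 + (-1) ^ n) / n) coeff_bound2 Y_series (fun θ => (Real.pi / 2 - θ) ^ 2) (by fun_prop) ?_)
    (fun α hα => by rw [Y_re hα])
  have h := HasSum.even_add_odd (f := fun n : ℕ => (-(1 + (-1) ^ n) / n : ℝ) *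
    ∫ θ in (0 : ℝ)..(Real.pi / 2), (Real.pi / 2 - θ) ^ 2 * Real.cos (n * θ))
    (m := (-2 * Real.pi) * (z3 / 8)) (m' := 0) ?_ ?_
  · rw [show (-(Real.pi / 4) * z3) = (-2 * Real.pi) * (z3 / 8) + 0 by ring]; exact h
  · refine Eq.mpr (congrArg (fun F => HasSum F _) (funext fun k => ?_)) (z3_even.mul_left (-2 * Real.pi))
    rcases Nat.eq_zero_or_pos k with rfl | hk
    · simp
    have : (((2 * k : ℕ) : ℝ)) ≠ 0 := by positivity
    rw [int_w2 this, sin_even, pow_mul]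
    field_simp
    norm_num
    ring
  · refine Eq.mpr (congrArg (fun F => HasSum F _) (funext fun k => ?_)) hasSum_zero
    rw [pow_succ, pow_mul]; simp

lemma L_eval : IntervalIntegrable LL volume 0 (Real.pi / 2) ∧
    ∫ α in (0 : ℝ)..(Real.pi / 2), LL α = 0 := by
  refine ii_congr (((tame_Y le_rfl).mono pi_half_le_two (by norm_num)).series pi_half_nn pi_half_le_two
    (fun n => -(1 + (-1) ^ n) / n) coeff_bound2 Y_series (fun θ => 1) (by fun_prop) ?_)
    (fun α hα => by rw [Y_re hα, one_mul])
  refine Eq.mpr (congrArg (fun F => HasSum F _) (funext fun k => ?_)) hasSum_zero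
  rcases Nat.eq_zero_or_pos k with rfl | hk
  · simp
  have : ((k : ℕ) : ℝ) ≠ 0 := by positivity
  rw [int_w0 this]
  rcases Nat.even_or_odd' k with ⟨j, rfl | rfl⟩
  · rw [sin_even]; simp
  · rw [pow_succ, pow_mul]; simp

lemma arc_ii {f : ℂ → ℂ} (hf : Tame (Real.pi / 2) f 3) :
    IntervalIntegrable (fun θ : ℝ => f (Complex.exp (θ * Complex.I))) volume 0 (Real.pi / 2) := by
  simpa using (hf.dct pi_half_nn pi_half_le_two (fun _ => 1) continuous_const).1

lemma D_eval : IntervalIntegrable (fun x : ℝ => (Real.log (1 + x) - Real.log (1 - x)) / x) volume 0 1 ∧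
    ∫ x in (0 : ℝ)..1, (Real.log (1 + x) - Real.log (1 - x)) / x = Real.pi ^ 2 / 4 := by
  have hT := ((tame_X le_rfl).mono pi_half_le_two (by norm_num : 1 ≤ 3))
  obtain ⟨h1, h2⟩ := hT.quarter X_zero
  have h3 := congrArg Complex.re h2
  rw [int_re_zero (fun x _ => by rw [Complex.div_ofReal_re, X_imag, zero_div]), Complex.add_re, int_re h1,
    Complex.I_mul_re, int_im (arc_ii hT), (ii_congr ii_const (fun α hα => (X_im hα).symm)).2] at h3
  refine ii_congr ⟨ii_re h1, by linarith [h3]⟩ (fun x hx => ?_)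
  rw [uIoc_of_le zero_le_one] at hx
  rw [Complex.div_ofReal_re, X_real hx.1.le hx.2, Complex.ofReal_re]

lemma C2_eval : IntervalIntegrable (fun α => CC α ^ 2) volume 0 (Real.pi / 2) ∧
    ∫ α in (0 : ℝ)..(Real.pi / 2), CC α ^ 2 = Real.pi ^ 3 / 8 := by
  have hT := ((tame_X le_rfl).mul (tame_X le_rfl)).mono pi_half_le_two (by norm_num : 2 ≤ 3)
  obtain ⟨h1, h2⟩ := hT.quarter (by simp [X_zero])
  have h3 := congrArg Complex.im h2
  rw [int_im_zero (fun x _ => by rw [Complex.div_ofReal_im, Complex.mul_im, X_imag]; simp), Complex.add_im,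
    int_im_zero (a := 0) (b := 1) (fun x hx => ?_), Complex.I_mul_im, int_re (arc_ii hT), zero_add] at h3
  · refine ii_congr (ii_add ⟨ii_re (arc_ii hT), h3⟩ (ii_const (c := Real.pi ^ 2 / 4))) (fun x hx => ?_) |>.imp_right
      (fun h => h.trans (by ring))
    rw [Complex.mul_re, X_re hx, X_im hx]; ring
  · rw [uIoc_of_le zero_le_one] at hx
    rw [X_real hx.1.le hx.2, Complex.div_ofReal_im, ← Complex.ofReal_mul, Complex.ofReal_im, zero_div]

lemma C2L_eval : IntervalIntegrable (fun α => CC α ^ 2 * LL α) volume 0 (Real.pi / 2) ∧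
    ∫ α in (0 : ℝ)..(Real.pi / 2), CC α ^ 2 * LL α = - (7 / 4 * Real.pi) * z3 := by
  have hT := ((tame_X le_rfl).mul (tame_X le_rfl)).mul (tame_Y le_rfl)
  obtain ⟨h1, h2⟩ := hT.quarter (by simp [X_zero])
  have h3 := congrArg Complex.im h2
  rw [int_im_zero (fun x _ => by
      rw [Complex.div_ofReal_im, Complex.mul_im, Complex.mul_im, X_imag, Y_imag]; simp), Complex.add_im,
    int_im_zero (a := 0) (b := 1) (fun x hx => ?_), Complex.I_mul_im, int_re (arc_ii hT), zero_add] at h3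
  · refine ii_congr (ii_add ⟨ii_re (arc_ii hT), h3⟩ (ii_add (ii_mul (Real.pi ^ 2 / 4) L_eval)
      (ii_mul (-Real.pi) N3_eval))) (fun x hx => ?_) |>.imp_right
      (fun h => h.trans (by ring))
    rw [Complex.mul_re, Complex.mul_re, Complex.mul_im, X_re hx, X_im hx, Y_re hx, Y_im hx]; ring
  · rw [uIoc_of_le zero_le_one] at hx
    rw [X_real hx.1.le hx.2, Y_real hx.1.le hx.2, Complex.div_ofReal_im, ← Complex.ofReal_mul,
      ← Complex.ofReal_mul, Complex.ofReal_im, zero_div]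

lemma Q_eval : IntervalIntegrable (fun x : ℝ => (Real.log (1 + x) ^ 2 - Real.log (1 - x) ^ 2) / x) volume 0 1 ∧
    ∫ x in (0 : ℝ)..1, (Real.log (1 + x) ^ 2 - Real.log (1 - x) ^ 2) / x = - (7 / 4 * z3) := by
  have hT := ((tame_X le_rfl).mul (tame_Y le_rfl)).mono pi_half_le_two (by norm_num : 2 ≤ 3)
  obtain ⟨h1, h2⟩ := hT.quarter (by simp [X_zero])
  have h3 := congrArg Complex.re h2
  rw [int_re_zero (fun x _ => by rw [Complex.div_ofReal_re, Complex.mul_re, X_imag, Y_imag]; simp),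
    Complex.add_re, int_re h1, Complex.I_mul_re, int_im (arc_ii hT), (ii_congr (ii_add
      (ii_mul (-1) N3_eval) (ii_mul (Real.pi / 2) L_eval)) (fun x hx => ?_)).2] at h3
  · refine ii_congr ⟨ii_re h1, by linarith [h3]⟩ (fun x hx => ?_)
    rw [uIoc_of_le zero_le_one] at hx
    rw [Complex.div_ofReal_re, X_real hx.1.le hx.2, Y_real hx.1.le hx.2, ← Complex.ofReal_mul, Complex.ofReal_re]
    ring
  · rw [Complex.mul_im, X_re hx, X_im hx, Y_re hx, Y_im hx]; ring

lemma y2_eval : IntervalIntegrable (fun α : ℝ => (Real.pi / 2 - α) ^ 2) volume 0 (Real.pi / 2) ∧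
    ∫ α in (0 : ℝ)..(Real.pi / 2), (Real.pi / 2 - α) ^ 2 = Real.pi ^ 3 / 24 := by
  refine ⟨Continuous.intervalIntegrable (by fun_prop) _ _, ?_⟩
  rw [intervalIntegral.integral_comp_sub_left (fun x => x ^ 2)]
  simp; ring

def NN (α : ℝ) : ℝ := ((Real.pi / 2 - α) ^ 2 - CC α ^ 2) * (LL α - Real.log 2) +
  Real.pi * ((Real.pi / 2 - α) * CC α)

lemma N_eval : IntervalIntegrable NN volume 0 (Real.pi / 2) ∧
    ∫ α in (0 : ℝ)..(Real.pi / 2), NN α = Real.pi ^ 3 * Real.log 2 / 12 + 13 / 4 * Real.pi * z3 := by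
  refine ii_congr (ii_add (ii_add (ii_add y2L_eval (ii_mul (-Real.log 2) y2_eval))
    (ii_add (ii_mul (-1) C2L_eval) (ii_mul (Real.log 2) C2_eval))) (ii_mul Real.pi N3_eval))
      (fun x hx => ?_) |>.imp_right (fun h => h.trans (by ring))
  unfold NN; ring
end S17

set_option linter.unusedSimpArgs false
namespace S17
open MeasureTheory Filter Topology Set intervalIntegral

def HI (g : ℝ → ℝ) (a b S : ℝ) : Prop := IntervalIntegrable g volume a b ∧ ∫ x in a..b, g x = S

lemma subst_mono {a b S : ℝ} {f f' g : ℝ → ℝ} (hab : a ≤ b) (hc : ContinuousOn f (Icc a b))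
    (hd : ∀ x ∈ Ioo a b, HasDerivAt f (f' x) x) (hp : ∀ x ∈ Ioo a b, 0 < f' x) :
    HI g (f a) (f b) S ↔ HI (fun x => f' x * g (f x)) a b S := by
  have hm : StrictMonoOn f (Icc a b) := by
    apply strictMonoOn_of_deriv_pos (convex_Icc a b) hc
    intro x hx
    rw [interior_Icc] at hx
    rw [(hd x hx).deriv]; exact hp x hx
  have him : f '' Ioo a b = Ioo (f a) (f b) := by
    apply Subset.antisymm
    · rintro _ ⟨x, hx, rfl⟩
      exact ⟨hm ⟨le_rfl, hab⟩ ⟨hx.1.le, hx.2.le⟩ hx.1, hm ⟨hx.1.le, hx.2.le⟩ ⟨hab, le_rfl⟩ hx.2⟩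
    · exact intermediate_value_Ioo hab hc
  have hle : f a ≤ f b := hm.monotoneOn ⟨le_rfl, hab⟩ ⟨hab, le_rfl⟩ hab
  have hd' : ∀ x ∈ Ioo a b, HasDerivWithinAt f (f' x) (Ioo a b) x := fun x hx => (hd x hx).hasDerivWithinAt
  have hi : InjOn f (Ioo a b) := (hm.mono Ioo_subset_Icc_self).injOn
  have h1 := integrableOn_image_iff_integrableOn_abs_deriv_smul measurableSet_Ioo hd' hi g
  have h2 := integral_image_eq_integral_abs_deriv_smul measurableSet_Ioo hd' hi g
  have he : EqOn (fun x => |f' x| • g (f x)) (fun x => f' x * g (f x)) (Ioo a b) := by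
    intro x hx; simp [abs_of_pos (hp x hx)]
  rw [him, integrableOn_congr_fun he measurableSet_Ioo] at h1
  rw [him, setIntegral_congr_fun measurableSet_Ioo he] at h2
  unfold HI
  rw [intervalIntegrable_iff_integrableOn_Ioo_of_le hle, intervalIntegrable_iff_integrableOn_Ioo_of_le hab,
    intervalIntegral.integral_of_le hle, intervalIntegral.integral_of_le hab,
    integral_Ioc_eq_integral_Ioo, integral_Ioc_eq_integral_Ioo, h1, h2]

lemma HI_neg {a b S : ℝ} {g : ℝ → ℝ} : HI (fun x => g (-x)) (-b) (-a) S ↔ HI g a b S := by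
  unfold HI
  rw [intervalIntegral.integral_comp_neg (fun x => g x), neg_neg, neg_neg]
  refine and_congr_left fun _ => ⟨fun h => ?_, fun h => ?_⟩
  · rw [IntervalIntegrable.iff_comp_neg]; exact h.symm
  · have := (IntervalIntegrable.iff_comp_neg (by simp)).1 h
    exact this.symm

lemma subst_anti {a b S : ℝ} {f f' g : ℝ → ℝ} (hab : a ≤ b) (hc : ContinuousOn f (Icc a b))
    (hd : ∀ x ∈ Ioo a b, HasDerivAt f (-f' x) x) (hp : ∀ x ∈ Ioo a b, 0 < f' x) :
    HI g (f b) (f a) S ↔ HI (fun x => f' x * g (f x)) a b S := by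
  have := subst_mono (g := fun x => g (-x)) (S := S) (f := fun x => -f x) (f' := f') hab hc.neg
    (fun x hx => (hd x hx).neg.congr_deriv (neg_neg _)) hp
  simp only [neg_neg] at this
  rw [← this, HI_neg]

lemma HI.congr {a b S T : ℝ} {f g : ℝ → ℝ} (h : HI f a b S) (hab : a ≤ b)
    (hfg : ∀ x ∈ Ioo a b, f x = g x) (hST : S = T) : HI g a b T := by
  subst hST
  have hae : ∀ᵐ x : ℝ, x ∈ uIoc a b → f x = g x := by
    have : ∀ᵐ x : ℝ, x ≠ b := by simp [ae_iff]
    filter_upwards [this] with x hx hx'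
    rw [uIoc_of_le hab] at hx'
    exact hfg x ⟨hx'.1, lt_of_le_of_ne hx'.2 hx⟩
  refine ⟨h.1.congr_ae ?_, ?_⟩
  · rw [EventuallyEq, ae_restrict_iff' measurableSet_uIoc]; exact hae
  · rw [← h.2]; exact (intervalIntegral.integral_congr_ae hae).symm

lemma HI.add {a b S T : ℝ} {f g : ℝ → ℝ} (h : HI f a b S) (h' : HI g a b T) :
    HI (fun x => f x + g x) a b (S + T) := ii_add h h'
lemma HI.mul {a b S : ℝ} {f : ℝ → ℝ} (c : ℝ) (h : HI f a b S) :
    HI (fun x => c * f x) a b (c * S) := ii_mul c h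
lemma HI.trans {a b c S T : ℝ} {f : ℝ → ℝ} (h : HI f a b S) (h' : HI f b c T) :
    HI f a c (S + T) := ⟨h.1.trans h'.1, by
      rw [← h.2, ← h'.2, intervalIntegral.integral_add_adjacent_intervals h.1 h'.1]⟩

lemma quarter_re {f : ℂ → ℂ} {r : ℝ → ℝ} {k : ℕ} (hf : Tame (Real.pi / 2) f k) (hk : k ≤ 3) (h0 : f 0 = 0)
    (hr : ∀ x ∈ Ioo (0 : ℝ) 1, f x = r x) : ∃ S, HI (fun x => r x / x) 0 1 S := by
  have h := ii_re ((hf.mono pi_half_le_two hk).quarter h0).1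
  exact ⟨_, HI.congr ⟨h, rfl⟩ zero_le_one (fun x hx => by
    rw [hr x hx, Complex.div_ofReal_re, Complex.ofReal_re]) rfl⟩

/-- `∫_0^2 log^k y / (y-1)` -/
lemma log_int {k : ℕ} (S : ℝ) {A B : ℝ} (hp : HI (fun x => Real.log (1 + x) ^ k / x) 0 1 A)
    (hm : HI (fun x => Real.log (1 - x) ^ k / x) 0 1 B)
    (hS : ∫ x in (0 : ℝ)..1, (Real.log (1 + x) ^ k - Real.log (1 - x) ^ k) / x = S) :
    HI (fun y => Real.log y ^ k / (y - 1)) 0 2 S := by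
  have e : A + -1 * B = S := by
    rw [← hS, ← (hp.add (hm.mul (-1))).2]
    congr 1; ext x; ring
  have h1 := (subst_mono (g := fun y => Real.log y ^ k / (y - 1)) (S := A) (f := fun x => 1 + x)
    (f' := fun _ => 1) (zero_le_one' ℝ) (by fun_prop) (fun x _ => (hasDerivAt_id' x).const_add 1)
    (fun _ _ => one_pos)).2 (by simpa using hp)
  have h2 := (subst_anti (g := fun y => Real.log y ^ k / (y - 1)) (S := -1 * B) (f := fun x => 1 - x)
    (f' := fun _ => 1) (zero_le_one' ℝ) (by fun_prop) (fun x _ => (hasDerivAt_id' x).const_sub 1)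
    (fun _ _ => one_pos)).2 ((hm.mul (-1)).congr zero_le_one (fun x hx => by
      rw [show 1 - x - 1 = -x by ring, div_neg]; ring) rfl)
  norm_num at h1 h2
  have := h2.trans h1
  rw [← e]
  convert this using 1
  ring

lemma log_int1 : HI (fun y => Real.log y / (y - 1)) 0 2 (Real.pi ^ 2 / 4) := by
  obtain ⟨A, hA⟩ := quarter_re (r := fun x => Real.log (1 + x) ^ 1) (tame_log_add le_rfl) (by norm_num) (by simp)
    (fun x hx => by
      rw [pow_one, Complex.ofReal_log (by linarith [hx.1])]; push_cast; rfl)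
  obtain ⟨B, hB⟩ := quarter_re (r := fun x => Real.log (1 - x) ^ 1) (tame_log_sub le_rfl) (by norm_num) (by simp)
    (fun x hx => by
      rw [pow_one, Complex.ofReal_log (by linarith [hx.2])]; push_cast; rfl)
  simpa using log_int _ hA hB (by simpa using D_eval.2)

lemma log_int2 : HI (fun y => Real.log y ^ 2 / (y - 1)) 0 2 (-(7 / 4 * z3)) := by
  obtain ⟨A, hA⟩ := quarter_re (r := fun x => Real.log (1 + x) ^ 2)
    ((tame_log_add le_rfl).mul (tame_log_add le_rfl)) (by norm_num) (by simp)
    (fun x hx => by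
      push_cast
      rw [Complex.ofReal_log (by linarith [hx.1])]; push_cast; ring)
  obtain ⟨B, hB⟩ := quarter_re (r := fun x => Real.log (1 - x) ^ 2)
    ((tame_log_sub le_rfl).mul (tame_log_sub le_rfl)) (by norm_num) (by simp)
    (fun x hx => by
      push_cast
      rw [Complex.ofReal_log (by linarith [hx.2])]; push_cast; ring)
  exact log_int _ hA hB Q_eval.2
end S17

set_option linter.unusedSimpArgs false
namespace S17
open MeasureTheory Filter Topology Set intervalIntegral

lemma HI.split {a b c S : ℝ} {f : ℝ → ℝ} (h : HI f a c S) (hab : a ≤ b) (hbc : b ≤ c) :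
    ∃ T U, HI f a b T ∧ HI f b c U ∧ T + U = S := by
  have h1 : IntervalIntegrable f volume a b := h.1.mono_set (by
    rw [uIcc_of_le hab, uIcc_of_le (hab.trans hbc)]; exact Icc_subset_Icc_right hbc)
  have h2 : IntervalIntegrable f volume b c := h.1.mono_set (by
    rw [uIcc_of_le hbc, uIcc_of_le (hab.trans hbc)]; exact Icc_subset_Icc_left hab)
  exact ⟨_, _, ⟨h1, rfl⟩, ⟨h2, rfl⟩, by
    rw [← h.2, intervalIntegral.integral_add_adjacent_intervals h1 h2]⟩

def hh (r : ℝ) : ℝ := Real.log r ^ 2 - Real.log 2 * Real.log r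

lemma sqrt2 : (0:ℝ) ≤ √2 ∧ √2 ≤ 2 := ⟨by positivity, by
  rw [Real.sqrt_le_left (by norm_num)]; norm_num⟩

lemma h_split : ∃ T U, HI (fun r => hh r / (1 + r)) 0 (√2) T ∧ HI (fun r => hh r / (r - 1)) (√2) 2 U ∧
    T - U = 21 / 16 * z3 + Real.pi ^ 2 * Real.log 2 / 8 := by
  have H1 : HI (fun r => hh r / (r - 1)) 0 2 (-(7 / 4 * z3) + (-Real.log 2) * (Real.pi ^ 2 / 4)) :=
    (log_int2.add (log_int1.mul (-Real.log 2))).congr (by norm_num)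
      (fun x _ => by unfold hh; ring) rfl
  have H2 : HI (fun y => (1 / 4 * Real.log y ^ 2 - Real.log 2 / 2 * Real.log y) / (y - 1)) 0 2
      (1 / 4 * (-(7 / 4 * z3)) + (-Real.log 2 / 2) * (Real.pi ^ 2 / 4)) :=
    ((log_int2.mul (1 / 4)).add (log_int1.mul (-Real.log 2 / 2))).congr (by norm_num)
      (fun x _ => by ring) rfl
  have H3 := (subst_mono (f := fun r : ℝ => r ^ 2) (f' := fun r => 2 * r) (a := 0) (b := √2)
    (S := 1 / 4 * (-(7 / 4 * z3)) + (-Real.log 2 / 2) * (Real.pi ^ 2 / 4))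
    (g := fun y => (1 / 4 * Real.log y ^ 2 - Real.log 2 / 2 * Real.log y) / (y - 1)) sqrt2.1
    (by fun_prop) (fun x _ => by simpa using hasDerivAt_pow 2 x) (fun x hx => by linarith [hx.1])).1
    (by simpa using H2)
  obtain ⟨T, U, hT, hU, hTU⟩ := H1.split sqrt2.1 sqrt2.2
  refine ⟨_, _, (H3.add (hT.mul (-1))).congr sqrt2.1 (fun r hr => ?_) rfl, hU, by linarith⟩
  rw [Real.log_pow]
  rcases eq_or_ne r 1 with rfl | h1
  · simp [hh]
  have h2 : r - 1 ≠ 0 := sub_ne_zero.2 h1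
  have h3 : 1 + r ≠ 0 := by linarith [hr.1]
  have h4 : r ^ 2 - 1 = (r - 1) * (1 + r) := by ring
  rw [h4]; unfold hh; push_cast
  field_simp
  ring

lemma tan8 : Real.tan (Real.pi / 8) + 1 = √2 ∧ Real.tan (3 * Real.pi / 8) - 1 = √2 := by
  have hp := Real.pi_pos
  have h0 : 0 < Real.tan (Real.pi / 8) := Real.tan_pos_of_pos_of_lt_pi_div_two (by linarith) (by linarith)
  have h1 : Real.tan (2 * (Real.pi / 8)) = 1 := by rw [← Real.tan_pi_div_four]; congr 1; ring
  rw [Real.tan_two_mul] at h1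
  have h2 : (1 - Real.tan (Real.pi / 8) ^ 2) ≠ 0 := by
    intro h; rw [h] at h1; simp at h1
  rw [div_eq_one_iff_eq h2] at h1
  have h3 : Real.tan (Real.pi / 8) + 1 = √2 := by
    symm; rw [Real.sqrt_eq_iff_mul_self_eq (by norm_num) (by linarith)]
    nlinarith
  refine ⟨h3, ?_⟩
  have h4 : Real.tan (3 * Real.pi / 8) = (Real.tan (Real.pi / 8))⁻¹ := by
    rw [← Real.tan_pi_div_two_sub]; congr 1; ring
  rw [h4, ← h3, sub_eq_iff_eq_add, inv_eq_iff_eq_inv]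
  field_simp
  nlinarith

def RR (ψ : ℝ) : ℝ := Real.log (2 * Real.cos (ψ / 2 + Real.pi / 4)) + Real.log (2 * Real.cos (ψ / 2))
  - Real.log (2 * Real.cos (ψ / 2 - Real.pi / 4)) - Real.log (2 * Real.sin (ψ / 2))
def RS (ψ : ℝ) : ℝ := Real.log (2 * Real.cos (ψ / 2 + Real.pi / 4)) - Real.log (2 * Real.cos (ψ / 2))
  + Real.log (2 * Real.cos (ψ / 2 - Real.pi / 4)) - Real.log (2 * Real.sin (ψ / 2))

lemma hasDeriv_tan_half {x : ℝ} (h : Real.cos (Real.pi / 4 + x / 2) ≠ 0) :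
    HasDerivAt (fun ψ => Real.tan (Real.pi / 4 + ψ / 2) - 1) (1 / (2 * Real.cos (Real.pi / 4 + x / 2) ^ 2)) x := by
  have h1 := (((hasDerivAt_id' x).div_const 2).const_add (Real.pi / 4))
  have h2 := ((Real.hasDerivAt_tan h).comp x h1).sub_const 1
  exact h2.congr_deriv (by field_simp)

lemma hasDeriv_tan_half' {x : ℝ} (h : Real.cos (Real.pi / 4 - x / 2) ≠ 0) :
    HasDerivAt (fun ψ => Real.tan (Real.pi / 4 - ψ / 2) + 1) (-(1 / (2 * Real.cos (Real.pi / 4 - x / 2) ^ 2))) x := by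
  have h1 := (((hasDerivAt_id' x).div_const 2).const_sub (Real.pi / 4))
  have h2 := ((Real.hasDerivAt_tan h).comp x h1).add_const 1
  exact h2.congr_deriv (by field_simp)

lemma M_eval : HI (fun ψ => RR ψ * RS ψ / Real.cos ψ) 0 (Real.pi / 4)
    (21 / 16 * z3 + Real.pi ^ 2 * Real.log 2 / 8) := by
  have hp := Real.pi_pos
  have c1 : ∀ x ∈ Icc 0 (Real.pi / 4), 0 < Real.cos (Real.pi / 4 + x / 2) := fun x hx =>
    Real.cos_pos_of_mem_Ioo ⟨by linarith [hx.1], by linarith [hx.2]⟩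
  have c2 : ∀ x ∈ Icc 0 (Real.pi / 4), 0 < Real.cos (Real.pi / 4 - x / 2) := fun x hx =>
    Real.cos_pos_of_mem_Ioo ⟨by linarith [hx.2], by linarith [hx.1]⟩
  obtain ⟨T, U, hT, hU, hTU⟩ := h_split
  have K1 := (subst_mono (f := fun ψ => Real.tan (Real.pi / 4 + ψ / 2) - 1) (a := 0) (b := Real.pi / 4)
    (f' := fun x => 1 / (2 * Real.cos (Real.pi / 4 + x / 2) ^ 2)) (S := T)
    (g := fun r => hh r / (1 + r)) (by positivity)
    (fun x hx => (hasDeriv_tan_half (c1 x hx).ne').continuousAt.continuousWithinAt)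
    (fun x hx => hasDeriv_tan_half (c1 x (Ioo_subset_Icc_self hx)).ne')
    (fun x hx => by have := c1 x (Ioo_subset_Icc_self hx); positivity)).1 (by
      rw [show Real.pi / 4 + Real.pi / 4 / 2 = 3 * Real.pi / 8 by ring, tan8.2]
      simpa using hT)
  have K2 := (subst_anti (f := fun ψ => Real.tan (Real.pi / 4 - ψ / 2) + 1) (a := 0) (b := Real.pi / 4)
    (f' := fun x => 1 / (2 * Real.cos (Real.pi / 4 - x / 2) ^ 2)) (S := U)
    (g := fun r => hh r / (r - 1)) (by positivity)
    (fun x hx => (hasDeriv_tan_half' (c2 x hx).ne').continuousAt.continuousWithinAt)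
    (fun x hx => hasDeriv_tan_half' (c2 x (Ioo_subset_Icc_self hx)).ne')
    (fun x hx => by have := c2 x (Ioo_subset_Icc_self hx); positivity)).1 (by
      rw [show Real.pi / 4 - Real.pi / 4 / 2 = Real.pi / 8 by ring, tan8.1]
      norm_num
      exact hU)
  refine (K1.add (K2.mul (-1))).congr (by positivity) (fun x hx => ?_) (by linarith)
  have d1 := c1 x (Ioo_subset_Icc_self hx)
  have d2 := c2 x (Ioo_subset_Icc_self hx)
  have d3 : 0 < Real.cos (x / 2) := Real.cos_pos_of_mem_Ioo ⟨by linarith [hx.1], by linarith [hx.2]⟩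
  have d4 : 0 < Real.sin (x / 2) := Real.sin_pos_of_pos_of_lt_pi (by linarith [hx.1]) (by linarith [hx.2])
  have q2 : 0 < √2 := by positivity
  have e1 : Real.tan (Real.pi / 4 + x / 2) - 1 = √2 * Real.sin (x / 2) / Real.cos (Real.pi / 4 + x / 2) := by
    rw [Real.tan_eq_sin_div_cos, eq_div_iff d1.ne', sub_mul, div_mul_cancel₀ _ d1.ne', one_mul]
    rw [Real.sin_add, Real.cos_add, Real.sin_pi_div_four, Real.cos_pi_div_four]; ring
  have e2 : Real.tan (Real.pi / 4 - x / 2) + 1 = √2 * Real.cos (x / 2) / Real.cos (Real.pi / 4 - x / 2) := by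
    rw [Real.tan_eq_sin_div_cos, eq_div_iff d2.ne', add_mul, div_mul_cancel₀ _ d2.ne', one_mul]
    rw [Real.sin_sub, Real.cos_sub, Real.sin_pi_div_four, Real.cos_pi_div_four]; ring
  have s1 : Real.cos (x / 2 + Real.pi / 4) = Real.cos (Real.pi / 4 + x / 2) := by rw [add_comm]
  have s2 : Real.cos (x / 2 - Real.pi / 4) = Real.cos (Real.pi / 4 - x / 2) := by
    rw [← Real.cos_neg, neg_sub]
  have t1 : Real.sin (Real.pi / 4 + x / 2) = Real.cos (Real.pi / 4 - x / 2) := by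
    rw [← Real.cos_pi_div_two_sub]; congr 1; ring
  have t2 : Real.sin (Real.pi / 4 - x / 2) = Real.cos (Real.pi / 4 + x / 2) := by
    rw [← Real.cos_pi_div_two_sub]; congr 1; ring
  have t3 : Real.cos x = 2 * Real.cos (Real.pi / 4 - x / 2) * Real.cos (Real.pi / 4 + x / 2) := by
    rw [← t1, ← Real.sin_two_mul, ← Real.sin_pi_div_two_sub, ← Real.sin_pi_sub]; congr 1; ring
  have w1 : 1 / (2 * Real.cos (Real.pi / 4 + x / 2) ^ 2) * (1 / (1 + (Real.tan (Real.pi / 4 + x / 2) - 1)))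
      = 1 / Real.cos x := by
    rw [Real.tan_eq_sin_div_cos, t1, t3, add_sub_cancel]; field_simp
  have w2 : 1 / (2 * Real.cos (Real.pi / 4 - x / 2) ^ 2) * (1 / ((Real.tan (Real.pi / 4 - x / 2) + 1) - 1))
      = 1 / Real.cos x := by
    rw [Real.tan_eq_sin_div_cos, t2, t3, add_sub_cancel_right]; field_simp
  have l2 : Real.log (√2) = Real.log 2 / 2 := Real.log_sqrt (by norm_num)
  have L1 : Real.log (Real.tan (Real.pi / 4 + x / 2) - 1) = Real.log 2 / 2 + Real.log (Real.sin (x / 2))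
      - Real.log (Real.cos (Real.pi / 4 + x / 2)) := by
    rw [e1, Real.log_div (by positivity) (by positivity), Real.log_mul (by positivity) (by positivity), l2]
  have L2 : Real.log (Real.tan (Real.pi / 4 - x / 2) + 1) = Real.log 2 / 2 + Real.log (Real.cos (x / 2))
      - Real.log (Real.cos (Real.pi / 4 - x / 2)) := by
    rw [e2, Real.log_div (by positivity) (by positivity), Real.log_mul (by positivity) (by positivity), l2]
  have r1 : RR x = -(Real.log (Real.tan (Real.pi / 4 + x / 2) - 1) - Real.log (Real.tan (Real.pi / 4 - x / 2) + 1)) := by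
    unfold RR
    rw [L1, L2, s1, s2, Real.log_mul two_ne_zero d1.ne', Real.log_mul two_ne_zero d2.ne',
      Real.log_mul two_ne_zero d3.ne', Real.log_mul two_ne_zero d4.ne']; ring
  have r2 : RS x = -(Real.log (Real.tan (Real.pi / 4 + x / 2) - 1) + Real.log (Real.tan (Real.pi / 4 - x / 2) + 1)
      - Real.log 2) := by
    unfold RS
    rw [L1, L2, s1, s2, Real.log_mul two_ne_zero d1.ne', Real.log_mul two_ne_zero d2.ne',
      Real.log_mul two_ne_zero d3.ne', Real.log_mul two_ne_zero d4.ne']; ring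
  rw [r1, r2]
  calc _ = hh (Real.tan (Real.pi / 4 + x / 2) - 1) *
        (1 / (2 * Real.cos (Real.pi / 4 + x / 2) ^ 2) * (1 / (1 + (Real.tan (Real.pi / 4 + x / 2) - 1))))
      - hh (Real.tan (Real.pi / 4 - x / 2) + 1) *
        (1 / (2 * Real.cos (Real.pi / 4 - x / 2) ^ 2) * (1 / ((Real.tan (Real.pi / 4 - x / 2) + 1) - 1))) := by ring
    _ = _ := by rw [w1, w2]; unfold hh; ring
end S17

set_option linter.unusedSimpArgs false
namespace S17
open MeasureTheory Filter Topology Set intervalIntegral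

def VV (w : ℂ) : ℂ := -Complex.I * (Complex.log (1 + Complex.I * w) + Complex.log (1 + w)
  - Complex.log (1 - Complex.I * w) - Complex.log (1 - w))
def BB (w : ℂ) : ℂ := (Real.pi : ℂ) / 2 + Complex.I * (Complex.log (1 + Complex.I * w) - Complex.log (1 + w)
  + Complex.log (1 - Complex.I * w) - Complex.log (1 - w))
def KK (w : ℂ) : ℂ := -2 * Complex.I / (1 + w ^ 2)
def GG (w : ℂ) : ℂ := VV w * VV w * BB w * KK w

lemma re_pt {ρ θ : ℝ} (hθ : θ ∈ Icc 0 (Real.pi / 4)) :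
    1 ≤ ‖1 + ((ρ : ℂ) * Complex.exp (θ * Complex.I)) ^ 2‖ := by
  have h : ((ρ : ℂ) * Complex.exp (θ * Complex.I)) ^ 2 = ((ρ ^ 2 : ℝ) : ℂ) * Complex.exp (((2 * θ : ℝ) : ℂ) * Complex.I) := by
    rw [mul_pow, ← Complex.exp_nat_mul]; push_cast; ring_nf
  have hc : 0 ≤ Real.cos (2 * θ) := Real.cos_nonneg_of_mem_Icc
    ⟨by linarith [hθ.1, Real.pi_pos], by linarith [hθ.2]⟩
  calc (1:ℝ) ≤ (1 + ((ρ : ℂ) * Complex.exp (θ * Complex.I)) ^ 2).re := by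
        rw [h, Complex.add_re, Complex.re_ofReal_mul, Complex.exp_ofReal_mul_I_re, Complex.one_re]
        nlinarith [mul_nonneg (sq_nonneg ρ) hc]
    _ ≤ _ := Complex.re_le_norm _

lemma KK_bound {ρ θ : ℝ} (hθ : θ ∈ Icc 0 (Real.pi / 4)) : ‖KK (ρ * Complex.exp (θ * Complex.I))‖ ≤ 2 := by
  unfold KK
  have := re_pt (ρ := ρ) hθ
  rw [norm_div, div_le_iff₀ (by linarith)]
  simp; linarith

lemma tame_KK : Tame (Real.pi / 4) KK 0 := by
  refine ⟨?_, ?_, ⟨2, by norm_num, fun ρ _ θ hθ => ?_⟩, ⟨2, by norm_num, fun ρ _ θ hθ => ?_⟩⟩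
  · intro w hw
    have : 1 + w ^ 2 ≠ 0 := by
      intro h
      have h2 : w ^ 2 = -1 := by linear_combination h
      have h3 : ‖w‖ ^ 2 = 1 := by rw [← norm_pow, h2]; simp
      rw [mem_ball_zero_iff] at hw
      nlinarith [norm_nonneg w]
    unfold KK
    exact DifferentiableAt.differentiableWithinAt (by fun_prop (disch := exact this))
  · intro θ hθ
    have h := re_pt (ρ := 1) ⟨hθ.1.le, hθ.2⟩
    have : 1 + (Complex.exp (θ * Complex.I)) ^ 2 ≠ 0 := by
      intro h'; rw [Complex.ofReal_one, one_mul, h', norm_zero] at h; linarith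
    unfold KK
    fun_prop (disch := exact this)
  · simpa using KK_bound (ρ := ρ) ⟨hθ.1.le, hθ.2⟩
  · simpa using KK_bound (ρ := ρ) hθ

lemma pi4 : Real.pi / 4 ≤ Real.pi / 2 := by linarith [Real.pi_pos]
lemma pi4' : Real.pi / 4 ≤ 2 := by linarith [Real.pi_le_four]

lemma Tame.sub' {b : ℝ} {f g : ℂ → ℂ} {k : ℕ} (hf : Tame b f k) (hg : Tame b g k) :
    Tame b (fun w => f w - g w) k := by
  have h := (Tame.const b (-1)).mul hg
  rw [zero_add] at h
  simpa [sub_eq_add_neg] using hf.add h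

lemma tame_VV : Tame (Real.pi / 4) VV 1 := by
  have h := ((((tame_log_sub_I le_rfl).add (tame_log_add pi4)).sub' (tame_log_add_I pi4)).sub' (tame_log_sub pi4))
  have h2 := (Tame.const _ (-Complex.I)).mul h
  rw [zero_add] at h2
  exact h2

lemma tame_BB : Tame (Real.pi / 4) BB 1 := by
  have h := ((((tame_log_sub_I le_rfl).sub' (tame_log_add pi4)).add (tame_log_add_I pi4)).sub' (tame_log_sub pi4))
  have h2 := (Tame.const _ Complex.I).mul h
  rw [zero_add] at h2
  exact ((Tame.const _ ((Real.pi : ℂ) / 2)).mono pi4' (zero_le_one)).add h2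

lemma tame_GG : Tame (Real.pi / 4) GG 3 := ((tame_VV.mul tame_VV).mul tame_BB).mul tame_KK

lemma VV_arc {ψ : ℝ} (h0 : 0 < ψ) (h1 : ψ ≤ Real.pi / 4) :
    VV (Complex.exp (ψ * Complex.I)) = (Real.pi : ℂ) - Complex.I * (RR ψ : ℂ) ∧
    BB (Complex.exp (ψ * Complex.I)) = Complex.I * (RS ψ : ℂ) := by
  have hp := Real.pi_pos
  have l1 := log_one_add_exp (θ := ψ + Real.pi / 2) (by linarith) (by linarith)
  have l3 := log_one_add_exp (θ := ψ - Real.pi / 2) (by linarith) (by linarith)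
  have l2 := log_one_add_exp (θ := ψ) (by linarith) (by linarith)
  have l4 := log_one_sub_exp (θ := ψ) (by linarith) (by linarith)
  have e1 : Complex.exp (((ψ + Real.pi / 2 : ℝ) : ℂ) * Complex.I) = Complex.I * Complex.exp (ψ * Complex.I) := by
    push_cast
    rw [add_mul, Complex.exp_add, Complex.exp_pi_div_two_mul_I]; ring
  have e3 : Complex.exp (((ψ - Real.pi / 2 : ℝ) : ℂ) * Complex.I) = -(Complex.I * Complex.exp (ψ * Complex.I)) := by
    push_cast
    rw [sub_mul, Complex.exp_sub, Complex.exp_pi_div_two_mul_I, Complex.div_I]; ring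
  rw [e1, show (ψ + Real.pi / 2) / 2 = ψ / 2 + Real.pi / 4 by ring] at l1
  rw [e3, ← sub_eq_add_neg, show (ψ - Real.pi / 2) / 2 = ψ / 2 - Real.pi / 4 by ring] at l3
  unfold VV BB RR RS
  rw [l1, l2, l3, l4]
  push_cast
  constructor <;> ring_nf <;> rw [Complex.I_sq] <;> ring

lemma arc_re {ψ : ℝ} (h0 : 0 < ψ) (h1 : ψ ≤ Real.pi / 4) :
    (Complex.I * (Complex.exp (ψ * Complex.I) * GG (Complex.exp (ψ * Complex.I)))).re =
      2 * Real.pi * (RR ψ * RS ψ / Real.cos ψ) := by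
  have hc : 0 < Real.cos ψ := Real.cos_pos_of_mem_Ioo ⟨by linarith [Real.pi_pos], by linarith [Real.pi_pos]⟩
  have hk : Complex.I * (Complex.exp (ψ * Complex.I) * KK (Complex.exp (ψ * Complex.I))) = ((1 / Real.cos ψ : ℝ) : ℂ) := by
    have h2 := Complex.two_cos (ψ : ℂ)
    have h3 : Complex.exp (-(ψ : ℂ) * Complex.I) * Complex.exp (ψ * Complex.I) = 1 := by
      rw [← Complex.exp_add]; simp
    have hc' : (Complex.cos ψ) ≠ 0 := by rw [← Complex.ofReal_cos]; exact_mod_cast hc.ne'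
    have h4 : 1 + Complex.exp (ψ * Complex.I) ^ 2 = 2 * Complex.cos ψ * Complex.exp (ψ * Complex.I) := by
      rw [h2]; linear_combination -h3
    unfold KK
    rw [h4]
    push_cast
    have := Complex.exp_ne_zero (ψ * Complex.I)
    field_simp
    rw [Complex.I_sq, neg_neg]
  unfold GG
  obtain ⟨hV, hB⟩ := VV_arc h0 h1
  rw [hV, hB]
  have : Complex.I * (Complex.exp (ψ * Complex.I) * (((Real.pi : ℂ) - Complex.I * (RR ψ : ℂ)) *
      ((Real.pi : ℂ) - Complex.I * (RR ψ : ℂ)) * (Complex.I * (RS ψ : ℂ)) * KK (Complex.exp (ψ * Complex.I)))) =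
    ((Real.pi : ℂ) - Complex.I * (RR ψ : ℂ)) *
      ((Real.pi : ℂ) - Complex.I * (RR ψ : ℂ)) * (Complex.I * (RS ψ : ℂ)) *
      (Complex.I * (Complex.exp (ψ * Complex.I) * KK (Complex.exp (ψ * Complex.I)))) := by ring
  rw [this, hk, Complex.re_mul_ofReal]
  simp
  ring

lemma arctan_mem {x : ℝ} (hx : x ∈ Ioo (0:ℝ) 1) : 0 < Real.arctan x ∧ Real.arctan x < Real.pi / 4 :=
  ⟨Real.arctan_pos.2 hx.1, by rw [← Real.arctan_one]; exact Real.arctan_strictMono hx.2⟩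

lemma log_I (x : ℝ) : Complex.log (1 + Complex.I * x) =
    ((-Real.log (Real.cos (Real.arctan x)) : ℝ) : ℂ) + (Real.arctan x : ℂ) * Complex.I := by
  have hc := Real.cos_arctan_pos x
  have ht : Real.sin (Real.arctan x) = x * Real.cos (Real.arctan x) := by
    conv_rhs => rw [← Real.tan_arctan x, Real.arctan_tan (Real.neg_pi_div_two_lt_arctan x) (Real.arctan_lt_pi_div_two x)]
    exact (Real.tan_mul_cos hc.ne').symm
  have h : 1 + Complex.I * x = Complex.exp (((-Real.log (Real.cos (Real.arctan x)) : ℝ) : ℂ) + (Real.arctan x : ℂ) * Complex.I) := by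
    rw [Complex.exp_add, ← Complex.ofReal_exp, Real.exp_neg, Real.exp_log hc, Complex.exp_ofReal_mul_I, ht]
    have : (Real.cos (Real.arctan x) : ℂ) ≠ 0 := by exact_mod_cast hc.ne'
    push_cast at this ⊢
    field_simp
  rw [h, Complex.log_exp]
  · rw [Complex.add_im, Complex.ofReal_im, Complex.im_ofReal_mul, Complex.I_im]
    linarith [Real.neg_pi_div_two_lt_arctan x, Real.pi_pos]
  · rw [Complex.add_im, Complex.ofReal_im, Complex.im_ofReal_mul, Complex.I_im]
    linarith [Real.arctan_lt_pi_div_two x, Real.pi_pos]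

lemma ray_re {x : ℝ} (hx : x ∈ Ioo (0:ℝ) 1) :
    (GG x).re = -1 * (2 / (1 + x ^ 2) * NN (Real.pi / 2 - 2 * Real.arctan x)) := by
  have hc := Real.cos_arctan_pos x
  have l1 := log_I x
  have l3 : Complex.log (1 - Complex.I * x) =
    ((-Real.log (Real.cos (Real.arctan x)) : ℝ) : ℂ) - (Real.arctan x : ℂ) * Complex.I := by
    have := log_I (-x)
    rw [Real.arctan_neg, Real.cos_neg] at this
    push_cast at this ⊢
    rw [mul_neg, ← sub_eq_add_neg] at this
    rw [this]; ring
  have l2 : Complex.log (1 + x) = (Real.log (1 + x) : ℂ) := by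
    rw [Complex.ofReal_log (by linarith [hx.1])]; push_cast; rfl
  have l4 : Complex.log (1 - x) = (Real.log (1 - x) : ℂ) := by
    rw [Complex.ofReal_log (by linarith [hx.2])]; push_cast; rfl
  have ht : Real.sin (Real.arctan x) = x * Real.cos (Real.arctan x) := by
    conv_rhs => rw [← Real.tan_arctan x, Real.arctan_tan (Real.neg_pi_div_two_lt_arctan x) (Real.arctan_lt_pi_div_two x)]
    exact (Real.tan_mul_cos hc.ne').symm
  have q2 : 0 < √2 := by positivity
  have ea : (Real.pi / 2 - 2 * Real.arctan x) / 2 = Real.pi / 4 - Real.arctan x := by ring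
  have c1 : 2 * Real.cos ((Real.pi / 2 - 2 * Real.arctan x) / 2) = √2 * (Real.cos (Real.arctan x) * (1 + x)) := by
    rw [ea, Real.cos_sub, ht, Real.sin_pi_div_four, Real.cos_pi_div_four]; ring
  have c2 : 2 * Real.sin ((Real.pi / 2 - 2 * Real.arctan x) / 2) = √2 * (Real.cos (Real.arctan x) * (1 - x)) := by
    rw [ea, Real.sin_sub, ht, Real.sin_pi_div_four, Real.cos_pi_div_four]; ring
  have lq : Real.log (√2) = Real.log 2 / 2 := Real.log_sqrt (by norm_num)
  have x1 : 1 + x ≠ 0 := by linarith [hx.1]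
  have x2 : 1 - x ≠ 0 := by linarith [hx.2]
  have m1 : Real.log (√2 * (Real.cos (Real.arctan x) * (1 + x))) =
      Real.log 2 / 2 + (Real.log (Real.cos (Real.arctan x)) + Real.log (1 + x)) := by
    rw [Real.log_mul q2.ne' (mul_ne_zero hc.ne' x1), Real.log_mul hc.ne' x1, lq]
  have m2 : Real.log (√2 * (Real.cos (Real.arctan x) * (1 - x))) =
      Real.log 2 / 2 + (Real.log (Real.cos (Real.arctan x)) + Real.log (1 - x)) := by
    rw [Real.log_mul q2.ne' (mul_ne_zero hc.ne' x2), Real.log_mul hc.ne' x2, lq]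
  have hK : KK x = ((2 / (1 + x ^ 2) : ℝ) : ℂ) * (-Complex.I) := by
    unfold KK; push_cast; ring
  unfold GG VV BB NN CC LL
  rw [hK, l1, l2, l3, l4, c1, c2, m1, m2]
  generalize Real.log (1 + x) = A
  generalize Real.log (1 - x) = B
  generalize Real.log (Real.cos (Real.arctan x)) = C
  generalize Real.arctan x = a
  generalize 2 / (1 + x ^ 2) = k
  have : (-Complex.I * (((-C : ℝ) : ℂ) + a * Complex.I + A - (((-C : ℝ) : ℂ) - a * Complex.I) - B)) =
    ((2 * a : ℝ) : ℂ) + ((B - A : ℝ) : ℂ) * Complex.I := by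
    push_cast; ring_nf; rw [Complex.I_sq]; ring
  rw [this]
  have : ((Real.pi : ℂ) / 2 + Complex.I * (((-C : ℝ) : ℂ) + a * Complex.I - A + (((-C : ℝ) : ℂ) - a * Complex.I) - B)) =
    ((Real.pi / 2 : ℝ) : ℂ) + ((-2 * C - A - B : ℝ) : ℂ) * Complex.I := by
    push_cast; ring_nf
  rw [this]
  simp only [Complex.mul_re, Complex.mul_im, Complex.add_re, Complex.add_im, Complex.ofReal_re, Complex.ofReal_im,
    Complex.I_re, Complex.I_im, Complex.neg_re, Complex.neg_im]
  ring

lemma Kint_re : (∫ x in (0:ℝ)..1, GG (x * Complex.exp (((Real.pi / 4 : ℝ) : ℂ) * Complex.I)) *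
    Complex.exp (((Real.pi / 4 : ℝ) : ℂ) * Complex.I)).re =
    Real.pi ^ 3 * Real.log 2 / 6 - 5 / 8 * Real.pi * z3 := by
  have hp4 : (0 : ℝ) ≤ Real.pi / 4 := by positivity
  rw [← tame_GG.sector hp4 pi4', ← intervalIntegral.integral_const_mul, Complex.add_re]
  have i1 := tame_GG.intable (θ := 0) ⟨le_rfl, hp4⟩
  simp only [Complex.ofReal_zero, zero_mul, Complex.exp_zero, mul_one] at i1
  have i2 := ((tame_GG.dct hp4 pi4' (fun θ => Complex.exp (θ * Complex.I)) (by fun_prop)).1).const_mul Complex.I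
  rw [int_re i1, int_re i2]
  have h1 := (subst_anti (f := fun x => Real.pi / 2 - 2 * Real.arctan x) (f' := fun x => 2 / (1 + x ^ 2)) (a := 0) (b := 1)
    (g := NN) (S := Real.pi ^ 3 * Real.log 2 / 12 + 13 / 4 * Real.pi * z3) zero_le_one
    (by have := Real.continuous_arctan; fun_prop)
    (fun x _ => by
      have := ((Real.hasDerivAt_arctan x).const_mul 2).const_sub (Real.pi / 2)
      exact this.congr_deriv (by ring)) (fun x _ => by positivity)).1 (by
      rw [Real.arctan_one, Real.arctan_zero, show Real.pi / 2 - 2 * (Real.pi / 4) = 0 by ring,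
        mul_zero, sub_zero]
      exact N_eval)
  rw [((h1.mul (-1)).congr zero_le_one (fun x hx => (ray_re hx).symm) rfl).2,
    ((M_eval.mul (2 * Real.pi)).congr hp4 (fun x hx => (arc_re hx.1 hx.2.le).symm) rfl).2]
  ring
end S17

namespace S17
open MeasureTheory Filter Topology Set intervalIntegral

def pp : ℂ := Complex.exp (((Real.pi / 4 : ℝ) : ℂ) * Complex.I)

lemma pp_eq : pp = ((√2 / 2 : ℝ) : ℂ) + ((√2 / 2 : ℝ) : ℂ) * Complex.I := by
  unfold pp
  rw [Complex.exp_ofReal_mul_I, Real.cos_pi_div_four, Real.sin_pi_div_four]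

lemma sq2 : ((√2 : ℝ) : ℂ) ^ 2 = 2 := by
  rw [← Complex.ofReal_pow, Real.sq_sqrt (by norm_num)]; norm_num

lemma pp_sq : pp ^ 2 = Complex.I := by
  unfold pp
  rw [← Complex.exp_nat_mul]
  exact (congrArg Complex.exp (by push_cast; ring)).trans Complex.exp_pi_div_two_mul_I

lemma pp_conj : (starRingEnd ℂ) pp = -Complex.I * pp := by
  rw [pp_eq]
  simp only [map_add, map_mul, Complex.conj_ofReal, Complex.conj_I]
  linear_combination ((√2 / 2 : ℝ) : ℂ) * Complex.I_sq

lemma pp_ne : pp ≠ 0 := Complex.exp_ne_zero _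

lemma p1_eq : p₁ = pp := by unfold p₁ pp; congr 1; push_cast; ring
lemma p2_eq : p₂ = Complex.I * pp := by
  have h : Complex.exp (-(Complex.I * ((Real.pi : ℂ) / 4))) * pp = 1 := by
    unfold pp; rw [← Complex.exp_add, ← Complex.exp_zero]; congr 1; push_cast; ring
  unfold p₂
  have h2 := pp_sq
  apply mul_right_cancel₀ pp_ne
  linear_combination -h - Complex.I * h2 - Complex.I_sq
lemma p3_eq : p₃ = -pp := by unfold p₃; rw [p1_eq]
lemma p4_eq : p₄ = -(Complex.I * pp) := by unfold p₄; rw [p2_eq]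

def el (c : ℂ) (t : ℝ) : ℂ := Complex.log (1 + c * (t * pp))

lemma re_c {c : ℂ} (hc : c = 1 ∨ c = -1 ∨ c = Complex.I ∨ c = -Complex.I) {t : ℝ} (ht : t ∈ Icc (0:ℝ) 1) :
    0 < (1 + c * (t * pp)).re := by
  have h1 : √2 < 2 := by rw [Real.sqrt_lt' (by norm_num)]; norm_num
  have h2 : 0 < √2 := by positivity
  have h3 : t * (√2 / 2) < 1 := by nlinarith [ht.1, ht.2]
  have h4 : 0 ≤ t * (√2 / 2) := mul_nonneg ht.1 (by positivity)
  rw [pp_eq]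
  rcases hc with rfl | rfl | rfl | rfl <;> simp <;> linarith

lemma el_deriv {c q : ℂ} (hc : c = 1 ∨ c = -1 ∨ c = Complex.I ∨ c = -Complex.I) (hq : c * pp * q = -1)
    {t : ℝ} (ht : t ∈ Icc (0:ℝ) 1) : HasDerivAt (el c) (1 / ((t:ℂ) - q)) t := by
  have hre := re_c hc ht
  have h1 : HasDerivAt (fun t : ℝ => 1 + c * ((t:ℂ) * pp)) (c * (1 * pp)) t :=
    ((Complex.ofRealCLM.hasDerivAt.mul_const pp).const_mul c).const_add 1
  have h2 := h1.clog_real (Or.inl hre)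
  refine h2.congr_deriv ?_
  have h3 : 1 + c * ((t:ℂ) * pp) = c * pp * (t - q) := by linear_combination hq
  have h4 : 1 + c * ((t:ℂ) * pp) ≠ 0 := by intro h; rw [h] at hre; simp at hre
  rw [h3] at h4 ⊢
  have h5 := right_ne_zero_of_mul h4
  have h6 := left_ne_zero_of_mul h4
  rw [one_mul, ← div_div, div_self h6]

lemma el_zero (c : ℂ) : el c 0 = 0 := by simp [el]

lemma el_conj {c d : ℂ} (hc : c = 1 ∨ c = -1 ∨ c = Complex.I ∨ c = -Complex.I)
    (hcd : (starRingEnd ℂ) c * -Complex.I = d) {t : ℝ} (ht : t ∈ Icc (0:ℝ) 1) :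
    (starRingEnd ℂ) (el c t) = el d t := by
  unfold el
  rw [← Complex.log_conj]
  · congr 1
    simp only [map_add, map_mul, map_one, pp_conj, Complex.conj_ofReal, ← hcd]; ring
  · intro h
    rw [Complex.arg_eq_pi_iff] at h
    linarith [h.1, re_c hc ht]

def S3 (t : ℝ) : ℂ := el Complex.I t + el 1 t - el (-Complex.I) t - el (-1) t
def S1 (t : ℝ) : ℂ := el Complex.I t - el 1 t + el (-Complex.I) t - el (-1) t

lemma d1 {t : ℝ} (ht : t ∈ Icc (0:ℝ) 1) : HasDerivAt (el Complex.I) (1 / ((t:ℂ) - p₁)) t :=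
  el_deriv (by simp) (by rw [p1_eq]; linear_combination Complex.I * pp_sq + Complex.I_sq) ht
lemma d2 {t : ℝ} (ht : t ∈ Icc (0:ℝ) 1) : HasDerivAt (el 1) (1 / ((t:ℂ) - p₂)) t :=
  el_deriv (by simp) (by rw [p2_eq]; linear_combination Complex.I * pp_sq + Complex.I_sq) ht
lemma d3 {t : ℝ} (ht : t ∈ Icc (0:ℝ) 1) : HasDerivAt (el (-Complex.I)) (1 / ((t:ℂ) - p₃)) t :=
  el_deriv (by simp) (by rw [p3_eq]; linear_combination Complex.I * pp_sq + Complex.I_sq) ht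
lemma d4 {t : ℝ} (ht : t ∈ Icc (0:ℝ) 1) : HasDerivAt (el (-1)) (1 / ((t:ℂ) - p₄)) t :=
  el_deriv (by simp) (by rw [p4_eq]; linear_combination Complex.I * pp_sq + Complex.I_sq) ht

lemma S3_deriv {t : ℝ} (ht : t ∈ Icc (0:ℝ) 1) : HasDerivAt S3 (F₃ t) t :=
  (((d1 ht).add (d2 ht)).sub (d3 ht)).sub (d4 ht)
lemma S1_deriv {t : ℝ} (ht : t ∈ Icc (0:ℝ) 1) : HasDerivAt S1 (F₁ t) t :=
  (((d1 ht).sub (d2 ht)).add (d3 ht)).sub (d4 ht)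

lemma sub_ne {c q : ℂ} (hc : c = 1 ∨ c = -1 ∨ c = Complex.I ∨ c = -Complex.I) (hq : c * pp * q = -1)
    {t : ℝ} (ht : t ∈ Icc (0:ℝ) 1) : (t:ℂ) - q ≠ 0 := by
  have hre := re_c hc ht
  have h3 : 1 + c * ((t:ℂ) * pp) = c * pp * (t - q) := by linear_combination hq
  intro h
  rw [h3, h] at hre
  simp at hre

lemma ne1 {t : ℝ} (ht : t ∈ Icc (0:ℝ) 1) : (t:ℂ) - p₁ ≠ 0 :=
  sub_ne (c := Complex.I) (by simp) (by rw [p1_eq]; linear_combination Complex.I * pp_sq + Complex.I_sq) ht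
lemma ne2 {t : ℝ} (ht : t ∈ Icc (0:ℝ) 1) : (t:ℂ) - p₂ ≠ 0 :=
  sub_ne (c := 1) (by simp) (by rw [p2_eq]; linear_combination Complex.I * pp_sq + Complex.I_sq) ht
lemma ne3 {t : ℝ} (ht : t ∈ Icc (0:ℝ) 1) : (t:ℂ) - p₃ ≠ 0 :=
  sub_ne (c := -Complex.I) (by simp) (by rw [p3_eq]; linear_combination Complex.I * pp_sq + Complex.I_sq) ht
lemma ne4 {t : ℝ} (ht : t ∈ Icc (0:ℝ) 1) : (t:ℂ) - p₄ ≠ 0 :=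
  sub_ne (c := -1) (by simp) (by rw [p4_eq]; linear_combination Complex.I * pp_sq + Complex.I_sq) ht

lemma inv_cont {q : ℂ} (h : ∀ t ∈ Icc (0:ℝ) 1, (t:ℂ) - q ≠ 0) :
    ContinuousOn (fun t : ℝ => 1 / ((t:ℂ) - q)) (Icc 0 1) :=
  ContinuousOn.div (by fun_prop) (by fun_prop) h

lemma F1_cont : ContinuousOn (fun t : ℝ => F₁ t) (Icc 0 1) :=
  (((inv_cont fun _ => ne1).sub (inv_cont fun _ => ne2)).add (inv_cont fun _ => ne3)).sub (inv_cont fun _ => ne4)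
lemma F2_cont : ContinuousOn (fun t : ℝ => F₂ t) (Icc 0 1) :=
  (((inv_cont fun _ => ne1).sub (inv_cont fun _ => ne2)).sub (inv_cont fun _ => ne3)).add (inv_cont fun _ => ne4)
lemma F3_cont : ContinuousOn (fun t : ℝ => F₃ t) (Icc 0 1) :=
  (((inv_cont fun _ => ne1).add (inv_cont fun _ => ne2)).sub (inv_cont fun _ => ne3)).sub (inv_cont fun _ => ne4)

lemma S3_cont : ContinuousOn S3 (Icc 0 1) := fun _ ht => (S3_deriv ht).continuousAt.continuousWithinAt
lemma S1_cont : ContinuousOn S1 (Icc 0 1) := fun _ ht => (S1_deriv ht).continuousAt.continuousWithinAt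

lemma sub_Icc {z : ℝ} (hz : z ∈ Icc (0:ℝ) 1) : uIcc 0 z ⊆ Icc (0:ℝ) 1 := by
  rw [uIcc_of_le hz.1]; exact Icc_subset_Icc_right hz.2

lemma step1 {z : ℝ} (hz : z ∈ Icc (0:ℝ) 1) : ∫ t in (0:ℝ)..z, 1 * F₃ t = S3 z := by
  simp only [one_mul]
  rw [intervalIntegral.integral_eq_sub_of_hasDerivAt (f := S3) (fun t ht => S3_deriv (sub_Icc hz ht))
    (F3_cont.mono (sub_Icc hz)).intervalIntegrable]
  simp [S3, el_zero]

lemma step2 {z : ℝ} (hz : z ∈ Icc (0:ℝ) 1) :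
    ∫ t in (0:ℝ)..z, (∫ s in (0:ℝ)..t, 1 * F₃ s) * F₃ t = S3 z ^ 2 / 2 := by
  rw [intervalIntegral.integral_congr (g := fun t => S3 t * F₃ t)
    (fun t ht => by simp only; rw [step1 (sub_Icc hz ht)]),
    intervalIntegral.integral_eq_sub_of_hasDerivAt (f := fun t => S3 t ^ 2 / 2)
    (f' := fun t : ℝ => S3 t * F₃ t) (fun t ht => ?_)
    (((S3_cont.mul F3_cont).mono (sub_Icc hz)).intervalIntegrable)]
  · simp [S3, el_zero]
  · have h := S3_deriv (sub_Icc hz ht)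
    exact ((h.pow 2).div_const 2).congr_deriv (by simp; ring)

lemma step3 : Omega [F₃, F₃, F₂, F₁] 1 = ∫ t in (0:ℝ)..1, (S3 t ^ 2 / 2 * F₂ t) * (S1 1 - S1 t) := by
  have e : Omega [F₃, F₃, F₂, F₁] 1 =
      ∫ t in (0:ℝ)..1, (∫ s in (0:ℝ)..t, S3 s ^ 2 / 2 * F₂ s) * F₁ t := by
    simp only [Omega, List.foldl]
    refine intervalIntegral.integral_congr fun t ht => ?_
    rw [uIcc_of_le zero_le_one] at ht
    congr 1
    refine intervalIntegral.integral_congr fun s hs => ?_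
    rw [step2 (sub_Icc ht hs)]
  have hc : ContinuousOn (fun t : ℝ => S3 t ^ 2 / 2 * F₂ t) (Icc 0 1) :=
    ((S3_cont.pow 2).div_const 2).mul F2_cont
  have hii : IntervalIntegrable (fun t : ℝ => S3 t ^ 2 / 2 * F₂ t) volume 0 1 :=
    ContinuousOn.intervalIntegrable (by rwa [uIcc_of_le zero_le_one])
  have F1ii : IntervalIntegrable (fun t : ℝ => F₁ t) volume 0 1 :=
    ContinuousOn.intervalIntegrable (by rw [uIcc_of_le zero_le_one]; exact F1_cont)
  have hA : ContinuousOn (fun t => ∫ s in (0:ℝ)..t, S3 s ^ 2 / 2 * F₂ s) (uIcc 0 1) :=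
    intervalIntegral.continuousOn_primitive_interval (by
      rw [uIcc_of_le zero_le_one]; exact hc.integrableOn_Icc)
  have parts := intervalIntegral.integral_mul_deriv_eq_deriv_mul_of_hasDeriv_right
    (u := fun t => ∫ s in (0:ℝ)..t, S3 s ^ 2 / 2 * F₂ s) (v := fun t => S1 t - S1 1)
    (u' := fun t : ℝ => S3 t ^ 2 / 2 * F₂ t) (v' := fun t : ℝ => F₁ t) (a := 0) (b := 1)
    hA (by rw [uIcc_of_le zero_le_one]; exact S1_cont.sub continuousOn_const) (fun t ht => ?_) (fun t ht => ?_)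
    hii F1ii
  · rw [e, parts]
    simp only [sub_self, mul_zero, intervalIntegral.integral_same, zero_mul, zero_sub]
    rw [← intervalIntegral.integral_neg]
    refine intervalIntegral.integral_congr fun t _ => ?_
    ring
  · rw [min_eq_left zero_le_one, max_eq_right zero_le_one] at ht
    refine HasDerivAt.hasDerivWithinAt ?_
    have htI : Icc (0:ℝ) 1 ∈ 𝓝 t := Icc_mem_nhds ht.1 ht.2
    refine intervalIntegral.integral_hasDerivAt_right ?_ ?_ (hc.continuousAt htI)
    · exact (hc.mono (sub_Icc (Ioo_subset_Icc_self ht))).intervalIntegrable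
    · exact (hc.mono Ioo_subset_Icc_self).stronglyMeasurableAtFilter isOpen_Ioo t ht
  · rw [min_eq_left zero_le_one, max_eq_right zero_le_one] at ht
    exact ((S1_deriv (Ioo_subset_Icc_self ht)).sub_const _).hasDerivWithinAt

lemma S3_VV (t : ℝ) : VV (t * pp) = -Complex.I * S3 t := by
  unfold VV S3 el
  simp only [neg_mul, one_mul, ← sub_eq_add_neg]
lemma S1_BB (t : ℝ) : BB (t * pp) = (Real.pi : ℂ) / 2 + Complex.I * S1 t := by
  unfold BB S1 el
  simp only [neg_mul, one_mul, ← sub_eq_add_neg]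

lemma BB_pp : BB pp = 0 := by
  unfold pp
  rw [(VV_arc (by positivity) le_rfl).2]
  have : RS (Real.pi / 4) = 0 := by
    unfold RS
    have h1 : Real.cos (Real.pi / 4 / 2 + Real.pi / 4) = Real.sin (Real.pi / 4 / 2) := by
      rw [← Real.cos_pi_div_two_sub]; congr 1; ring
    have h2 : Real.cos (Real.pi / 4 / 2 - Real.pi / 4) = Real.cos (Real.pi / 4 / 2) := by
      rw [← Real.cos_neg]; congr 1; ring
    rw [h1, h2]; ring
  rw [this]; simp

lemma S1_diff (t : ℝ) : S1 1 - S1 t = Complex.I * BB (t * pp) := by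
  have h := S1_BB 1
  rw [Complex.ofReal_one, one_mul, BB_pp] at h
  rw [S1_BB]
  linear_combination (Complex.I) * h + (S1 1 - S1 t) * Complex.I_sq

lemma VV_conj {t : ℝ} (ht : t ∈ Icc (0:ℝ) 1) : (starRingEnd ℂ) (VV (t * pp)) = VV (t * pp) := by
  rw [S3_VV]
  unfold S3
  simp only [map_mul, map_neg, map_add, map_sub, Complex.conj_I]
  rw [el_conj (c := Complex.I) (d := -1) (by simp) (by simp) ht,
    el_conj (c := 1) (d := -Complex.I) (by simp) (by simp) ht,
    el_conj (c := -Complex.I) (d := 1) (by simp) (by simp) ht,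
    el_conj (c := -1) (d := Complex.I) (by simp) (by simp) ht]
  ring

lemma BB_conj {t : ℝ} (ht : t ∈ Icc (0:ℝ) 1) : (starRingEnd ℂ) (BB (t * pp)) = BB (t * pp) := by
  rw [S1_BB]
  unfold S1
  simp only [map_mul, map_neg, map_add, map_sub, map_div₀, map_ofNat, Complex.conj_I, Complex.conj_ofReal]
  rw [el_conj (c := Complex.I) (d := -1) (by simp) (by simp) ht,
    el_conj (c := 1) (d := -Complex.I) (by simp) (by simp) ht,
    el_conj (c := -Complex.I) (d := 1) (by simp) (by simp) ht,
    el_conj (c := -1) (d := Complex.I) (by simp) (by simp) ht]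
  ring

lemma F2_eq {t : ℝ} (ht : t ∈ Icc (0:ℝ) 1) :
    -F₂ t = KK (t * pp) * pp + (starRingEnd ℂ) (KK (t * pp) * pp) := by
  have e : KK (t * pp) * pp = -(1 / ((t:ℂ) - p₁)) + 1 / (t - p₃) := by
    have n1 := ne1 ht
    have n3 := ne3 ht
    rw [p1_eq] at n1 ⊢
    rw [p3_eq] at n3 ⊢
    have h : 1 + (t * pp) ^ 2 = Complex.I * ((t - pp) * (t - -pp)) := by
      linear_combination ((t:ℂ) ^ 2 + Complex.I) * pp_sq + Complex.I_sq
    unfold KK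
    rw [h]
    have := Complex.I_ne_zero
    field_simp
    ring
  have c1 : (starRingEnd ℂ) p₁ = p₄ := by rw [p1_eq, p4_eq, pp_conj]; ring
  have c3 : (starRingEnd ℂ) p₃ = p₂ := by rw [p3_eq, p2_eq, map_neg, pp_conj]; ring
  rw [e]
  simp only [map_add, map_neg, map_div₀, map_one, map_sub, Complex.conj_ofReal, c1, c3]
  unfold F₂
  ring

lemma final : Omega [F₃, F₃, F₂, F₁] 1 =
    Complex.I * ((Real.pi ^ 3 * Real.log 2 / 6 - 5 / 8 * Real.pi * z3 : ℝ) : ℂ) := by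
  have hi := (tame_GG.intable (θ := Real.pi / 4) ⟨by positivity, le_rfl⟩).mul_const
    (Complex.exp (((Real.pi / 4 : ℝ) : ℂ) * Complex.I))
  rw [step3, ← Kint_re, int_re hi, ← intervalIntegral.integral_ofReal, ← intervalIntegral.integral_const_mul]
  refine intervalIntegral.integral_congr fun t ht => ?_
  rw [uIcc_of_le zero_le_one] at ht
  change _ = Complex.I * (((GG (t * pp) * pp).re : ℝ) : ℂ)
  rw [Complex.re_eq_add_conj]
  unfold GG
  have hF := F2_eq ht
  simp only [map_mul, VV_conj ht, BB_conj ht] at hF ⊢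
  rw [S1_diff]
  have hS : S3 t = Complex.I * VV (t * pp) := by
    rw [S3_VV]; linear_combination (S3 t) * Complex.I_sq
  rw [hS]
  linear_combination (Complex.I / 2 * VV (t * pp) ^ 2 * BB (t * pp)) * hF +
    (Complex.I / 2 * VV (t * pp) ^ 2 * BB (t * pp) * F₂ t) * Complex.I_sq
end S17

/- STATEMENT 17: `Ω_{3,3,2,1} = (iπ³/6) log 2 - (5/8) iπ ζ(3)`. -/
theorem stmt_17 :
    Omega [F₃, F₃, F₂, F₁] 1 =
      Complex.I * (Real.pi : ℂ) ^ 3 / 6 * ((Real.log 2 : ℝ) : ℂ) -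
        (5 / 8 : ℂ) * Complex.I * (Real.pi : ℂ) * riemannZeta 3 := by
  rw [S17.final, S17.zeta_eq]
  push_cast
  ring
end
end

section
/- With the notation of the iterated integrals Ω at φ = π/4, the third order coefficient α₃ of the area expansion of the Lawson surfaces, given by α₃ = −(i/π³)·Ω_{2,1}³ − (1/(16π²))·Ω_{2,1}·(−8·Ω_{2,2,3} + 48·Ω_{3,1,1} + 4·Ω₃³) + (i/(2π))·(6·Ω_{2,1,1,1} + Ω_{2,1,3,3} + Ω_{2,2,2,1} − Ω_{3,1,2,3} + Ω_{3,3,2,1}), satisfies α₃ = (9/4)·ζ(3), where Ω₃ = ∫₀¹ F₃(t) dt. -/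
noncomputable section

namespace Aux19

open Real Set Filter Topology MeasureTheory intervalIntegral

theorem ftc0 {f f' : ℝ → ℝ} (h : ∀ x, HasDerivAt f (f' x) x) (hc : Continuous f') (a b : ℝ) :
    ∫ x in a..b, f' x = f b - f a :=
  integral_eq_sub_of_hasDerivAt (fun x _ => h x) (hc.intervalIntegrable _ _)

theorem param_deriv {F F' : ℝ → ℝ → ℝ} (hF : ∀ k x, HasDerivAt (fun k => F k x) (F' k x) k)
    (hFc : ∀ k, Continuous (F k)) (hF' : Continuous (Function.uncurry F')) (a b k₀ : ℝ) :
    HasDerivAt (fun k => ∫ x in a..b, F k x) (∫ x in a..b, F' k₀ x) k₀ := by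
  obtain ⟨C, hC⟩ := (((isCompact_Icc (a := k₀ - 1) (b := k₀ + 1)).prod
    (isCompact_uIcc (a := a) (b := b))).exists_bound_of_continuousOn hF'.continuousOn)
  refine (intervalIntegral.hasDerivAt_integral_of_dominated_loc_of_deriv_le (𝕜 := ℝ)
    (bound := fun _ => C) (s := Icc (k₀ - 1) (k₀ + 1)) (Icc_mem_nhds (by linarith) (by linarith))
    (Eventually.of_forall fun k => (hFc k).aestronglyMeasurable)
    ((hFc k₀).intervalIntegrable _ _) ?_ ?_ (by simp) ?_).2
  · have : Continuous (F' k₀) := hF'.comp (by fun_prop : Continuous fun x => (k₀, x))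
    exact this.aestronglyMeasurable
  · refine Eventually.of_forall fun x hx k hk => hC (k, x) ⟨hk, uIoc_subset_uIcc hx⟩
  · exact Eventually.of_forall fun x _ k _ => hF k x

theorem int_eq {G H f f' : ℝ → ℝ} {a b : ℝ} (hG : Continuous G) (hH : Continuous H)
    (h : ∀ x, HasDerivAt f (f' x) x) (e : ∀ x, G x - H x = f' x) :
    ∫ x in a..b, G x = (∫ x in a..b, H x) + (f b - f a) := by
  have hf : f' = fun x => G x - H x := by ext x; rw [e]
  rw [← ftc0 h (by rw [hf]; fun_prop), hf, intervalIntegral.integral_sub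
    (hG.intervalIntegrable _ _) (hH.intervalIntegrable _ _)]; ring

def rr (k x : ℝ) : ℝ := √(1 + (k * sin x) ^ 2)
def yy (k x : ℝ) : ℝ := arsinh (k * sin x)
def vv (k x : ℝ) : ℝ := arctan (k * cos x / rr k x)

theorem rr_pos (k x : ℝ) : 0 < rr k x := Real.sqrt_pos.2 (by positivity)
theorem rr_ne (k x : ℝ) : rr k x ≠ 0 := (rr_pos k x).ne'
theorem rr_sq (k x : ℝ) : rr k x ^ 2 = 1 + (k * sin x) ^ 2 := Real.sq_sqrt (by positivity)
theorem rr_cont : Continuous (fun p : ℝ × ℝ => rr p.1 p.2) := by unfold rr; fun_prop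
theorem yy_cont : Continuous (fun p : ℝ × ℝ => yy p.1 p.2) := by
  unfold yy; exact continuous_arsinh.comp (by fun_prop)
theorem vv_cont : Continuous (fun p : ℝ × ℝ => vv p.1 p.2) := by
  unfold vv
  exact continuous_arctan.comp (Continuous.div (by fun_prop) rr_cont fun p => rr_ne _ _)

@[fun_prop] theorem rr_cont' {X : Type*} [TopologicalSpace X] {f g : X → ℝ} (hf : Continuous f)
    (hg : Continuous g) : Continuous (fun t => rr (f t) (g t)) := rr_cont.comp (hf.prodMk hg)
@[fun_prop] theorem yy_cont' {X : Type*} [TopologicalSpace X] {f g : X → ℝ} (hf : Continuous f)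
    (hg : Continuous g) : Continuous (fun t => yy (f t) (g t)) := yy_cont.comp (hf.prodMk hg)
@[fun_prop] theorem vv_cont' {X : Type*} [TopologicalSpace X] {f g : X → ℝ} (hf : Continuous f)
    (hg : Continuous g) : Continuous (fun t => vv (f t) (g t)) := vv_cont.comp (hf.prodMk hg)

/-- `sin x / r` and so on -/
def sr (k x : ℝ) : ℝ := sin x / rr k x
def cr (k x : ℝ) : ℝ := cos x / rr k x
@[fun_prop] theorem sr_cont' {X : Type*} [TopologicalSpace X] {f g : X → ℝ} (hf : Continuous f)
    (hg : Continuous g) : Continuous (fun t => sr (f t) (g t)) := by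
  unfold sr; exact Continuous.div (by fun_prop) (by fun_prop) fun t => rr_ne _ _
@[fun_prop] theorem cr_cont' {X : Type*} [TopologicalSpace X] {f g : X → ℝ} (hf : Continuous f)
    (hg : Continuous g) : Continuous (fun t => cr (f t) (g t)) := by
  unfold cr; exact Continuous.div (by fun_prop) (by fun_prop) fun t => rr_ne _ _
def s3 (k x : ℝ) : ℝ := sin x / rr k x ^ 3
def c3 (k x : ℝ) : ℝ := cos x / rr k x ^ 3
@[fun_prop] theorem s3_cont' {X : Type*} [TopologicalSpace X] {f g : X → ℝ} (hf : Continuous f)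
    (hg : Continuous g) : Continuous (fun t => s3 (f t) (g t)) := by
  unfold s3; exact Continuous.div (by fun_prop) (by fun_prop) fun t => pow_ne_zero _ (rr_ne _ _)
@[fun_prop] theorem c3_cont' {X : Type*} [TopologicalSpace X] {f g : X → ℝ} (hf : Continuous f)
    (hg : Continuous g) : Continuous (fun t => c3 (f t) (g t)) := by
  unfold c3; exact Continuous.div (by fun_prop) (by fun_prop) fun t => pow_ne_zero _ (rr_ne _ _)

theorem rr_dk (k x : ℝ) : HasDerivAt (fun k => rr k x) (k * sin x ^ 2 / rr k x) k := by
  have h : HasDerivAt (fun k => 1 + (k * sin x) ^ 2) (2 * (k * sin x) * sin x) k := by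
    have := ((((hasDerivAt_id k).mul_const (sin x)).pow 2).const_add 1)
    refine this.congr_deriv ?_
    simp
  refine (h.sqrt (by positivity)).congr_deriv ?_
  rw [← rr]; have := rr_ne k x; field_simp

theorem rr_dx (k x : ℝ) : HasDerivAt (fun x => rr k x) (k ^ 2 * sin x * cos x / rr k x) x := by
  have h : HasDerivAt (fun x => 1 + (k * sin x) ^ 2) (2 * (k * sin x) * (k * cos x)) x := by
    have := ((((Real.hasDerivAt_sin x).const_mul k).pow 2).const_add 1)
    refine this.congr_deriv ?_
    simp
  refine (h.sqrt (by positivity)).congr_deriv ?_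
  rw [← rr]; have := rr_ne k x; field_simp

theorem yy_dk (k x : ℝ) : HasDerivAt (fun k => yy k x) (sr k x) k := by
  have := ((hasDerivAt_id k).mul_const (sin x)).arsinh
  refine this.congr_deriv ?_
  simp [sr, rr, div_eq_inv_mul]

theorem yy_dx (k x : ℝ) : HasDerivAt (fun x => yy k x) (k * cr k x) x := by
  have := ((Real.hasDerivAt_sin x).const_mul k).arsinh
  refine this.congr_deriv ?_
  simp [cr, rr, div_eq_inv_mul]; ring

theorem sr_dx (k x : ℝ) : HasDerivAt (fun x => sr k x) (c3 k x) x := by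
  refine ((Real.hasDerivAt_sin x).div (rr_dx k x) (rr_ne k x)).congr_deriv ?_
  have := rr_ne k x; have h2 := rr_sq k x
  unfold c3; field_simp; rw [h2]; ring

theorem cr_dx (k x : ℝ) : HasDerivAt (fun x => cr k x) (-(1 + k ^ 2) * s3 k x) x := by
  refine ((Real.hasDerivAt_cos x).div (rr_dx k x) (rr_ne k x)).congr_deriv ?_
  have := rr_ne k x; have h2 := rr_sq k x; have h3 := sin_sq_add_cos_sq x
  unfold s3; field_simp; rw [h2]; linear_combination (- sin x * k^2) * h3

theorem kcr_dk (k x : ℝ) : HasDerivAt (fun k => k * cr k x) (c3 k x) k := by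
  unfold cr
  refine ((hasDerivAt_id k).mul ((hasDerivAt_const k (cos x)).div (rr_dk k x) (rr_ne k x))).congr_deriv ?_
  have := rr_ne k x; have h2 := rr_sq k x
  unfold c3; simp; field_simp; rw [h2]; ring

theorem ksr_dk (k x : ℝ) : HasDerivAt (fun k => k * sr k x) (s3 k x) k := by
  unfold sr
  refine ((hasDerivAt_id k).mul ((hasDerivAt_const k (sin x)).div (rr_dk k x) (rr_ne k x))).congr_deriv ?_
  have := rr_ne k x; have h2 := rr_sq k x
  unfold s3; simp; field_simp; rw [h2]; ring

theorem vv_eq (k x : ℝ) : vv k x = arctan (k * cr k x) := by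
  unfold vv cr; rw [mul_div_assoc]

theorem one_add_sq (k x : ℝ) : 1 + (k * cr k x) ^ 2 = (1 + k ^ 2) / rr k x ^ 2 := by
  have := rr_ne k x; have h2 := rr_sq k x; have h3 := sin_sq_add_cos_sq x
  unfold cr; field_simp; rw [h2]; linear_combination k^2 * h3

theorem vv_dk (k x : ℝ) : HasDerivAt (fun k => vv k x) (cr k x / (1 + k ^ 2)) k := by
  simp_rw [vv_eq]
  refine (kcr_dk k x).arctan.congr_deriv ?_
  rw [one_add_sq]
  have := rr_ne k x; have : (1 + k ^ 2) ≠ 0 := by positivity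
  unfold cr c3; field_simp

theorem vv_dx (k x : ℝ) : HasDerivAt (fun x => vv k x) (-(k * sr k x)) x := by
  simp_rw [vv_eq]
  refine ((cr_dx k x).const_mul k).arctan.congr_deriv ?_
  rw [one_add_sq]
  have := rr_ne k x; have : (1 + k ^ 2) ≠ 0 := by positivity
  unfold sr s3; field_simp

theorem quad (k x : ℝ) : cr k x ^ 2 + (1 + k ^ 2) * sr k x ^ 2 = 1 := by
  have := rr_ne k x; have h2 := rr_sq k x; have h3 := sin_sq_add_cos_sq x
  unfold sr cr; field_simp; rw [h2]; linear_combination h3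

@[simp] theorem yy_x0 (k : ℝ) : yy k 0 = 0 := by simp [yy]
@[simp] theorem vv_x1 (k : ℝ) : vv k (π / 2) = 0 := by simp [vv]
@[simp] theorem yy_k0 (x : ℝ) : yy 0 x = 0 := by simp [yy]
@[simp] theorem vv_k0 (x : ℝ) : vv 0 x = 0 := by simp [vv]
@[simp] theorem cr_x1 (k : ℝ) : cr k (π / 2) = 0 := by simp [cr]
@[simp] theorem sr_x0 (k : ℝ) : sr k 0 = 0 := by simp [sr]

def Rn (n : ℕ) (k : ℝ) : ℝ := ∫ x in (0:ℝ)..(π / 2), vv k x ^ (n + 1) * (k * cr k x)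
def Pn (n : ℕ) (k : ℝ) : ℝ := ∫ x in (0:ℝ)..(π / 2), yy k x ^ (n + 1) * (k * sr k x)
def YY (k : ℝ) : ℝ := ∫ x in (0:ℝ)..(π / 2), yy k x ^ 2
def VV (k : ℝ) : ℝ := ∫ x in (0:ℝ)..(π / 2), vv k x ^ 2
/-- primitive of `vv` -/
def WW (k x : ℝ) : ℝ := ∫ t in (0:ℝ)..x, vv k t
def QQ (k : ℝ) : ℝ := ∫ x in (0:ℝ)..(π / 2), yy k x * WW k x

theorem Rn_deriv (n : ℕ) (k : ℝ) : HasDerivAt (Rn n)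
    ((n + 1) * (k / (1 + k ^ 2)) * ∫ x in (0:ℝ)..(π / 2), vv k x ^ n) k := by
  have hk : (1 + k ^ 2) ≠ 0 := by positivity
  have h := param_deriv (F := fun k x => vv k x ^ (n + 1) * (k * cr k x))
    (F' := fun k x => (n + 1) * vv k x ^ n * (cr k x / (1 + k ^ 2)) * (k * cr k x) +
      vv k x ^ (n + 1) * c3 k x)
    (fun k x => by
      refine (((vv_dk k x).pow (n + 1)).mul (kcr_dk k x)).congr_deriv ?_
      push_cast; simp)
    (fun k => by fun_prop)
    (by
      unfold Function.uncurry
      have : Continuous (fun p : ℝ × ℝ => cr p.1 p.2 / (1 + p.1 ^ 2)) :=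
        Continuous.div (by fun_prop) (by fun_prop) (fun p => by positivity)
      fun_prop) 0 (π / 2) k
  refine h.congr_deriv ?_
  rw [← intervalIntegral.integral_const_mul]
  rw [int_eq (f := fun x => vv k x ^ (n + 1) * sr k x)
    (f' := fun x => (n + 1) * vv k x ^ n * (-(k * sr k x)) * sr k x + vv k x ^ (n + 1) * c3 k x)
    (H := fun x => (n + 1) * (k / (1 + k ^ 2)) * vv k x ^ n) (by fun_prop) (by fun_prop)
    (fun x => by
      refine (((vv_dx k x).pow (n + 1)).mul (sr_dx k x)).congr_deriv ?_
      push_cast; simp)]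
  · simp
  · intro x
    have q := quad k x
    field_simp
    linear_combination ((n:ℝ) + 1) * k * vv k x ^ n * q

theorem Pn_deriv (n : ℕ) (k : ℝ) : HasDerivAt (Pn n)
    ((n + 1) * (k / (1 + k ^ 2)) * ∫ x in (0:ℝ)..(π / 2), yy k x ^ n) k := by
  have hk : (1 + k ^ 2) ≠ 0 := by positivity
  have h := param_deriv (F := fun k x => yy k x ^ (n + 1) * (k * sr k x))
    (F' := fun k x => (n + 1) * yy k x ^ n * sr k x * (k * sr k x) +
      yy k x ^ (n + 1) * s3 k x)
    (fun k x => by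
      refine (((yy_dk k x).pow (n + 1)).mul (ksr_dk k x)).congr_deriv ?_
      push_cast; simp)
    (fun k => by fun_prop)
    (by unfold Function.uncurry; fun_prop) 0 (π / 2) k
  refine h.congr_deriv ?_
  rw [← intervalIntegral.integral_const_mul]
  rw [int_eq (f := fun x => -(yy k x ^ (n + 1) * cr k x) / (1 + k ^ 2))
    (f' := fun x => -((n + 1) * yy k x ^ n * (k * cr k x) * cr k x +
      yy k x ^ (n + 1) * (-(1 + k ^ 2) * s3 k x)) / (1 + k ^ 2))
    (H := fun x => (n + 1) * (k / (1 + k ^ 2)) * yy k x ^ n) (by fun_prop) (by fun_prop)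
    (fun x => by
      refine ((((yy_dx k x).pow (n + 1)).mul (cr_dx k x)).neg.div_const _).congr_deriv ?_
      push_cast; simp)]
  · simp
  · intro x
    have q := quad k x
    field_simp
    linear_combination ((n:ℝ) + 1) * k * yy k x ^ n * q

/-- `∫ y (-v') = ∫ v y'` -/
theorem P0_eq_R0 (k : ℝ) : Pn 0 k = Rn 0 k := by
  unfold Pn Rn
  rw [int_eq (f := fun x => -(vv k x * yy k x))
    (f' := fun x => -(-(k * sr k x) * yy k x + vv k x * (k * cr k x)))
    (H := fun x => vv k x ^ (0 + 1) * (k * cr k x)) (by fun_prop) (by fun_prop)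
    (fun x => ((vv_dx k x).mul (yy_dx k x)).neg)]
  · simp
  · intro x; ring

theorem D_eq (k : ℝ) : Rn 0 k = π / 4 * log (1 + k ^ 2) := by
  have h0 : Rn 0 0 = π / 4 * log (1 + (0:ℝ) ^ 2) := by simp [Rn]
  have hd : ∀ k, HasDerivAt (fun k => Rn 0 k - π / 4 * log (1 + k ^ 2)) 0 k := by
    intro k
    have hk : (1 + k ^ 2) ≠ 0 := by positivity
    have h2 : HasDerivAt (fun k : ℝ => 1 + k ^ 2) (2 * k) k := by
      simpa using (hasDerivAt_pow 2 k).const_add 1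
    refine ((Rn_deriv 0 k).sub ((h2.log hk).const_mul (π / 4))).congr_deriv ?_
    simp; field_simp; ring
  have := is_const_of_deriv_eq_zero (fun k => (hd k).differentiableAt) (fun k => (hd k).deriv) k 0
  linarith

theorem YY_deriv (k : ℝ) (hk : 0 < k) : HasDerivAt YY (2 / k * Rn 0 k) k := by
  have h := param_deriv (F := fun k x => yy k x ^ 2) (F' := fun k x => 2 * yy k x * sr k x)
    (fun k x => ((yy_dk k x).pow 2).congr_deriv (by simp))
    (fun k => by fun_prop) (by unfold Function.uncurry; fun_prop) 0 (π / 2) k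
  refine h.congr_deriv ?_
  rw [← P0_eq_R0, Pn, ← intervalIntegral.integral_const_mul]
  congr 1; ext x; field_simp; ring

theorem VV_deriv (k : ℝ) (hk : 0 < k) : HasDerivAt VV (2 / (k * (1 + k ^ 2)) * Rn 0 k) k := by
  have h := param_deriv (F := fun k x => vv k x ^ 2)
    (F' := fun k x => 2 * vv k x * (cr k x / (1 + k ^ 2)))
    (fun k x => ((vv_dk k x).pow 2).congr_deriv (by simp))
    (fun k => by fun_prop) (by
      unfold Function.uncurry
      have : Continuous (fun p : ℝ × ℝ => cr p.1 p.2 / (1 + p.1 ^ 2)) :=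
        Continuous.div (by fun_prop) (by fun_prop) (fun p => by positivity)
      fun_prop) 0 (π / 2) k
  refine h.congr_deriv ?_
  rw [Rn, ← intervalIntegral.integral_const_mul]
  congr 1; ext x; field_simp; ring

theorem YY_cont : Continuous YY := by
  unfold YY; apply intervalIntegral.continuous_parametric_intervalIntegral_of_continuous' (by unfold Function.uncurry; fun_prop)
theorem VV_cont : Continuous VV := by
  unfold VV; apply intervalIntegral.continuous_parametric_intervalIntegral_of_continuous' (by unfold Function.uncurry; fun_prop)

theorem WW_cont : Continuous (fun p : ℝ × ℝ => WW p.1 p.2) := by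
  unfold WW
  exact intervalIntegral.continuous_parametric_intervalIntegral_of_continuous
    (f := fun (p : ℝ × ℝ) t => vv p.1 t) (by unfold Function.uncurry; fun_prop) (by fun_prop)
@[fun_prop] theorem WW_cont' {X : Type*} [TopologicalSpace X] {f g : X → ℝ} (hf : Continuous f)
    (hg : Continuous g) : Continuous (fun t => WW (f t) (g t)) := WW_cont.comp (hf.prodMk hg)

theorem WW_dx (k x : ℝ) : HasDerivAt (fun x => WW k x) (vv k x) x :=
  intervalIntegral.integral_hasDerivAt_right
    ((by fun_prop : Continuous fun x => vv k x).intervalIntegrable _ _)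
    ((by fun_prop : Continuous fun x => vv k x).stronglyMeasurableAtFilter _ _)
    (by fun_prop : Continuous fun x => vv k x).continuousAt

def Wk (k x : ℝ) : ℝ := ∫ t in (0:ℝ)..x, cr k t / (1 + k ^ 2)

theorem Wk_cont : Continuous (fun p : ℝ × ℝ => Wk p.1 p.2) := by
  unfold Wk
  exact intervalIntegral.continuous_parametric_intervalIntegral_of_continuous
    (f := fun (p : ℝ × ℝ) t => cr p.1 t / (1 + p.1 ^ 2)) (by
      unfold Function.uncurry
      exact Continuous.div (by fun_prop) (by fun_prop) (fun p => by positivity)) (by fun_prop)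
@[fun_prop] theorem Wk_cont' {X : Type*} [TopologicalSpace X] {f g : X → ℝ} (hf : Continuous f)
    (hg : Continuous g) : Continuous (fun t => Wk (f t) (g t)) := Wk_cont.comp (hf.prodMk hg)

theorem WW_dk (k x : ℝ) : HasDerivAt (fun k => WW k x) (Wk k x) k :=
  param_deriv (F := vv) (F' := fun k x => cr k x / (1 + k ^ 2)) vv_dk (fun k => by fun_prop) (by
      unfold Function.uncurry
      exact Continuous.div (by fun_prop) (by fun_prop) (fun p => by positivity)) 0 x k

theorem Wk_eq (k x : ℝ) (hk : 0 < k) : Wk k x = yy k x / (k * (1 + k ^ 2)) := by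
  have e := ftc0 (f := fun x => yy k x / (k * (1 + k ^ 2)))
    (f' := fun x => (k * cr k x) / (k * (1 + k ^ 2)))
    (fun x => (yy_dx k x).div_const _) (by fun_prop) 0 x
  simp only [yy_x0, zero_div, sub_zero] at e
  rw [← e, Wk]; congr 1; ext t; field_simp

@[simp] theorem WW_x0 (k : ℝ) : WW k 0 = 0 := by simp [WW]

theorem QQ_deriv' (k : ℝ) : HasDerivAt QQ
    (∫ x in (0:ℝ)..(π / 2), (sr k x * WW k x + yy k x * Wk k x)) k :=
  param_deriv (F := fun k x => yy k x * WW k x)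
    (F' := fun k x => sr k x * WW k x + yy k x * Wk k x)
    (fun k x => (yy_dk k x).mul (WW_dk k x)) (fun k => by fun_prop)
    (by unfold Function.uncurry; fun_prop) 0 (π / 2) k

theorem QQ_deriv (k : ℝ) (hk : 0 < k) : HasDerivAt QQ (VV k / k + YY k / (k * (1 + k ^ 2))) k := by
  refine (QQ_deriv' k).congr_deriv ?_
  rw [VV, YY, ← intervalIntegral.integral_div, ← intervalIntegral.integral_div,
    ← intervalIntegral.integral_add]
  rw [int_eq (f := fun x => -(vv k x * WW k x) / k)
    (f' := fun x => -(-(k * sr k x) * WW k x + vv k x * vv k x) / k)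
    (H := fun x => vv k x ^ 2 / k + yy k x ^ 2 / (k * (1 + k ^ 2))) (by fun_prop) (by fun_prop)
    (fun x => ((vv_dx k x).mul (WW_dx k x)).neg.div_const _)]
  · simp
  · intro x; rw [Wk_eq k x hk]; field_simp; ring
  all_goals apply Continuous.intervalIntegrable; fun_prop

def ell (k : ℝ) : ℝ := log (1 + k ^ 2)
theorem ell_deriv (k : ℝ) : HasDerivAt ell (2 * k / (1 + k ^ 2)) k := by
  have hk : (1 + k ^ 2) ≠ 0 := by positivity
  have h2 : HasDerivAt (fun k : ℝ => 1 + k ^ 2) (2 * k) k := by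
    simpa using (hasDerivAt_pow 2 k).const_add 1
  exact h2.log hk

theorem VY (k : ℝ) (hk : 0 ≤ k) : VV k = YY k - π / 8 * ell k ^ 2 := by
  have hd : ∀ k > 0, HasDerivAt (fun k => VV k - (YY k - π / 8 * ell k ^ 2)) 0 k := by
    intro k hk
    refine ((VV_deriv k hk).sub ((YY_deriv k hk).sub
      (((ell_deriv k).pow 2).const_mul (π / 8)))).congr_deriv ?_
    rw [D_eq, ← ell]; field_simp; simp; ring
  have hc : Continuous (fun k => VV k - (YY k - π / 8 * ell k ^ 2)) := by
    have := YY_cont; have := VV_cont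
    have : Continuous ell := continuous_iff_continuousAt.2 fun k => (ell_deriv k).continuousAt
    fun_prop
  by_cases h : k = 0
  · subst h; simp [VV, YY, ell]
  have hk' : 0 < k := lt_of_le_of_ne hk (Ne.symm h)
  obtain ⟨c, hc1, hc2⟩ := exists_hasDerivAt_eq_slope _ (fun _ => 0) hk' hc.continuousOn
    (fun x hx => hd x hx.1)
  have : VV 0 - (YY 0 - π / 8 * ell 0 ^ 2) = 0 := by simp [VV, YY, ell]
  simp only [this] at hc2
  have : VV k - (YY k - π / 8 * ell k ^ 2) = 0 := by
    field_simp at hc2; linarith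
  linarith

/-- total -/
def al (k : ℝ) : ℝ := ell k ^ 3 + ell k * (2 * YY k + 12 * VV k) / π -
  (8 * Rn 2 k - 4 / 3 * Pn 2 k - 8 * QQ k) / π

theorem al_deriv (k : ℝ) (hk : 0 < k) :
    HasDerivAt al (6 * ell k ^ 2 / k + 16 * YY k / (π * k)) k := by
  have hp := Real.pi_ne_zero
  have h := (((ell_deriv k).pow 3).add (((ell_deriv k).mul
    (((YY_deriv k hk).const_mul 2).add ((VV_deriv k hk).const_mul 12))).div_const π)).sub
    (((((Rn_deriv 2 k).const_mul 8).sub ((Pn_deriv 2 k).const_mul (4/3))).sub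
      ((QQ_deriv k hk).const_mul 8)).div_const π)
  refine h.congr_deriv ?_
  rw [← VV, ← YY, D_eq, ← ell]
  have : (1 + k ^ 2) ≠ 0 := by positivity
  simp
  rw [VY k hk.le]
  field_simp
  ring

theorem al_cont : Continuous al := by
  have := YY_cont; have := VV_cont
  have : Continuous ell := continuous_iff_continuousAt.2 fun k => (ell_deriv k).continuousAt
  have : Continuous (Rn 2) := continuous_iff_continuousAt.2 fun k => (Rn_deriv 2 k).continuousAt
  have : Continuous (Pn 2) := continuous_iff_continuousAt.2 fun k => (Pn_deriv 2 k).continuousAt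
  have : Continuous QQ := continuous_iff_continuousAt.2 fun k => (QQ_deriv' k).continuousAt
  unfold al; fun_prop

theorem al_zero : al 0 = 0 := by simp [al, ell, Rn, Pn, QQ]

theorem tlog2_cont : ContinuousOn (fun t : ℝ => t * log t ^ 2) (Ici 0) := by
  have h : Continuous (fun t : ℝ => 4 * (√t * log √t) ^ 2) := by
    have := Real.continuous_mul_log.comp Real.continuous_sqrt
    exact continuous_const.mul (this.pow 2)
  refine h.continuousOn.congr fun t ht => ?_
  have ht : 0 ≤ t := ht
  simp only
  rw [Real.log_sqrt ht, mul_pow, Real.sq_sqrt ht]; ring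

theorem pow_log2 (n : ℕ) : IntegrableOn (fun t : ℝ => t ^ n * log t ^ 2) (Ioo 0 1) ∧
    ∫ t in Ioo (0:ℝ) 1, t ^ n * log t ^ 2 = 2 / ((n:ℝ) + 1) ^ 3 := by
  set g : ℝ → ℝ := fun t => t ^ n * (t * log t ^ 2) / (n + 1) - 2 * t ^ n * (t * log t) / (n + 1) ^ 2
    + 2 * t ^ (n + 1) / (n + 1) ^ 3 with hg
  have hc : ContinuousOn g (Icc 0 1) := by
    have h1 := tlog2_cont.mono (Icc_subset_Ici_self : Icc (0:ℝ) 1 ⊆ Ici 0)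
    have h2 := Real.continuous_mul_log.continuousOn (s := Icc (0:ℝ) 1)
    have h3 : ContinuousOn (fun t : ℝ => t ^ n) (Icc 0 1) := by fun_prop
    refine ContinuousOn.add (ContinuousOn.sub ((h3.mul h1).div_const _) ?_) (by fun_prop)
    refine ContinuousOn.div_const ?_ _
    exact ((continuousOn_const.mul h3).mul h2)
  have hd : ∀ t ∈ Ioo (0:ℝ) 1, HasDerivAt g (t ^ n * log t ^ 2) t := by
    intro t ht
    have ht0 : t ≠ 0 := ht.1.ne'
    have hl := Real.hasDerivAt_log ht0
    have hp := hasDerivAt_pow (n + 1) t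
    have := (((hp.mul (hl.pow 2)).div_const ((n:ℝ) + 1)).sub
      (((hp.mul hl).const_mul 2).div_const (((n:ℝ) + 1) ^ 2))).add
      ((hp.const_mul 2).div_const (((n:ℝ) + 1) ^ 3))
    have hn : ((n:ℝ) + 1) ≠ 0 := by positivity
    refine (this.congr_deriv ?_).congr_of_eventuallyEq (Eventually.of_forall fun s => ?_)
    · simp; field_simp; ring
    · simp [hg]; ring
  have hpos : ∀ t ∈ Ioo (0:ℝ) 1, 0 ≤ t ^ n * log t ^ 2 := fun t ht =>
    mul_nonneg (pow_nonneg ht.1.le _) (sq_nonneg _)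
  have hi := integrableOn_deriv_of_nonneg hc hd hpos
  refine ⟨hi.mono_set Ioo_subset_Ioc_self, ?_⟩
  rw [← integral_Ioc_eq_integral_Ioo, ← intervalIntegral.integral_of_le zero_le_one,
    integral_eq_sub_of_hasDerivAt_of_le zero_le_one hc hd
    ((intervalIntegrable_iff_integrableOn_Ioc_of_le zero_le_one).2 hi)]
  simp [hg]

def z3 : ℝ := ∑' n : ℕ, 1 / ((n:ℝ) + 1) ^ 3

theorem z3_summable : Summable (fun n : ℕ => 1 / ((n:ℝ) + 1) ^ 3) := by
  have := (summable_nat_add_iff 1).2 (Real.summable_one_div_nat_pow.2 (by norm_num : 1 < 3))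
  simpa using this

theorem z3_pos : 0 < z3 := z3_summable.tsum_pos (fun n => by positivity) 0 (by norm_num)

theorem z3_zeta : riemannZeta 3 = (z3 : ℂ) := by
  have h := zeta_nat_eq_tsum_of_gt_one (k := 3) (by norm_num)
  have h2 : (∑' n : ℕ, 1 / (n:ℝ) ^ 3) = z3 := by
    rw [(Real.summable_one_div_nat_pow.2 (by norm_num : 1 < 3)).tsum_eq_zero_add]
    simp [z3]
  rw [← h2]; push_cast at h ⊢; exact h

theorem X1 : IntegrableOn (fun t : ℝ => log t ^ 2 / (1 - t)) (Ioo 0 1) ∧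
    ∫ t in Ioo (0:ℝ) 1, log t ^ 2 / (1 - t) = 2 * z3 := by
  have hs := hasSum_integral_of_summable_integral_norm (μ := volume.restrict (Ioo (0:ℝ) 1))
    (F := fun n t => t ^ n * log t ^ 2) (fun n => (pow_log2 n).1) (by
      refine (z3_summable.mul_left 2).congr fun n => ?_
      rw [← mul_div_assoc, mul_one, ← (pow_log2 n).2]
      refine setIntegral_congr_fun measurableSet_Ioo fun t ht => ?_
      exact (Real.norm_of_nonneg (mul_nonneg (pow_nonneg ht.1.le _) (sq_nonneg _))).symm)
  have e : ∫ t in Ioo (0:ℝ) 1, log t ^ 2 / (1 - t) = 2 * z3 := by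
    have h1 : ∫ t in Ioo (0:ℝ) 1, (∑' n : ℕ, t ^ n * log t ^ 2) =
        ∫ t in Ioo (0:ℝ) 1, log t ^ 2 / (1 - t) := by
      refine setIntegral_congr_fun measurableSet_Ioo fun t ht => ?_
      rw [tsum_mul_right, tsum_geometric_of_lt_one ht.1.le ht.2]; ring
    rw [← h1, ← hs.tsum_eq, z3, ← tsum_mul_left]
    refine tsum_congr fun n => ?_
    rw [(pow_log2 n).2]; ring
  exact ⟨Integrable.of_integral_ne_zero (by rw [e]; have := z3_pos; positivity), e⟩

theorem cov {φ φ' ψ g h : ℝ → ℝ} (h1 : MapsTo φ (Ioo 0 1) (Ioo 0 1))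
    (h2 : MapsTo ψ (Ioo 0 1) (Ioo 0 1)) (h3 : ∀ x ∈ Ioo (0:ℝ) 1, ψ (φ x) = x)
    (h4 : ∀ x ∈ Ioo (0:ℝ) 1, φ (ψ x) = x) (h5 : ∀ x ∈ Ioo (0:ℝ) 1, HasDerivAt φ (φ' x) x)
    (h6 : ∀ x ∈ Ioo (0:ℝ) 1, |φ' x| * g (φ x) = h x) (hg : IntegrableOn g (Ioo 0 1)) :
    IntegrableOn h (Ioo 0 1) ∧ ∫ x in Ioo (0:ℝ) 1, h x = ∫ x in Ioo (0:ℝ) 1, g x := by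
  have him : φ '' Ioo 0 1 = Ioo 0 1 := by
    apply Subset.antisymm h1.image_subset
    intro x hx
    exact ⟨ψ x, h2 hx, h4 x hx⟩
  have hinj : InjOn φ (Ioo 0 1) := fun x hx y hy e => by rw [← h3 x hx, ← h3 y hy, e]
  have hd : ∀ x ∈ Ioo (0:ℝ) 1, HasDerivWithinAt φ (φ' x) (Ioo 0 1) x :=
    fun x hx => (h5 x hx).hasDerivWithinAt
  have a := integrableOn_image_iff_integrableOn_abs_deriv_smul measurableSet_Ioo hd hinj g
  have b := integral_image_eq_integral_abs_deriv_smul measurableSet_Ioo hd hinj g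
  rw [him] at a b
  constructor
  · exact (a.1 hg).congr_fun (fun x hx => h6 x hx) measurableSet_Ioo
  · rw [b]; exact (setIntegral_congr_fun measurableSet_Ioo fun x hx => h6 x hx).symm

theorem cov_sq {g h : ℝ → ℝ} (h6 : ∀ x ∈ Ioo (0:ℝ) 1, 2 * x * g (x ^ 2) = h x)
    (hg : IntegrableOn g (Ioo 0 1)) :
    IntegrableOn h (Ioo 0 1) ∧ ∫ x in Ioo (0:ℝ) 1, h x = ∫ x in Ioo (0:ℝ) 1, g x := by
  refine cov (φ := fun x => x ^ 2) (φ' := fun x => 2 * x) (ψ := fun x => √x) ?_ ?_ ?_ ?_ ?_ ?_ hg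
  · intro x hx; have := hx.1; have := hx.2; constructor <;> simp only <;> nlinarith
  · intro x hx; exact ⟨Real.sqrt_pos.2 hx.1, by rw [Real.sqrt_lt' one_pos]; simpa using hx.2⟩
  · intro x hx; exact Real.sqrt_sq hx.1.le
  · intro x hx; exact Real.sq_sqrt hx.1.le
  · intro x hx; simpa using hasDerivAt_pow 2 x
  · intro x hx; rw [← h6 x hx, abs_of_pos (by linarith [hx.1])]

theorem Xb : IntegrableOn (fun t : ℝ => log (1 - t) ^ 2 / t) (Ioo 0 1) ∧
    ∫ t in Ioo (0:ℝ) 1, log (1 - t) ^ 2 / t = 2 * z3 := by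
  rw [← X1.2]
  refine cov (φ := fun x => 1 - x) (φ' := fun _ => -1) (ψ := fun x => 1 - x) ?_ ?_ ?_ ?_ ?_ ?_ X1.1
  · intro x hx; exact ⟨by linarith [hx.2], by linarith [hx.1]⟩
  · intro x hx; exact ⟨by linarith [hx.2], by linarith [hx.1]⟩
  · intro x hx; ring
  · intro x hx; ring
  · intro x hx; simpa using (hasDerivAt_id x).const_sub 1
  · intro x hx; simp

theorem Xab : IntegrableOn (fun t : ℝ => 2 * (log (1 - t ^ 2) ^ 2 / t)) (Ioo 0 1) ∧
    ∫ t in Ioo (0:ℝ) 1, 2 * (log (1 - t ^ 2) ^ 2 / t) = 2 * z3 := by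
  rw [← Xb.2]
  refine cov_sq (fun x hx => ?_) Xb.1
  have := hx.1; field_simp

theorem Xq : IntegrableOn (fun t : ℝ => 4 * (2 * t * log t ^ 2 / (1 - t ^ 2))) (Ioo 0 1) ∧
    ∫ t in Ioo (0:ℝ) 1, 4 * (2 * t * log t ^ 2 / (1 - t ^ 2)) = 2 * z3 := by
  rw [← X1.2]
  refine cov_sq (fun x hx => ?_) X1.1
  rw [Real.log_pow]; push_cast; ring

theorem X2 : IntegrableOn (fun t : ℝ => log t ^ 2 / (1 + t)) (Ioo 0 1) ∧
    ∫ t in Ioo (0:ℝ) 1, log t ^ 2 / (1 + t) = 3 / 2 * z3 := by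
  have hc : EqOn (fun t : ℝ => log t ^ 2 / (1 - t) - 1 / 4 * (4 * (2 * t * log t ^ 2 / (1 - t ^ 2))))
      (fun t : ℝ => log t ^ 2 / (1 + t)) (Ioo 0 1) := by
    intro t ht
    have h1 : 1 - t ≠ 0 := by linarith [ht.2]
    have h2 : 1 + t ≠ 0 := by linarith [ht.1]
    have h3 : 1 - t ^ 2 = (1 - t) * (1 + t) := by ring
    simp only [h3]; field_simp; ring
  constructor
  · exact IntegrableOn.congr_fun (Integrable.sub X1.1 (Xq.1.const_mul (1 / 4))) hc measurableSet_Ioo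
  · rw [← setIntegral_congr_fun measurableSet_Ioo hc, integral_sub X1.1 (Xq.1.const_mul (1 / 4)),
      X1.2, MeasureTheory.integral_const_mul, Xq.2]; ring

theorem Xamb : IntegrableOn (fun t : ℝ => log ((1 - t) / (1 + t)) ^ 2 / t) (Ioo 0 1) ∧
    ∫ t in Ioo (0:ℝ) 1, log ((1 - t) / (1 + t)) ^ 2 / t = 7 / 2 * z3 := by
  have e : (7 / 2 * z3) = ∫ t in Ioo (0:ℝ) 1, (log t ^ 2 / (1 - t) + log t ^ 2 / (1 + t)) := by
    rw [integral_add X1.1 X2.1, X1.2, X2.2]; ring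
  rw [e]
  have hm : MapsTo (fun x : ℝ => (1 - x) / (1 + x)) (Ioo 0 1) (Ioo 0 1) := by
    intro x hx
    have := hx.1; have := hx.2
    refine ⟨div_pos (by linarith) (by linarith), ?_⟩
    simp only; rw [div_lt_one (by linarith)]; linarith
  have hii : ∀ x ∈ Ioo (0:ℝ) 1, (1 - (1 - x) / (1 + x)) / (1 + (1 - x) / (1 + x)) = x := by
    intro x hx
    have : 1 + x ≠ 0 := by linarith [hx.1]
    field_simp; ring
  refine cov (φ := fun x => (1 - x) / (1 + x)) (φ' := fun x => -2 / (1 + x) ^ 2)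
    (ψ := fun x => (1 - x) / (1 + x)) hm hm hii hii ?_ ?_ (Integrable.add X1.1 X2.1)
  · intro x hx
    have : 1 + x ≠ 0 := by linarith [hx.1]
    refine (((hasDerivAt_id x).const_sub 1).div ((hasDerivAt_id x).const_add 1) this).congr_deriv ?_
    simp; field_simp; ring
  · intro x hx
    have : 1 + x ≠ 0 := by linarith [hx.1]
    have : x ≠ 0 := hx.1.ne'
    rw [abs_of_neg (by apply div_neg_of_neg_of_pos; norm_num; positivity)]
    have e1 : 1 - (1 - x) / (1 + x) = 2 * x / (1 + x) := by field_simp; ring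
    have e2 : 1 + (1 - x) / (1 + x) = 2 / (1 + x) := by field_simp; ring
    simp only [e1, e2]
    generalize log ((1 - x) / (1 + x)) = l
    field_simp

theorem Xa : IntegrableOn (fun t : ℝ => log (1 + t) ^ 2 / t) (Ioo 0 1) ∧
    ∫ t in Ioo (0:ℝ) 1, log (1 + t) ^ 2 / t = 1 / 4 * z3 := by
  have hc : EqOn (fun t : ℝ => 1 / 4 * (2 * (log (1 - t ^ 2) ^ 2 / t)) +
      1 / 2 * (log ((1 - t) / (1 + t)) ^ 2 / t) - log (1 - t) ^ 2 / t)
      (fun t : ℝ => log (1 + t) ^ 2 / t) (Ioo 0 1) := by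
    intro t ht
    have h1 : 1 - t ≠ 0 := by linarith [ht.2]
    have h2 : 1 + t ≠ 0 := by linarith [ht.1]
    have h3 : 1 - t ^ 2 = (1 - t) * (1 + t) := by ring
    simp only [h3, Real.log_mul h1 h2, Real.log_div h1 h2]; ring
  have i1 := Xab.1.const_mul (1 / 4)
  have i2 := Xamb.1.const_mul (1 / 2)
  have i12 : Integrable (fun t : ℝ => 1 / 4 * (2 * (log (1 - t ^ 2) ^ 2 / t)) +
      1 / 2 * (log ((1 - t) / (1 + t)) ^ 2 / t)) (volume.restrict (Ioo 0 1)) := i1.add i2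
  constructor
  · exact IntegrableOn.congr_fun (Integrable.sub i12 Xb.1) hc measurableSet_Ioo
  · rw [← setIntegral_congr_fun measurableSet_Ioo hc, integral_sub i12 Xb.1,
      integral_add i1 i2, MeasureTheory.integral_const_mul (1 / 4), MeasureTheory.integral_const_mul (1 / 2), Xab.2, Xamb.2, Xb.2]; ring

theorem Xfin : IntegrableOn (fun k : ℝ => 6 * log (1 + k ^ 2) ^ 2 / k +
      8 * k * log k ^ 2 / (1 + k ^ 2)) (Ioo 0 1) ∧
    ∫ k in Ioo (0:ℝ) 1, (6 * log (1 + k ^ 2) ^ 2 / k + 8 * k * log k ^ 2 / (1 + k ^ 2)) =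
      9 / 4 * z3 := by
  have i1 := Xa.1.const_mul 3
  have e : 9 / 4 * z3 = ∫ t in Ioo (0:ℝ) 1, (3 * (log (1 + t) ^ 2 / t) + log t ^ 2 / (1 + t)) := by
    rw [integral_add i1 X2.1, MeasureTheory.integral_const_mul, Xa.2, X2.2]; ring
  rw [e]
  refine cov_sq (fun x hx => ?_) (Integrable.add i1 X2.1)
  have := hx.1
  simp only [Real.log_pow]; push_cast
  generalize log (1 + x ^ 2) = l
  field_simp; ring

theorem ylog : Tendsto (fun k => YY k * log k) (𝓝[>] 0) (𝓝 0) := by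
  have h := param_deriv (F := fun k x => yy k x ^ 2) (F' := fun k x => 2 * yy k x * sr k x)
    (fun k x => ((yy_dk k x).pow 2).congr_deriv (by simp))
    (fun k => by fun_prop) (by unfold Function.uncurry; fun_prop) 0 (π / 2) 0
  have h2 := hasDerivAt_iff_tendsto_slope.1 h
  have h3 : Tendsto (fun k : ℝ => log k * k) (𝓝[>] 0) (𝓝 0) := by
    simpa using tendsto_log_mul_rpow_nhdsGT_zero one_pos
  have h4 := (h2.mono_left (nhdsWithin_mono 0 (fun x (hx : 0 < x) => hx.ne'))).mul h3
  rw [mul_zero] at h4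
  refine h4.congr' ?_
  filter_upwards [self_mem_nhdsWithin] with k hk
  have hk : k ≠ 0 := (show 0 < k from hk).ne'
  simp only [slope, yy_k0, vsub_eq_sub, smul_eq_mul, YY]
  simp
  field_simp

theorem elllog : Tendsto (fun k => ell k * log k ^ 2) (𝓝[>] 0) (𝓝 0) := by
  have h2 := hasDerivAt_iff_tendsto_slope.1 (ell_deriv 0)
  have h3 : Tendsto (fun k : ℝ => k * log k ^ 2) (𝓝[>] 0) (𝓝 0) := by
    have := (tlog2_cont 0 (by simp : (0:ℝ) ∈ Ici 0)).mono Ioi_subset_Ici_self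
    simpa [ContinuousWithinAt] using this
  have h4 := (h2.mono_left (nhdsWithin_mono 0 (fun x (hx : 0 < x) => hx.ne'))).mul h3
  rw [mul_zero] at h4
  refine h4.congr' ?_
  filter_upwards [self_mem_nhdsWithin] with k hk
  have hk : k ≠ 0 := (show 0 < k from hk).ne'
  simp only [slope, vsub_eq_sub, smul_eq_mul, ell]
  simp
  field_simp

theorem al_one : al 1 = 9 / 4 * z3 := by
  have hell : Continuous ell := continuous_iff_continuousAt.2 fun k => (ell_deriv k).continuousAt
  set be : ℝ → ℝ := fun k => al k - 16 / π * (YY k * log k) + 4 * (ell k * log k ^ 2) with hbe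
  have hd : ∀ k ∈ Ioo (0:ℝ) 1, HasDerivAt be (6 * log (1 + k ^ 2) ^ 2 / k +
      8 * k * log k ^ 2 / (1 + k ^ 2)) k := by
    intro k hk
    have hk0 := hk.1
    have hl := Real.hasDerivAt_log hk0.ne'
    refine (((al_deriv k hk0).sub (((YY_deriv k hk0).mul hl).const_mul (16 / π))).add
      (((ell_deriv k).mul (hl.pow 2)).const_mul 4)).congr_deriv ?_
    rw [D_eq, ← ell]
    have : (1 + k ^ 2) ≠ 0 := by positivity
    simp
    field_simp
    ring
  have ha : Tendsto be (𝓝[>] 0) (𝓝 0) := by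
    have h1 : Tendsto al (𝓝[>] 0) (𝓝 0) := by
      have := (al_cont.tendsto 0).mono_left (nhdsWithin_le_nhds (s := Ioi 0))
      rwa [al_zero] at this
    simpa using (h1.sub (ylog.const_mul (16 / π))).add (elllog.const_mul 4)
  have hb : Tendsto be (𝓝[<] 1) (𝓝 (al 1)) := by
    have : ContinuousAt be 1 := by
      have hl : ContinuousAt log 1 := Real.continuousAt_log one_ne_zero
      exact (al_cont.continuousAt.sub (continuousAt_const.mul (YY_cont.continuousAt.mul hl))).add
        (continuousAt_const.mul (hell.continuousAt.mul (hl.pow 2)))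
    have e : be 1 = al 1 := by simp [hbe]
    rw [← e]
    exact this.tendsto.mono_left nhdsWithin_le_nhds
  have hi : IntervalIntegrable (fun k : ℝ => 6 * log (1 + k ^ 2) ^ 2 / k +
      8 * k * log k ^ 2 / (1 + k ^ 2)) volume 0 1 := by
    rw [intervalIntegrable_iff_integrableOn_Ioo_of_le zero_le_one]; exact Xfin.1
  have := integral_eq_sub_of_hasDerivAt_of_tendsto zero_lt_one hd hi ha hb
  rw [intervalIntegral.integral_of_le zero_le_one, integral_Ioc_eq_integral_Ioo, Xfin.2] at this
  linarith

def st (G h : ℝ → ℝ) (x : ℝ) : ℝ := ∫ t in (0:ℝ)..x, G t * h t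

theorem st_dx {G h : ℝ → ℝ} (hG : Continuous G) (hh : Continuous h) (x : ℝ) :
    HasDerivAt (st G h) (G x * h x) x := by
  have hc : Continuous (fun t => G t * h t) := hG.mul hh
  exact integral_hasDerivAt_right (hc.intervalIntegrable _ _)
    (hc.stronglyMeasurableAtFilter _ _) hc.continuousAt

theorem st_cont {G h : ℝ → ℝ} (hG : Continuous G) (hh : Continuous h) : Continuous (st G h) :=
  continuous_iff_continuousAt.2 fun x => (st_dx hG hh x).continuousAt

@[simp] theorem st_x0 (G h : ℝ → ℝ) : st G h 0 = 0 := by simp [st]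

theorem st_eq {G h f : ℝ → ℝ} (hG : Continuous G) (hh : Continuous h)
    (hf : ∀ x, HasDerivAt f (G x * h x) x) (h0 : f 0 = 0) : st G h = f := by
  ext x
  rw [st, ftc0 hf (hG.mul hh), h0, sub_zero]

def la : ℝ → ℝ := fun x => sr 1 x
def lb : ℝ → ℝ := fun x => cr 1 x
def lc : ℝ → ℝ := fun _ => 1
def l1 : ℝ → ℝ := fun _ => 1
theorem la_cont : Continuous la := by unfold la; fun_prop
theorem lb_cont : Continuous lb := by unfold lb; fun_prop
theorem lc_cont : Continuous lc := by unfold lc; fun_prop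
theorem l1_cont : Continuous l1 := by unfold l1; fun_prop

theorem y1_dx (x : ℝ) : HasDerivAt (fun x => yy 1 x) (cr 1 x) x := by simpa using yy_dx 1 x
theorem v1_dx (x : ℝ) : HasDerivAt (fun x => vv 1 x) (-(sr 1 x)) x := by simpa using vv_dx 1 x

theorem st_b : st l1 lb = fun x => yy 1 x :=
  st_eq l1_cont lb_cont (fun x => (y1_dx x).congr_deriv (by simp [l1, lb])) (by simp)
theorem st_c : st l1 lc = fun x => x :=
  st_eq l1_cont lc_cont (fun x => (hasDerivAt_id x).congr_deriv (by simp [l1, lc])) (by simp)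
theorem st_bb : st (st l1 lb) lb = fun x => yy 1 x ^ 2 / 2 := by
  rw [st_b]
  exact st_eq (by fun_prop) lb_cont (fun x => (((y1_dx x).pow 2).div_const 2).congr_deriv
    (by simp [lb]; ring)) (by simp)
theorem st_bbb : st (st (st l1 lb) lb) lb = fun x => yy 1 x ^ 3 / 6 := by
  rw [st_bb]
  exact st_eq (by fun_prop) lb_cont (fun x => (((y1_dx x).pow 3).div_const 6).congr_deriv
    (by simp [lb]; ring)) (by simp)
theorem st_cc : st (st l1 lc) lc = fun x => x ^ 2 / 2 := by
  rw [st_c]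
  exact st_eq (by fun_prop) lc_cont (fun x => (((hasDerivAt_id x).pow 2).div_const 2).congr_deriv
    (by simp [lc])) (by simp)
theorem st_ca : st (st l1 lc) la = fun x => -x * vv 1 x + WW 1 x := by
  rw [st_c]
  exact st_eq (by fun_prop) la_cont (fun x => (((hasDerivAt_id x).neg.mul (v1_dx x)).add
    (WW_dx 1 x)).congr_deriv (by simp [la])) (by simp)

theorem i_c : st l1 lc (π / 2) = π / 2 := by rw [st_c]
theorem i_ba : st (st l1 lb) la (π / 2) = Rn 0 1 := by
  rw [← P0_eq_R0, st_b]; simp [st, Pn, la]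
theorem i_bbc : st (st (st l1 lb) lb) lc (π / 2) = YY 1 / 2 := by
  rw [st_bb]; simp [st, YY, lc]
theorem i_bbba : st (st (st (st l1 lb) lb) lb) la (π / 2) = Pn 2 1 / 6 := by
  rw [st_bbb, st, Pn, ← intervalIntegral.integral_div]
  congr 1; ext x; simp [la]; ring

theorem i_caa : st (st (st l1 lc) la) la (π / 2) = VV 1 / 2 := by
  have hc := st_cont (st_cont l1_cont lc_cont) la_cont
  have hd := st_dx (st_cont l1_cont lc_cont) la_cont
  have h0 := st_x0 (st l1 lc) la
  have hx : ∀ x, st l1 lc x = x := fun x => by rw [st_c]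
  simp only [hx] at hd
  set ca := st (st l1 lc) la
  rw [st, VV, ← intervalIntegral.integral_div]
  have := la_cont
  rw [int_eq (f := fun x => -ca x * vv 1 x - x * vv 1 x ^ 2 / 2)
    (f' := fun x => ca x * la x - vv 1 x ^ 2 / 2)
    (H := fun x => vv 1 x ^ 2 / 2) (by fun_prop) (by fun_prop)]
  · simp [h0]
  · intro x
    refine (((hd x).neg.mul (v1_dx x)).sub
      (((hasDerivAt_id x).mul ((v1_dx x).pow 2)).div_const 2)).congr_deriv ?_
    simp [la]; ring
  · intro x; rfl

theorem i_baaa : st (st (st (st l1 lb) la) la) la (π / 2) = Rn 2 1 / 6 := by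
  have hla := la_cont
  have c1 := st_cont l1_cont lb_cont
  have c2 := st_cont c1 la_cont
  have c3 := st_cont c2 la_cont
  have d2 := st_dx c1 la_cont
  have d3 := st_dx c2 la_cont
  have h2 := st_x0 (st l1 lb) la
  have h3 := st_x0 (st (st l1 lb) la) la
  have hx : ∀ x, st l1 lb x = yy 1 x := fun x => by rw [st_b]
  simp only [hx] at d2
  set baa := st (st (st l1 lb) la) la
  set ba := st (st l1 lb) la
  rw [st, Rn, ← intervalIntegral.integral_div]
  rw [int_eq (f := fun x => -baa x * vv 1 x - ba x * vv 1 x ^ 2 / 2 - yy 1 x * vv 1 x ^ 3 / 6)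
    (f' := fun x => baa x * la x - vv 1 x ^ (2 + 1) * (1 * cr 1 x) / 6)
    (H := fun x => vv 1 x ^ (2 + 1) * (1 * cr 1 x) / 6) (by fun_prop) (by fun_prop)]
  · simp [h2, h3]
  · intro x
    refine ((((d3 x).neg.mul (v1_dx x)).sub
      (((d2 x).mul ((v1_dx x).pow 2)).div_const 2)).sub
      (((y1_dx x).mul ((v1_dx x).pow 3)).div_const 6)).congr_deriv ?_
    simp [la]; ring
  · intro x; rfl

theorem i_comb : st (st (st (st l1 lb) la) lc) lc (π / 2) - st (st (st (st l1 lc) la) lb) lc (π / 2)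
    + st (st (st (st l1 lc) lc) lb) la (π / 2) = π ^ 2 / 8 * Rn 0 1 - QQ 1 := by
  have hla := la_cont
  have hlb := lb_cont
  have cb := st_cont l1_cont lb_cont
  have cba := st_cont cb la_cont
  have cbac := st_cont cba lc_cont
  have dba := st_dx cb la_cont
  have dbac := st_dx cba lc_cont
  have cc := st_cont l1_cont lc_cont
  have cca := st_cont cc la_cont
  have ccab := st_cont cca lb_cont
  have dcab := st_dx cca lb_cont
  have ccc := st_cont cc lc_cont
  have cccb := st_cont ccc lb_cont
  have dccb := st_dx ccc lb_cont
  have hb : ∀ x, st l1 lb x = yy 1 x := fun x => by rw [st_b]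
  have hca : ∀ x, st (st l1 lc) la x = -x * vv 1 x + WW 1 x := fun x => by rw [st_ca]
  have hcc : ∀ x, st (st l1 lc) lc x = x ^ 2 / 2 := fun x => by rw [st_cc]
  have z1 := st_x0 (st l1 lb) la
  have z2 := st_x0 (st (st l1 lb) la) lc
  have z3 := st_x0 (st (st l1 lc) la) lb
  have z4 := st_x0 (st (st l1 lc) lc) lb
  simp only [hb] at dba
  simp only [hca] at dcab
  simp only [hcc] at dccb
  set bac := st (st (st l1 lb) la) lc
  set ba := st (st l1 lb) la
  set cab := st (st (st l1 lc) la) lb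
  set ccb := st (st (st l1 lc) lc) lb
  have e1 : st bac lc (π / 2) - st cab lc (π / 2) + st ccb la (π / 2) =
      ∫ x in (0:ℝ)..(π / 2), (bac x - cab x + ccb x * la x) := by
    rw [intervalIntegral.integral_add, intervalIntegral.integral_sub]
    · simp [st, lc]
    all_goals exact Continuous.intervalIntegrable (by fun_prop) _ _
  have e2 : π ^ 2 / 8 * Rn 0 1 - QQ 1 =
      ∫ x in (0:ℝ)..(π / 2), (π ^ 2 / 8 * (vv 1 x * cr 1 x) - yy 1 x * WW 1 x) := by
    rw [intervalIntegral.integral_sub, intervalIntegral.integral_const_mul]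
    · simp [Rn, QQ]
    all_goals exact Continuous.intervalIntegrable (by fun_prop) _ _
  rw [e1, e2]
  rw [int_eq (f := fun x => -(π / 2 - x) * bac x - (π / 2 - x) ^ 2 / 2 * ba x
      - (π / 2 - x) ^ 2 / 2 * (yy 1 x * vv 1 x) + (π / 2 - x) * cab x
      - (π / 2 - x) * (WW 1 x * yy 1 x) - ccb x * vv 1 x)
    (f' := fun x => (bac x - cab x + ccb x * la x) -
      (π ^ 2 / 8 * (vv 1 x * cr 1 x) - yy 1 x * WW 1 x))
    (H := fun x => (π ^ 2 / 8 * (vv 1 x * cr 1 x) - yy 1 x * WW 1 x)) (by fun_prop) (by fun_prop)]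
  · simp [z1, z2, z3, z4]
  · intro x
    have hw : HasDerivAt (fun x : ℝ => π / 2 - x) (-1) x := by
      simpa using (hasDerivAt_id x).const_sub (π / 2)
    have hw2 := (hw.pow 2).div_const 2
    refine ((((((hw.neg.mul (dbac x)).sub (hw2.mul (dba x))).sub
      (hw2.mul ((y1_dx x).mul (v1_dx x)))).add (hw.mul (dcab x))).sub
      (hw.mul ((WW_dx 1 x).mul (y1_dx x)))).sub ((dccb x).mul (v1_dx x))).congr_deriv ?_
    simp [la, lb, lc]; ring
  · intro x; rfl

def XX (z : ℝ) : ℝ := arctan (√2 * z + 1) + arctan (√2 * z - 1)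
def XX' (z : ℝ) : ℝ := √2 * (1 + z ^ 2) / (1 + z ^ 4)

theorem XX_zero : XX 0 = 0 := by
  simp [XX, Real.arctan_neg]

theorem XX_one : XX 1 = π / 2 := by
  have h2 : √2 ^ 2 = 2 := Real.sq_sqrt (by norm_num)
  have hp : 0 < √2 + 1 := by positivity
  have : √2 * 1 - 1 = (√2 + 1)⁻¹ := by
    field_simp; linear_combination h2
  rw [XX, this, mul_one, Real.arctan_inv_of_pos hp]; ring

theorem XX'_cont : Continuous XX' := by
  unfold XX'; exact Continuous.div (by fun_prop) (by fun_prop) fun z => by positivity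

theorem XX_deriv (z : ℝ) : HasDerivAt XX (XX' z) z := by
  have h2 : √2 ^ 2 = 2 := Real.sq_sqrt (by norm_num)
  have h : HasDerivAt (fun z : ℝ => √2 * z) (√2) z := by
    simpa using (hasDerivAt_id z).const_mul (√2)
  refine ((h.add_const 1).arctan.add (h.sub_const 1).arctan).congr_deriv ?_
  have a1 : 1 + (√2 * z + 1) ^ 2 ≠ 0 := by positivity
  have a2 : 1 + (√2 * z - 1) ^ 2 ≠ 0 := by positivity
  have a3 : 1 + z ^ 4 ≠ 0 := by positivity
  have e : (1 + (√2 * z + 1) ^ 2) * (1 + (√2 * z - 1) ^ 2) = 4 * (1 + z ^ 4) := by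
    linear_combination (√2 ^ 2 + 2) * z ^ 4 * h2
  unfold XX'
  have e2 : 1 / (1 + (√2 * z + 1) ^ 2) * √2 + 1 / (1 + (√2 * z - 1) ^ 2) * √2 =
      √2 * (4 * (1 + z ^ 2)) / ((1 + (√2 * z + 1) ^ 2) * (1 + (√2 * z - 1) ^ 2)) := by
    field_simp
    linear_combination 2 * z ^ 2 * h2
  rw [e2, e]; field_simp

theorem XX_trig (z : ℝ) : sr 1 (XX z) = √2 * z / (1 + z ^ 2) ∧
    cr 1 (XX z) = (1 - z ^ 2) / (1 + z ^ 2) := by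
  have h2 : √2 ^ 2 = 2 := Real.sq_sqrt (by norm_num)
  set S1 := √(1 + (√2 * z + 1) ^ 2) with hS1
  set S2 := √(1 + (√2 * z - 1) ^ 2) with hS2
  have p1 : 0 < S1 := Real.sqrt_pos.2 (by positivity)
  have p2 : 0 < S2 := Real.sqrt_pos.2 (by positivity)
  have q1 : S1 ^ 2 = 1 + (√2 * z + 1) ^ 2 := Real.sq_sqrt (by positivity)
  have q2 : S2 ^ 2 = 1 + (√2 * z - 1) ^ 2 := Real.sq_sqrt (by positivity)
  have e : (S1 * S2) ^ 2 = 4 * (1 + z ^ 4) := by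
    rw [mul_pow, q1, q2]
    linear_combination (√2 ^ 2 + 2) * z ^ 4 * h2
  have hs : sin (XX z) = 2 * √2 * z / (S1 * S2) := by
    rw [XX, sin_add, Real.sin_arctan, Real.sin_arctan, Real.cos_arctan, Real.cos_arctan,
      ← hS1, ← hS2]
    field_simp; ring
  have hc : cos (XX z) = 2 * (1 - z ^ 2) / (S1 * S2) := by
    rw [XX, cos_add, Real.sin_arctan, Real.sin_arctan, Real.cos_arctan, Real.cos_arctan,
      ← hS1, ← hS2]
    field_simp; linear_combination -z ^ 2 * h2
  have hS : 0 < S1 * S2 := mul_pos p1 p2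
  have hr : rr 1 (XX z) = 2 * (1 + z ^ 2) / (S1 * S2) := by
    rw [rr, hs, Real.sqrt_eq_iff_mul_self_eq (by positivity) (by positivity)]
    field_simp
    rw [← mul_pow, e] 
    linear_combination 4 * z ^ 2 * h2
  have : 1 + z ^ 2 ≠ 0 := by positivity
  constructor
  · rw [sr, hs, hr]; field_simp
  · rw [cr, hc, hr]; field_simp

theorem p1_eq : p₁ = ((√2 : ℝ) : ℂ) / 2 * (1 + Complex.I) := by
  have hc : Complex.cos ((π:ℂ) / 4) = ((√2 : ℝ) : ℂ) / 2 := by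
    have := congrArg Complex.ofReal Real.cos_pi_div_four
    push_cast at this ⊢; exact this
  have hs : Complex.sin ((π:ℂ) / 4) = ((√2 : ℝ) : ℂ) / 2 := by
    have := congrArg Complex.ofReal Real.sin_pi_div_four
    push_cast at this ⊢; exact this
  rw [p₁, mul_comm Complex.I, Complex.exp_mul_I, hc, hs]; ring

theorem p2_eq : p₂ = -(((√2 : ℝ) : ℂ) / 2 * (1 - Complex.I)) := by
  have hc : Complex.cos ((π:ℂ) / 4) = ((√2 : ℝ) : ℂ) / 2 := by
    have := congrArg Complex.ofReal Real.cos_pi_div_four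
    push_cast at this ⊢; exact this
  have hs : Complex.sin ((π:ℂ) / 4) = ((√2 : ℝ) : ℂ) / 2 := by
    have := congrArg Complex.ofReal Real.sin_pi_div_four
    push_cast at this ⊢; exact this
  rw [p₂, mul_comm Complex.I, ← neg_mul, Complex.exp_mul_I, Complex.cos_neg, Complex.sin_neg,
    hc, hs]; ring

theorem s2c : (((√2 : ℝ) : ℂ)) ^ 2 = 2 := by
  rw [← Complex.ofReal_pow, Real.sq_sqrt (by norm_num)]; norm_num

theorem p1_sq : p₁ ^ 2 = Complex.I := by
  rw [p1_eq]
  linear_combination (1 + Complex.I) ^ 2 / 4 * s2c + 1 / 2 * Complex.I_sq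

theorem p2_sq : p₂ ^ 2 = -Complex.I := by
  rw [p2_eq]
  linear_combination (1 - Complex.I) ^ 2 / 4 * s2c + 1 / 2 * Complex.I_sq

theorem F_aux (t : ℝ) :
    (t:ℂ) ^ 2 - Complex.I ≠ 0 ∧ (t:ℂ) ^ 2 + Complex.I ≠ 0 ∧ (1 + (t:ℂ) ^ 4) ≠ 0 ∧
    1 / ((t:ℂ) - p₁) + 1 / ((t:ℂ) - p₃) = 2 * t / ((t:ℂ) ^ 2 - Complex.I) ∧
    1 / ((t:ℂ) - p₁) - 1 / ((t:ℂ) - p₃) = 2 * p₁ / ((t:ℂ) ^ 2 - Complex.I) ∧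
    1 / ((t:ℂ) - p₂) + 1 / ((t:ℂ) - p₄) = 2 * t / ((t:ℂ) ^ 2 + Complex.I) ∧
    1 / ((t:ℂ) - p₂) - 1 / ((t:ℂ) - p₄) = 2 * p₂ / ((t:ℂ) ^ 2 + Complex.I) := by
  have h4 : (1 + (t:ℂ) ^ 4) ≠ 0 := by
    have : (1 + t ^ 4) ≠ 0 := by positivity
    exact_mod_cast this
  have hm : ((t:ℂ) ^ 2 - Complex.I) * ((t:ℂ) ^ 2 + Complex.I) = 1 + (t:ℂ) ^ 4 := by
    linear_combination -Complex.I_sq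
  have ha : (t:ℂ) ^ 2 - Complex.I ≠ 0 := fun h => h4 (by rw [← hm, h, zero_mul])
  have hb : (t:ℂ) ^ 2 + Complex.I ≠ 0 := fun h => h4 (by rw [← hm, h, mul_zero])
  have e1 : ((t:ℂ) - p₁) * ((t:ℂ) - p₃) = (t:ℂ) ^ 2 - Complex.I := by
    rw [p₃]; linear_combination -p1_sq
  have e2 : ((t:ℂ) - p₂) * ((t:ℂ) - p₄) = (t:ℂ) ^ 2 + Complex.I := by
    rw [p₄]; linear_combination -p2_sq
  have n1 : (t:ℂ) - p₁ ≠ 0 := fun h => ha (by rw [← e1, h, zero_mul])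
  have n3 : (t:ℂ) - p₃ ≠ 0 := fun h => ha (by rw [← e1, h, mul_zero])
  have n2 : (t:ℂ) - p₂ ≠ 0 := fun h => hb (by rw [← e2, h, zero_mul])
  have n4 : (t:ℂ) - p₄ ≠ 0 := fun h => hb (by rw [← e2, h, mul_zero])
  refine ⟨ha, hb, h4, ?_, ?_, ?_, ?_⟩
  · rw [← e1, div_add_div _ _ n1 n3, p₃]; congr 1; ring
  · rw [← e1, div_sub_div _ _ n1 n3, p₃]; congr 1; ring
  · rw [← e2, div_add_div _ _ n2 n4, p₄]; congr 1; ring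
  · rw [← e2, div_sub_div _ _ n2 n4, p₄]; congr 1; ring

theorem hm' (t : ℝ) : 1 + (t:ℂ) ^ 4 = ((t:ℂ) ^ 2 - Complex.I) * ((t:ℂ) ^ 2 + Complex.I) := by
  linear_combination Complex.I_sq

theorem G1 (t : ℝ) : F₁ t = 4 * Complex.I * t / (1 + (t:ℂ) ^ 4) := by
  obtain ⟨a, b, c, e1, e2, e3, e4⟩ := F_aux t
  have : F₁ t = 2 * t / ((t:ℂ) ^ 2 - Complex.I) - 2 * t / ((t:ℂ) ^ 2 + Complex.I) := by
    rw [← e1, ← e3, F₁]; ring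
  rw [this, hm', div_sub_div _ _ a b]; congr 1; ring

theorem G2 (t : ℝ) : F₂ t = -2 * (√2 : ℝ) * (1 - (t:ℂ) ^ 2) / (1 + (t:ℂ) ^ 4) := by
  obtain ⟨a, b, c, e1, e2, e3, e4⟩ := F_aux t
  have : F₂ t = 2 * p₁ / ((t:ℂ) ^ 2 - Complex.I) - 2 * p₂ / ((t:ℂ) ^ 2 + Complex.I) := by
    rw [← e2, ← e4, F₂]; ring
  rw [this, hm', div_sub_div _ _ a b, p1_eq, p2_eq]; congr 1
  linear_combination 2 * ((√2 : ℝ) : ℂ) * Complex.I_sq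

theorem G3 (t : ℝ) : F₃ t = 2 * Complex.I * (√2 : ℝ) * (1 + (t:ℂ) ^ 2) / (1 + (t:ℂ) ^ 4) := by
  obtain ⟨a, b, c, e1, e2, e3, e4⟩ := F_aux t
  have : F₃ t = 2 * p₁ / ((t:ℂ) ^ 2 - Complex.I) + 2 * p₂ / ((t:ℂ) ^ 2 + Complex.I) := by
    rw [← e2, ← e4, F₃]; ring
  rw [this, hm', div_add_div _ _ a b, p1_eq, p2_eq]; congr 1
  ring

def OLet (F : ℂ → ℂ) (d : ℂ) (h : ℝ → ℝ) : Prop :=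
  Continuous h ∧ ∀ t : ℝ, F t = d * ((h (XX t) * XX' t : ℝ) : ℂ)

def ORel (g : ℝ → ℂ) (c : ℂ) (G : ℝ → ℝ) : Prop :=
  Continuous G ∧ ∀ t : ℝ, g t = c * ((G (XX t) : ℝ) : ℂ)

theorem L1 : OLet F₁ (2 * Complex.I) la := by
  refine ⟨la_cont, fun t => ?_⟩
  have h : la (XX t) * XX' t = 2 * t / (1 + t ^ 4) := by
    have h2 : √2 ^ 2 = 2 := Real.sq_sqrt (by norm_num)
    have : 1 + t ^ 2 ≠ 0 := by positivity
    have : 1 + t ^ 4 ≠ 0 := by positivity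
    rw [la, (XX_trig t).1, XX']; field_simp; linear_combination t * h2
  rw [h, G1]; push_cast; ring

theorem L2 : OLet F₂ (-2) lb := by
  refine ⟨lb_cont, fun t => ?_⟩
  have h : lb (XX t) * XX' t = √2 * (1 - t ^ 2) / (1 + t ^ 4) := by
    have : 1 + t ^ 2 ≠ 0 := by positivity
    rw [lb, (XX_trig t).2, XX']; field_simp
  rw [h, G2]; push_cast; ring

theorem L3 : OLet F₃ (2 * Complex.I) lc := by
  refine ⟨lc_cont, fun t => ?_⟩
  rw [G3, lc, XX']; push_cast; ring

theorem R0 : ORel (fun _ => 1) 1 l1 := ⟨l1_cont, fun t => by simp [l1]⟩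

theorem ORel.step {g : ℝ → ℂ} {c : ℂ} {G : ℝ → ℝ} (r : ORel g c G) {F : ℂ → ℂ} {d : ℂ} {h : ℝ → ℝ}
    (l : OLet F d h) : ORel (fun z => ∫ t in (0:ℝ)..z, g t * F (t : ℂ)) (c * d) (st G h) := by
  refine ⟨st_cont r.1 l.1, fun z => ?_⟩
  have e : (fun t : ℝ => g t * F (t : ℂ)) =
      fun t : ℝ => (c * d) * (((G (XX t) * h (XX t)) * XX' t : ℝ) : ℂ) := by
    ext t; rw [r.2, l.2]; push_cast; ring
  have s := integral_comp_mul_deriv (a := 0) (b := z) (f := XX) (f' := XX')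
    (g := fun x => G x * h x) (fun x _ => XX_deriv x) XX'_cont.continuousOn (r.1.mul l.1)
  rw [XX_zero] at s
  simp only [e]
  rw [intervalIntegral.integral_const_mul, intervalIntegral.integral_ofReal, st, ← s]
  rfl

theorem ORel.one {g : ℝ → ℂ} {c : ℂ} {G : ℝ → ℝ} (r : ORel g c G) :
    g 1 = c * ((G (π / 2) : ℝ) : ℂ) := by rw [r.2, XX_one]

theorem main_eq :
    -(Complex.I / (Real.pi : ℂ) ^ 3) * (Omega [F₂, F₁] 1) ^ 3 -
        (1 / (16 * (Real.pi : ℂ) ^ 2)) * Omega [F₂, F₁] 1 *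
          (-8 * Omega [F₂, F₂, F₃] 1 + 48 * Omega [F₃, F₁, F₁] 1 +
            4 * (Omega [F₃] 1) ^ 3) +
        Complex.I / (2 * (Real.pi : ℂ)) *
          (6 * Omega [F₂, F₁, F₁, F₁] 1 + Omega [F₂, F₁, F₃, F₃] 1 +
            Omega [F₂, F₂, F₂, F₁] 1 - Omega [F₃, F₁, F₂, F₃] 1 +
            Omega [F₃, F₃, F₂, F₁] 1) =
      (9 / 4 : ℂ) * riemannZeta 3 := by
  have o21 : Omega [F₂, F₁] 1 = _ := ((R0.step L2).step L1).one
  have o3 : Omega [F₃] 1 = _ := (R0.step L3).one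
  have o223 : Omega [F₂, F₂, F₃] 1 = _ := (((R0.step L2).step L2).step L3).one
  have o311 : Omega [F₃, F₁, F₁] 1 = _ := (((R0.step L3).step L1).step L1).one
  have o2111 : Omega [F₂, F₁, F₁, F₁] 1 = _ := ((((R0.step L2).step L1).step L1).step L1).one
  have o2133 : Omega [F₂, F₁, F₃, F₃] 1 = _ := ((((R0.step L2).step L1).step L3).step L3).one
  have o2221 : Omega [F₂, F₂, F₂, F₁] 1 = _ := ((((R0.step L2).step L2).step L2).step L1).one
  have o3123 : Omega [F₃, F₁, F₂, F₃] 1 = _ := ((((R0.step L3).step L1).step L2).step L3).one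
  have o3321 : Omega [F₃, F₃, F₂, F₁] 1 = _ := ((((R0.step L3).step L3).step L2).step L1).one
  have hcomb := congrArg Complex.ofReal i_comb
  have hal := congrArg Complex.ofReal al_one
  have hD := D_eq 1
  rw [i_ba] at o21
  rw [i_c] at o3
  rw [i_bbc] at o223
  rw [i_caa] at o311
  rw [i_baaa] at o2111
  rw [i_bbba] at o2221
  rw [o21, o3, o223, o311, o2111, o2133, o2221, o3123, o3321, z3_zeta]
  generalize st (st (st (st l1 lb) la) lc) lc (π / 2) = A at *
  generalize st (st (st (st l1 lc) la) lb) lc (π / 2) = B at *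
  generalize st (st (st (st l1 lc) lc) lb) la (π / 2) = C at *
  have hl : ell 1 = 4 / π * Rn 0 1 := by
    rw [hD, ell]; field_simp
  rw [al, hl] at hal
  generalize Rn 0 1 = D at *
  push_cast at hal hcomb ⊢
  have hp : (π : ℂ) ≠ 0 := by exact_mod_cast Real.pi_ne_zero
  have hA : (A:ℂ) = π ^ 2 / 8 * D - QQ 1 + B - C := by linear_combination hcomb
  rw [← hal, hA]
  have i2 := Complex.I_sq
  have i3 : Complex.I ^ 3 = -Complex.I := by linear_combination Complex.I * i2
  have i4 : Complex.I ^ 4 = 1 := by linear_combination (Complex.I ^ 2 - 1) * i2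
  have i6 : Complex.I ^ 6 = -1 := by linear_combination (Complex.I ^ 4 - Complex.I ^ 2 + 1) * i2
  field_simp
  ring_nf
  try simp only [i2, i3, i4, i6]
  try ring_nf

end Aux19

/- STATEMENT 19: the third order coefficient of the area expansion of the Lawson
surfaces,
`α₃ = -(i/π³) Ω_{2,1}³ - (1/(16π²)) Ω_{2,1} (-8 Ω_{2,2,3} + 48 Ω_{3,1,1} + 4 Ω₃³)
      + (i/(2π)) (6 Ω_{2,1,1,1} + Ω_{2,1,3,3} + Ω_{2,2,2,1} - Ω_{3,1,2,3} + Ω_{3,3,2,1})`,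
equals `(9/4) ζ(3)`. -/
theorem stmt_19 :
    -(Complex.I / (Real.pi : ℂ) ^ 3) * (Omega [F₂, F₁] 1) ^ 3 -
        (1 / (16 * (Real.pi : ℂ) ^ 2)) * Omega [F₂, F₁] 1 *
          (-8 * Omega [F₂, F₂, F₃] 1 + 48 * Omega [F₃, F₁, F₁] 1 +
            4 * (Omega [F₃] 1) ^ 3) +
        Complex.I / (2 * (Real.pi : ℂ)) *
          (6 * Omega [F₂, F₁, F₁, F₁] 1 + Omega [F₂, F₁, F₃, F₃] 1 +
            Omega [F₂, F₂, F₂, F₁] 1 - Omega [F₃, F₁, F₂, F₃] 1 +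
            Omega [F₃, F₃, F₂, F₁] 1) =
      (9 / 4 : ℂ) * riemannZeta 3 := by
  exact Aux19.main_eq
end
end
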